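/- arXiv:1312.0101 — 2 statements merged into one kernel-verified Lean document; each statement's English description precedes it below -/
import Mathlib

section
/- Suppose n = 2 and let Ω, ω, u, λ, ū be as in the context; let s₀ be the smallest zero of ū in (0,1). If (x,y) ∈ Ω and u(x,y) = 0, then |x − s₀| ≤ Cε² for a constant C not depending on ε or on the shape of Ω. In particular, the projection of the nodal set Λ = {(x,y) ∈ Ω : u(x,y) = 0} onto the x-axis has diameter at most Cε². -/
open MeasureTheory Set Filter Topology RealInnerProductSpace

noncomputable section

/-- The point `(x, y) ∈ ℝ² ≅ ℝ^2`. -/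
def mk2 (x y : ℝ) : EuclideanSpace ℝ (Fin 2) :=
  (EuclideanSpace.equiv (Fin 2) ℝ).symm ![x, y]

/-- The cross-section `Ω(s) = {y : (s, y) ∈ Ω} ⊆ ℝ`. -/
def cross2 (Ω : Set (EuclideanSpace ℝ (Fin 2))) (s : ℝ) : Set ℝ := {y | mk2 s y ∈ Ω}

/-- `ω(s)`: the 1-dimensional Lebesgue measure of the cross-section. -/
def ωvol2 (Ω : Set (EuclideanSpace ℝ (Fin 2))) (s : ℝ) : ℝ := (volume (cross2 Ω s)).toReal

/-- The Laplacian, as the sum of the pure second derivatives along the standard basis. -/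
def lap {k : ℕ} (u : EuclideanSpace ℝ (Fin k) → ℝ) (p : EuclideanSpace ℝ (Fin k)) : ℝ :=
  ∑ i, fderiv ℝ (fun q => fderiv ℝ u q (EuclideanSpace.single i 1)) p (EuclideanSpace.single i 1)

/-- The cross-sectional average `ū(x)` of `u`. -/
def ubar2 (Ω : Set (EuclideanSpace ℝ (Fin 2))) (u : EuclideanSpace ℝ (Fin 2) → ℝ) (x : ℝ) : ℝ :=
  (∫ y in cross2 Ω x, u (mk2 x y)) / ωvol2 Ω x

/-!
Since `u` satisfies the Neumann condition, its flux through a cross-section `{x} × Ω(x)` equals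
`-μ` times the integral of `u` to the left of `x`. If that integral became small in the middle,
then at the first `x` where this happens `ū(x)` would be substantially negative, and `u - ū(x)`, cut
off just beyond `x`, would be a test function violating the minimality of `μ`. Hence `ū` decreases
at a definite rate away from the ends of `(0, 1)`.

The normal to `∂Ω` is nearly vertical away from the ends, so `∂_y u = O(ε)` on the boundary there,
and the maximum principle, with a barrier built from `cos`, extends this bound to all of `Ω`. Hence
`u - ū = O(ε²)`, and a zero of `u` lies within `O(ε²)` of the zero of `ū`.
-/

/-! ### Functions of one real variable -/

section OneVariable

theorem deriv_deriv_nonpos_of_isLocalMax {f : ℝ → ℝ} {x : ℝ} (hf : ContinuousAt f x)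
    (hmax : IsLocalMax f x) : deriv (deriv f) x ≤ 0 := by
  by_contra! hpos
  have hmin := isLocalMin_of_deriv_deriv_pos hpos hmax.deriv_eq_zero hf
  have hconst : f =ᶠ[𝓝 x] fun _ => f x := by
    filter_upwards [hmin, hmax] with y hy hy' using le_antisymm hy' hy
  rw [hconst.deriv.deriv_eq] at hpos
  simp at hpos

theorem eq_zero_of_forall_two_mul_add_sq_mul_nonneg {b c : ℝ}
    (h : ∀ t : ℝ, 0 ≤ 2 * t * b + t ^ 2 * c) : b = 0 := by
  have hdiscr := discrim_le_zero (a := c) (b := 2 * b) (c := 0) fun t => by linarith [h t]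
  rw [discrim] at hdiscr
  nlinarith [sq_nonneg b]

theorem half_min_mul_le_of_concaveOn {f : ℝ → ℝ} (hf : ConcaveOn ℝ (Ioo 0 1) f)
    (hnonneg : ∀ x ∈ Ioo (0 : ℝ) 1, 0 ≤ f x) {x z : ℝ} (hx : x ∈ Ioo (0 : ℝ) 1)
    (hz : z ∈ Ioo (0 : ℝ) 1) : min x (1 - x) / 2 * f z ≤ f x := by
  have hfz := hnonneg z hz
  have hfx := hnonneg x hx
  rcases lt_trichotomy x z with hxz | rfl | hxz
  · have hmem : x / 2 ∈ Ioo (0 : ℝ) 1 := ⟨by linarith [hx.1], by linarith [hx.2]⟩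
    have hsecant := hf.neg.secant_mono_aux1 hmem hz (by linarith [hx.1] : x / 2 < x) hxz
    have hhalf := hnonneg _ hmem
    simp only [Pi.neg_apply] at hsecant
    nlinarith [min_le_left x (1 - x), hx.1, hz.2]
  · nlinarith [min_le_left x (1 - x), hx.2]
  · have hmem : (1 + x) / 2 ∈ Ioo (0 : ℝ) 1 := ⟨by linarith [hx.1], by linarith [hx.2]⟩
    have hsecant := hf.neg.secant_mono_aux1 hz hmem hxz (by linarith [hx.2] : x < (1 + x) / 2)
    have hhalf := hnonneg _ hmem
    simp only [Pi.neg_apply] at hsecant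
    nlinarith [min_le_right x (1 - x), hx.2, hz.1]

theorem sub_le_mul_of_frequently_slope_lt {f : ℝ → ℝ} {x y m : ℝ} (hxy : x ≤ y)
    (hf : ContinuousOn f (Icc x y))
    (hslope : ∀ s ∈ Ico x y, ∀ r, m < r → ∃ᶠ z in 𝓝[>] s, slope f s z < r) :
    f y - f x ≤ m * (y - x) := by
  have hline (s : ℝ) : HasDerivAt (fun s => f x + m * (s - x)) m s := by
    simpa using (((hasDerivAt_id s).sub_const x).const_mul m).const_add (f x)
  have := image_le_of_liminf_slope_right_le_deriv_boundary hf (B := fun s => f x + m * (s - x))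
    (by simp) (by fun_prop) (fun s _ => (hline s).hasDerivWithinAt) hslope ⟨hxy, le_rfl⟩
  linarith

theorem exists_eq_and_forall_Icc_le {f : ℝ → ℝ} {a b y : ℝ} (hab : a ≤ b)
    (hf : ContinuousOn f (Icc a b)) (ha : y ≤ f a) (hb : f b ≤ y) :
    ∃ x ∈ Icc a b, f x = y ∧ ∀ z ∈ Icc a x, y ≤ f z := by
  obtain ⟨x, ⟨hx, hxy⟩, hx_least⟩ :=
    (isCompact_Icc.of_isClosed_subset (hf.preimage_isClosed_of_isClosed isClosed_Icc
      isClosed_Iic) inter_subset_left).exists_isLeast ⟨b, ⟨hab, le_rfl⟩, hb⟩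
  have h_attained {z : ℝ} (hz : z ∈ Icc a x) (hzy : f z ≤ y) : z = x :=
    hz.2.antisymm (hx_least ⟨⟨hz.1, hz.2.trans hx.2⟩, hzy⟩)
  obtain ⟨w, hw, hwy⟩ := intermediate_value_Icc' hx.1 (hf.mono (Icc_subset_Icc_right hx.2))
    (⟨hxy, ha⟩ : y ∈ Icc (f x) (f a))
  have hx_eq : f x = y := h_attained hw hwy.le ▸ hwy
  exact ⟨x, hx, hx_eq, fun z hz => not_lt.1 fun hzy =>
    hzy.ne (h_attained hz hzy.le ▸ hx_eq)⟩

end OneVariable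

section Cutoff

theorem deriv_smoothTransition_eq_zero {t : ℝ} (ht : t ≤ 0 ∨ 1 ≤ t) :
    deriv Real.smoothTransition t = 0 := by
  rcases ht with ht | ht
  · refine IsLocalMin.deriv_eq_zero (Eventually.of_forall fun s => ?_)
    rw [Real.smoothTransition.zero_of_nonpos ht]
    exact Real.smoothTransition.nonneg s
  · refine IsLocalMax.deriv_eq_zero (Eventually.of_forall fun s => ?_)
    rw [Real.smoothTransition.one_of_one_le ht]
    exact Real.smoothTransition.le_one s

theorem bddAbove_range_abs_deriv_smoothTransition :
    BddAbove (range fun t => |deriv Real.smoothTransition t|) := by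
  have hcont : Continuous (deriv Real.smoothTransition) :=
    (Real.smoothTransition.contDiff (n := 1)).continuous_deriv le_rfl
  obtain ⟨T, hT⟩ := (isCompact_Icc (a := (0 : ℝ)) (b := 1)).exists_bound_of_continuousOn
    hcont.continuousOn
  refine ⟨T, forall_mem_range.2 fun t => ?_⟩
  by_cases ht : t ∈ Icc (0 : ℝ) 1
  · exact hT t ht
  · have h_outside : t ≤ 0 ∨ 1 ≤ t := by
      by_contra! h_mem
      exact ht ⟨h_mem.1.le, h_mem.2.le⟩
    simpa [deriv_smoothTransition_eq_zero h_outside] using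
      (norm_nonneg _).trans (hT 0 ⟨le_rfl, zero_le_one⟩)

/-- The largest slope of `Real.smoothTransition`. -/
def transitionSlope : ℝ := ⨆ t, |deriv Real.smoothTransition t|

theorem abs_deriv_smoothTransition_le (t : ℝ) :
    |deriv Real.smoothTransition t| ≤ transitionSlope :=
  le_ciSup bddAbove_range_abs_deriv_smoothTransition t

/-- The smooth cutoff on the line that equals `1` up to `x` and vanishes beyond `x + δ`. -/
def cutoff (x δ s : ℝ) : ℝ := Real.smoothTransition ((x + δ - s) / δ)

variable {x δ s : ℝ}

theorem contDiff_cutoff : ContDiff ℝ (⊤ : ℕ∞) (cutoff x δ) :=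
  Real.smoothTransition.contDiff.comp (by fun_prop)

theorem cutoff_nonneg : 0 ≤ cutoff x δ s := Real.smoothTransition.nonneg _

theorem cutoff_le_one : cutoff x δ s ≤ 1 := Real.smoothTransition.le_one _

theorem cutoff_eq_one (hδ : 0 < δ) (hs : s ≤ x) : cutoff x δ s = 1 :=
  Real.smoothTransition.one_of_one_le (by rw [le_div_iff₀ hδ]; linarith)

theorem cutoff_eq_zero (hδ : 0 < δ) (hs : x + δ ≤ s) : cutoff x δ s = 0 :=
  Real.smoothTransition.zero_of_nonpos (div_nonpos_of_nonpos_of_nonneg (by linarith) hδ.le)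

theorem deriv_cutoff :
    deriv (cutoff x δ) s = deriv Real.smoothTransition ((x + δ - s) / δ) * (-1 / δ) := by
  have hinner : HasDerivAt (fun s => (x + δ - s) / δ) (-1 / δ) s :=
    ((hasDerivAt_id s).const_sub (x + δ)).div_const δ
  have houter := ((Real.smoothTransition.contDiff (n := 1)).differentiable one_ne_zero
    ((x + δ - s) / δ)).hasDerivAt
  exact (houter.comp s hinner).deriv

theorem deriv_cutoff_eq_zero (hδ : 0 < δ) (hs : s ≤ x ∨ x + δ ≤ s) :
    deriv (cutoff x δ) s = 0 := by
  rw [deriv_cutoff, deriv_smoothTransition_eq_zero, zero_mul]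
  rcases hs with hs | hs
  · exact Or.inr (by rw [le_div_iff₀ hδ]; linarith)
  · exact Or.inl (div_nonpos_of_nonpos_of_nonneg (by linarith) hδ.le)

theorem abs_deriv_cutoff_le (hδ : 0 < δ) : |deriv (cutoff x δ) s| ≤ transitionSlope / δ := by
  rw [deriv_cutoff, abs_mul, abs_div, abs_neg, abs_one, abs_of_pos hδ, mul_one_div]
  exact div_le_div_of_nonneg_right (abs_deriv_smoothTransition_le _) hδ.le

end Cutoff

section Gaussian

variable {E : Type*} [NormedAddCommGroup E]

/-- The unnormalised Gaussian `exp (-‖z‖²)`, the profile of the test functions that detect the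
boundary condition. -/
def gaussian (z : E) : ℝ := Real.exp (-‖z‖ ^ 2)

theorem gaussian_pos (z : E) : 0 < gaussian z := Real.exp_pos _

theorem continuous_gaussian : Continuous (gaussian : E → ℝ) := by
  unfold gaussian; fun_prop

variable [InnerProductSpace ℝ E]

theorem contDiff_gaussian {n : WithTop ℕ∞} : ContDiff ℝ n (gaussian : E → ℝ) :=
  Real.contDiff_exp.comp (contDiff_norm_sq ℝ).neg

theorem one_add_two_mul_mul_exp_neg_sq_le (r : ℝ) :
    (1 + 2 * r) * Real.exp (-r ^ 2) ≤ 2 * Real.exp (-(1 / 2) * r ^ 2) := by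
  have h_split : Real.exp (-(1 / 2) * r ^ 2) = Real.exp (r ^ 2 / 2) * Real.exp (-r ^ 2) := by
    rw [← Real.exp_add]; ring_nf
  rw [h_split, ← mul_assoc]
  have := Real.add_one_le_exp (r ^ 2 / 2)
  gcongr
  nlinarith [sq_nonneg (r - 1)]

variable [FiniteDimensional ℝ E] [MeasurableSpace E] [BorelSpace E]

theorem integrable_one_add_two_mul_norm_mul_gaussian :
    Integrable fun z : E => (1 + 2 * ‖z‖) * gaussian z := by
  have h_half : Integrable fun z : E => Real.exp (-(1 / 2) * ‖z‖ ^ 2) := by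
    refine (GaussianFourier.integrable_cexp_neg_mul_sq_norm_add (V := E)
      (b := ((1 / 2 : ℝ) : ℂ)) (by simp) 0 0).norm.congr (Eventually.of_forall fun z => ?_)
    simp only [Complex.norm_exp]
    congr 1
    simp [← Complex.ofReal_pow]
  have h_meas : Continuous fun z : E => (1 + 2 * ‖z‖) * gaussian z := by
    have := continuous_gaussian (E := E)
    fun_prop
  refine (h_half.const_mul 2).mono' h_meas.aestronglyMeasurable (Eventually.of_forall fun z => ?_)
  rw [Real.norm_of_nonneg (mul_nonneg (by positivity) (gaussian_pos z).le)]
  exact one_add_two_mul_mul_exp_neg_sq_le ‖z‖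

theorem integrable_inner_mul_gaussian (v : E) : Integrable fun z : E => ⟪v, z⟫ * gaussian z := by
  have h_meas : Continuous fun z : E => ⟪v, z⟫ * gaussian z := by
    have := continuous_gaussian (E := E)
    fun_prop
  refine (integrable_one_add_two_mul_norm_mul_gaussian.const_mul ‖v‖).mono'
    h_meas.aestronglyMeasurable (Eventually.of_forall fun z => ?_)
  rw [norm_mul, Real.norm_of_nonneg (gaussian_pos z).le, ← mul_assoc]
  have h_inner : ‖⟪v, z⟫‖ ≤ ‖v‖ * (1 + 2 * ‖z‖) := by
    nlinarith [norm_inner_le_norm (𝕜 := ℝ) v z, norm_nonneg v, norm_nonneg z,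
      mul_nonneg (norm_nonneg v) (norm_nonneg z)]
  exact mul_le_mul_of_nonneg_right h_inner (gaussian_pos z).le

theorem setIntegral_inner_mul_gaussian_neg {n : E} (hn : n ≠ 0) :
    ∫ z in {z : E | ⟪n, z⟫ < 0}, ⟪n, z⟫ * gaussian z < 0 := by
  have h_open : IsOpen {z : E | ⟪n, z⟫ < 0} := isOpen_lt (by fun_prop) continuous_const
  rw [← neg_pos, ← integral_neg, integral_pos_iff_support_of_nonneg_ae]
  · rw [Measure.restrict_apply' h_open.measurableSet]
    refine (h_open.measure_pos volume ⟨-n, by simp [hn]⟩).trans_le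
      (measure_mono fun z hz => ⟨?_, hz⟩)
    exact neg_ne_zero.2 (mul_neg_of_neg_of_pos hz (gaussian_pos z)).ne
  · filter_upwards [ae_restrict_mem h_open.measurableSet] with z hz
    exact neg_nonneg.2 (mul_neg_of_neg_of_pos hz (gaussian_pos z)).le
  · exact (integrable_inner_mul_gaussian n).integrableOn.neg

theorem setIntegral_inner_reflection_mul_gaussian (n v : E) :
    ∫ z in {z : E | ⟪n, z⟫ < 0}, ⟪(ℝ ∙ n).reflection v, z⟫ * gaussian z =
      ∫ z in {z : E | ⟪n, z⟫ < 0}, ⟪v, z⟫ * gaussian z := by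
  set R := (ℝ ∙ n).reflection
  have h_symm (w z : E) : ⟪w, R z⟫ = ⟪R w, z⟫ := by
    conv_lhs => rw [← Submodule.reflection_reflection (ℝ ∙ n) w]
    exact R.inner_map_map _ _
  have h_fix : R n = n :=
    Submodule.reflection_mem_subspace_eq_self (Submodule.mem_span_singleton_self n)
  have h_pre : R ⁻¹' {z : E | ⟪n, z⟫ < 0} = {z : E | ⟪n, z⟫ < 0} := by
    ext z; simp only [mem_preimage, mem_ofPred_eq, h_symm, h_fix]
  rw [← R.measurePreserving.setIntegral_preimage_emb R.toHomeomorph.measurableEmbedding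
    (fun z => ⟪v, z⟫ * gaussian z), h_pre]
  simp only [h_symm, gaussian, R.norm_map]

/-- Only the component of `v` along `n` survives, because the half-space and the Gaussian are
invariant under the reflection fixing `n`. -/
theorem inner_eq_zero_of_setIntegral_inner_mul_gaussian_eq_zero {n v : E}
    (h : ∫ z in {z : E | ⟪n, z⟫ < 0}, ⟪v, z⟫ * gaussian z = 0) : ⟪n, v⟫ = 0 := by
  rcases eq_or_ne n 0 with rfl | hn
  · exact inner_zero_left v
  have h_sum : v + (ℝ ∙ n).reflection v = (2 * (⟪n, v⟫ / ‖n‖ ^ 2)) • n := by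
    rw [Submodule.reflection_apply, Submodule.starProjection_singleton, mul_smul]
    simp [two_smul]
  have h_zero : 2 * (⟪n, v⟫ / ‖n‖ ^ 2) *
      ∫ z in {z : E | ⟪n, z⟫ < 0}, ⟪n, z⟫ * gaussian z = 0 := by
    calc _ = ∫ z in {z : E | ⟪n, z⟫ < 0}, ⟪v + (ℝ ∙ n).reflection v, z⟫ * gaussian z := by
          rw [h_sum, ← integral_const_mul]
          simp only [inner_smul_left, mul_assoc, conj_trivial]
      _ = 0 := by
          simp only [inner_add_left, add_mul]
          rw [integral_add (integrable_inner_mul_gaussian v).integrableOn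
            (integrable_inner_mul_gaussian _).integrableOn,
            setIntegral_inner_reflection_mul_gaussian, h, add_zero]
  simpa [hn, (setIntegral_inner_mul_gaussian_neg hn).ne] using h_zero

end Gaussian

section GradientWithin

variable {E : Type*} [NormedAddCommGroup E] [InnerProductSpace ℝ E] [CompleteSpace E]
  {s : Set E} {f g : E → ℝ} {x : E}

theorem gradientWithin_const (c : ℝ) : gradientWithin (fun _ => c) s x = 0 := by
  simp [gradientWithin]

theorem gradientWithin_fun_add (hs : UniqueDiffWithinAt ℝ s x)
    (hf : DifferentiableWithinAt ℝ f s x) (hg : DifferentiableWithinAt ℝ g s x) :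
    gradientWithin (fun y => f y + g y) s x = gradientWithin f s x + gradientWithin g s x := by
  simp only [gradientWithin, fderivWithin_fun_add hs hf hg, map_add]

theorem gradientWithin_fun_mul (hs : UniqueDiffWithinAt ℝ s x)
    (hf : DifferentiableWithinAt ℝ f s x) (hg : DifferentiableWithinAt ℝ g s x) :
    gradientWithin (fun y => f y * g y) s x =
      f x • gradientWithin g s x + g x • gradientWithin f s x := by
  simp only [gradientWithin, fderivWithin_fun_mul hs hf hg, map_add, map_smul]

theorem gradientWithin_const_mul (hs : UniqueDiffWithinAt ℝ s x)
    (hf : DifferentiableWithinAt ℝ f s x) (c : ℝ) :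
    gradientWithin (fun y => c * f y) s x = c • gradientWithin f s x := by
  rw [gradientWithin_fun_mul hs (differentiableWithinAt_const c) hf, gradientWithin_const,
    smul_zero, add_zero]

theorem gradientWithin_of_mem_nhds (hs : s ∈ 𝓝 x) : gradientWithin f s x = gradient f x := by
  rw [gradientWithin, gradient, fderivWithin_of_mem_nhds hs]

theorem continuousOn_gradientWithin {n : WithTop ℕ∞} (hf : ContDiffOn ℝ n f s)
    (hs : UniqueDiffOn ℝ s) (hn : 1 ≤ n) : ContinuousOn (gradientWithin f s) s :=
  (InnerProductSpace.toDual ℝ E).symm.continuous.comp_continuousOn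
    (hf.continuousOn_fderivWithin hs hn)

theorem gradientWithin_apply {ι : Type*} [Fintype ι] [DecidableEq ι] (s : Set (EuclideanSpace ℝ ι))
    (f : EuclideanSpace ℝ ι → ℝ) (x : EuclideanSpace ℝ ι) (i : ι) :
    gradientWithin f s x i = fderivWithin ℝ f s x (EuclideanSpace.single i 1) := by
  rw [← inner_gradientWithin_left, EuclideanSpace.inner_single_right]
  simp

end GradientWithin

/-- A nonempty bounded open convex set. -/
structure IsBoundedConvexDomain {E : Type*} [NormedAddCommGroup E] [NormedSpace ℝ E]
    (Ω : Set E) : Prop where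
  isOpen : IsOpen Ω
  convex : Convex ℝ Ω
  isBounded : Bornology.IsBounded Ω
  nonempty : Ω.Nonempty

section Integrals

variable {E : Type*} [NormedAddCommGroup E] [MeasurableSpace E] [BorelSpace E]
  {ν : Measure E} [IsFiniteMeasureOnCompacts ν] {Ω : Set E} {f g : E → ℝ}

theorem integrableOn_of_continuousOn_closure [ProperSpace E] (hΩ : Bornology.IsBounded Ω)
    (hf : ContinuousOn f (closure Ω)) : IntegrableOn f Ω ν :=
  (hf.integrableOn_compact hΩ.isCompact_closure).mono_set subset_closure

theorem setIntegral_add_const_mul_sq [ProperSpace E] (hΩ : Bornology.IsBounded Ω)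
    (hf : ContinuousOn f (closure Ω)) (hg : ContinuousOn g (closure Ω)) (t : ℝ) :
    ∫ p in Ω, (f p + t * g p) ^ 2 ∂ν =
      ∫ p in Ω, f p ^ 2 ∂ν + 2 * t * ∫ p in Ω, f p * g p ∂ν + t ^ 2 * ∫ p in Ω, g p ^ 2 ∂ν := by
  have h_ff := integrableOn_of_continuousOn_closure (ν := ν) hΩ (hf.fun_pow 2)
  have h_fg := integrableOn_of_continuousOn_closure (ν := ν) hΩ (hf.fun_mul hg)
  have h_gg := integrableOn_of_continuousOn_closure (ν := ν) hΩ (hg.fun_pow 2)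
  rw [← integral_const_mul, ← integral_const_mul, ← integral_add h_ff (h_fg.const_mul _),
    ← integral_add (h_ff.fun_add (h_fg.const_mul _)) (h_gg.const_mul _)]
  congr 1 with p
  ring

theorem setIntegral_sq_pos [NormedSpace ℝ E] [FiniteDimensional ℝ E] [ν.IsOpenPosMeasure]
    (hΩ : IsOpen Ω) (hΩb : Bornology.IsBounded Ω)
    (hf : ContinuousOn f (closure Ω)) (hne : ∃ p ∈ Ω, f p ≠ 0) :
    0 < ∫ p in Ω, f p ^ 2 ∂ν := by
  have := FiniteDimensional.proper ℝ E
  rw [integral_pos_iff_support_of_nonneg (fun p => sq_nonneg _)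
    (integrableOn_of_continuousOn_closure hΩb (hf.pow 2)), Measure.restrict_apply' hΩ.measurableSet]
  have h_open : IsOpen (Ω ∩ f ⁻¹' {0}ᶜ) :=
    (hf.mono subset_closure).isOpen_inter_preimage hΩ isOpen_compl_singleton
  refine (h_open.measure_pos ν hne).trans_le (measure_mono fun p hp => ⟨?_, hp.1⟩)
  exact pow_ne_zero 2 hp.2

end Integrals

section NeumannEigenfunction

variable {E : Type*} [NormedAddCommGroup E] [InnerProductSpace ℝ E]
  {Ω : Set E} {f g u : E → ℝ} {p : E} {μ : ℝ}

/-- Smoothness up to the boundary. -/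
abbrev SmoothOnClosure (Ω : Set E) (f : E → ℝ) : Prop := ContDiffOn ℝ (⊤ : ℕ∞) f (closure Ω)

theorem SmoothOnClosure.differentiableOn (hf : SmoothOnClosure Ω f) :
    DifferentiableOn ℝ f (closure Ω) :=
  ContDiffOn.differentiableOn hf (by simp)

theorem IsBoundedConvexDomain.uniqueDiffOn_closure (hΩ : IsBoundedConvexDomain Ω) :
    UniqueDiffOn ℝ (closure Ω) :=
  uniqueDiffOn_convex hΩ.convex.closure
    (hΩ.nonempty.mono (interior_maximal subset_closure hΩ.isOpen))

variable [FiniteDimensional ℝ E]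

/-- The gradient of `f` up to the boundary of `Ω`, computed from one-sided increments. -/
def closureGrad (Ω : Set E) (f : E → ℝ) : E → E := gradientWithin f (closure Ω)

theorem closureGrad_eq_gradient (hΩ : IsOpen Ω) (hp : p ∈ Ω) :
    closureGrad Ω f p = gradient f p :=
  gradientWithin_of_mem_nhds (mem_of_superset (hΩ.mem_nhds hp) subset_closure)

namespace IsBoundedConvexDomain

theorem continuousOn_closureGrad (hΩ : IsBoundedConvexDomain Ω) (hf : SmoothOnClosure Ω f) :
    ContinuousOn (closureGrad Ω f) (closure Ω) :=
  continuousOn_gradientWithin hf hΩ.uniqueDiffOn_closure (by simp)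

theorem closureGrad_add (hΩ : IsBoundedConvexDomain Ω) (hf : SmoothOnClosure Ω f)
    (hg : SmoothOnClosure Ω g) (hp : p ∈ closure Ω) :
    closureGrad Ω (fun q => f q + g q) p = closureGrad Ω f p + closureGrad Ω g p :=
  gradientWithin_fun_add (hΩ.uniqueDiffOn_closure p hp) (hf.differentiableOn p hp)
    (hg.differentiableOn p hp)

theorem closureGrad_mul (hΩ : IsBoundedConvexDomain Ω) (hf : SmoothOnClosure Ω f)
    (hg : SmoothOnClosure Ω g) (hp : p ∈ closure Ω) :
    closureGrad Ω (fun q => f q * g q) p = f p • closureGrad Ω g p + g p • closureGrad Ω f p :=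
  gradientWithin_fun_mul (hΩ.uniqueDiffOn_closure p hp) (hf.differentiableOn p hp)
    (hg.differentiableOn p hp)

theorem closureGrad_const_mul (hΩ : IsBoundedConvexDomain Ω) (hf : SmoothOnClosure Ω f) (c : ℝ)
    (hp : p ∈ closure Ω) : closureGrad Ω (fun q => c * f q) p = c • closureGrad Ω f p :=
  gradientWithin_const_mul (hΩ.uniqueDiffOn_closure p hp) (hf.differentiableOn p hp) c

end IsBoundedConvexDomain

variable [MeasurableSpace E] [BorelSpace E]

/-- The Dirichlet form `∫_Ω ⟪∇f, ∇g⟫` of functions that are smooth up to the boundary. -/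
def dirichletForm (Ω : Set E) (f g : E → ℝ) : ℝ :=
  ∫ p in Ω, ⟪closureGrad Ω f p, closureGrad Ω g p⟫

theorem dirichletForm_self (Ω : Set E) (f : E → ℝ) :
    dirichletForm Ω f f = ∫ p in Ω, ‖closureGrad Ω f p‖ ^ 2 := by
  simp only [dirichletForm, real_inner_self_eq_norm_sq]

theorem dirichletForm_self_eq_setIntegral_gradient (hΩ : IsOpen Ω) (f : E → ℝ) :
    dirichletForm Ω f f = ∫ p in Ω, ‖gradient f p‖ ^ 2 := by
  rw [dirichletForm_self]
  refine setIntegral_congr_fun hΩ.measurableSet fun p hp => ?_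
  simp only [closureGrad_eq_gradient hΩ hp]

theorem dirichletForm_self_nonneg (Ω : Set E) (f : E → ℝ) : 0 ≤ dirichletForm Ω f f := by
  rw [dirichletForm_self]
  exact integral_nonneg fun p => sq_nonneg _

namespace IsBoundedConvexDomain

theorem volume_real_pos (hΩ : IsBoundedConvexDomain Ω) : 0 < volume.real Ω :=
  ENNReal.toReal_pos (hΩ.isOpen.measure_pos _ hΩ.nonempty).ne' hΩ.isBounded.measure_lt_top.ne

theorem integrableOn_inner_closureGrad (hΩ : IsBoundedConvexDomain Ω) (hf : SmoothOnClosure Ω f)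
    (hg : SmoothOnClosure Ω g) :
    IntegrableOn (fun p => ⟪closureGrad Ω f p, closureGrad Ω g p⟫) Ω :=
  integrableOn_of_continuousOn_closure hΩ.isBounded
    ((hΩ.continuousOn_closureGrad hf).inner (hΩ.continuousOn_closureGrad hg))

theorem dirichletForm_add_const_mul_self (hΩ : IsBoundedConvexDomain Ω) (hf : SmoothOnClosure Ω f)
    (hg : SmoothOnClosure Ω g) (t : ℝ) :
    dirichletForm Ω (fun p => f p + t * g p) (fun p => f p + t * g p) =
      dirichletForm Ω f f + 2 * t * dirichletForm Ω f g + t ^ 2 * dirichletForm Ω g g := by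
  have h_ff := hΩ.integrableOn_inner_closureGrad hf hf
  have h_fg := hΩ.integrableOn_inner_closureGrad hf hg
  have h_gg := hΩ.integrableOn_inner_closureGrad hg hg
  simp only [dirichletForm]
  rw [← integral_const_mul, ← integral_const_mul, ← integral_add h_ff (h_fg.const_mul _),
    ← integral_add (h_ff.fun_add (h_fg.const_mul _)) (h_gg.const_mul _)]
  refine setIntegral_congr_fun hΩ.isOpen.measurableSet fun p hp => ?_
  have hp' := subset_closure hp
  simp only [hΩ.closureGrad_add hf (contDiffOn_const.mul hg) hp', hΩ.closureGrad_const_mul hg t hp',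
    inner_add_left, inner_add_right, real_inner_smul_left, real_inner_smul_right,
    real_inner_comm (closureGrad Ω f p) (closureGrad Ω g p)]
  ring

theorem dirichletForm_const_mul_self (hΩ : IsBoundedConvexDomain Ω) (hf : SmoothOnClosure Ω f)
    (c : ℝ) : dirichletForm Ω (fun p => c * f p) (fun p => c * f p) =
      c ^ 2 * dirichletForm Ω f f := by
  simp only [dirichletForm_self, ← integral_const_mul]
  refine setIntegral_congr_fun hΩ.isOpen.measurableSet fun p hp => ?_
  simp only [hΩ.closureGrad_const_mul hf c (subset_closure hp), norm_smul, mul_pow, sq_abs,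
    Real.norm_eq_abs]

end IsBoundedConvexDomain

/-- `u` realises the smallest positive Neumann eigenvalue `μ` of `Ω` in its variational
characterisation over mean-zero functions that are smooth up to the boundary. -/
structure IsFirstNeumannEigenfunction (Ω : Set E) (u : E → ℝ) (μ : ℝ) : Prop where
  smooth : SmoothOnClosure Ω u
  integral_eq_zero : ∫ p in Ω, u p = 0
  eigenvalue_pos : 0 < μ
  energy_eq : dirichletForm Ω u u = μ * ∫ p in Ω, u p ^ 2
  poincare : ∀ w, SmoothOnClosure Ω w → ∫ p in Ω, w p = 0 →
    μ * (∫ p in Ω, w p ^ 2) ≤ dirichletForm Ω w w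

namespace IsFirstNeumannEigenfunction

theorem poincare_sub_sq_div (hu : IsFirstNeumannEigenfunction Ω u μ)
    (hΩ : IsBoundedConvexDomain Ω) (hf : SmoothOnClosure Ω f) :
    μ * ((∫ p in Ω, f p ^ 2) - (∫ p in Ω, f p) ^ 2 / volume.real Ω) ≤ dirichletForm Ω f f := by
  have h_vol := hΩ.volume_real_pos
  have h_int := integrableOn_of_continuousOn_closure (ν := volume) hΩ.isBounded hf.continuousOn
  set m := (∫ p in Ω, f p) / volume.real Ω with hm
  have h_one : SmoothOnClosure Ω (fun _ : E => (1 : ℝ)) := contDiffOn_const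
  have h_mean : ∫ p in Ω, (f p + -m * 1) = 0 := by
    rw [integral_add h_int (integrableOn_of_continuousOn_closure hΩ.isBounded continuousOn_const),
      setIntegral_const, hm, smul_eq_mul]
    field_simp
    ring
  have h_poincare := hu.poincare _ (hf.add (contDiffOn_const.mul h_one)) h_mean
  have h_const : closureGrad Ω (fun _ : E => (1 : ℝ)) = 0 :=
    funext fun p => gradientWithin_const 1
  rw [hΩ.dirichletForm_add_const_mul_self hf h_one, setIntegral_add_const_mul_sq hΩ.isBounded
    hf.continuousOn continuousOn_const] at h_poincare
  simp only [dirichletForm, h_const, Pi.zero_apply, inner_zero_right, integral_zero, mul_zero,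
    add_zero, mul_one, one_pow, setIntegral_const, smul_eq_mul] at h_poincare ⊢
  convert h_poincare using 2
  rw [hm]
  field_simp
  ring

theorem dirichletForm_eq (hu : IsFirstNeumannEigenfunction Ω u μ) (hΩ : IsBoundedConvexDomain Ω)
    (hf : SmoothOnClosure Ω f) : dirichletForm Ω u f = μ * ∫ p in Ω, u p * f p := by
  rw [← sub_eq_zero]
  refine eq_zero_of_forall_two_mul_add_sq_mul_nonneg
    (c := dirichletForm Ω f f - μ * ((∫ p in Ω, f p ^ 2) - (∫ p in Ω, f p) ^ 2 / volume.real Ω))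
    fun t => ?_
  have h_int {g : E → ℝ} (hg : ContinuousOn g (closure Ω)) : IntegrableOn g Ω :=
    integrableOn_of_continuousOn_closure hΩ.isBounded hg
  have h_mean : ∫ p in Ω, (u p + t * f p) = t * ∫ p in Ω, f p := by
    rw [integral_add (h_int hu.smooth.continuousOn) ((h_int hf.continuousOn).const_mul t),
      hu.integral_eq_zero, zero_add, integral_const_mul]
  have h_poincare := hu.poincare_sub_sq_div hΩ (hu.smooth.add (contDiffOn_const (c := t) |>.mul hf))
  beta_reduce at h_poincare
  rw [h_mean, hΩ.dirichletForm_add_const_mul_self hu.smooth hf, hu.energy_eq,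
    setIntegral_add_const_mul_sq hΩ.isBounded hu.smooth.continuousOn hf.continuousOn,
    ← sub_nonneg] at h_poincare
  convert h_poincare using 1
  ring

theorem const_mul (hu : IsFirstNeumannEigenfunction Ω u μ) (hΩ : IsBoundedConvexDomain Ω) (c : ℝ) :
    IsFirstNeumannEigenfunction Ω (fun p => c * u p) μ where
  smooth := contDiffOn_const.mul hu.smooth
  integral_eq_zero := by rw [integral_const_mul, hu.integral_eq_zero, mul_zero]
  eigenvalue_pos := hu.eigenvalue_pos
  energy_eq := by
    rw [hΩ.dirichletForm_const_mul_self hu.smooth, hu.energy_eq]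
    simp only [mul_pow, integral_const_mul]
    ring
  poincare := hu.poincare

theorem dirichletForm_mul_add_const (hu : IsFirstNeumannEigenfunction Ω u μ)
    (hΩ : IsBoundedConvexDomain Ω) {χ : E → ℝ} (hχ : SmoothOnClosure Ω χ) (b : ℝ) :
    dirichletForm Ω (fun p => χ p * (u p + b)) (fun p => χ p * (u p + b)) =
      μ * (∫ p in Ω, u p * (χ p * (χ p * (u p + b)))) +
        ∫ p in Ω, ‖closureGrad Ω χ p‖ ^ 2 * (u p + b) ^ 2 := by
  have h_v : SmoothOnClosure Ω (fun p => u p + b) := hu.smooth.add contDiffOn_const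
  have h_χv := hχ.mul h_v
  have h_χχv := hχ.mul h_χv
  have h_int : IntegrableOn (fun p => ‖closureGrad Ω χ p‖ ^ 2 * (u p + b) ^ 2) Ω :=
    integrableOn_of_continuousOn_closure hΩ.isBounded
      (((hΩ.continuousOn_closureGrad hχ).norm.pow 2).mul (h_v.continuousOn.pow 2))
  rw [← hu.dirichletForm_eq hΩ h_χχv, dirichletForm_self, dirichletForm,
    ← integral_add (hΩ.integrableOn_inner_closureGrad hu.smooth h_χχv) h_int]
  refine setIntegral_congr_fun hΩ.isOpen.measurableSet fun p hp => ?_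
  have hp' := subset_closure hp
  have h_grad_v : closureGrad Ω (fun q => u q + b) p = closureGrad Ω u p := by
    rw [hΩ.closureGrad_add hu.smooth contDiffOn_const hp', closureGrad, closureGrad,
      gradientWithin_const, add_zero]
  simp only [hΩ.closureGrad_mul hχ h_χv hp', hΩ.closureGrad_mul hχ h_v hp', h_grad_v,
    ← real_inner_self_eq_norm_sq, inner_add_left, inner_add_right, real_inner_smul_left,
    real_inner_smul_right, real_inner_comm (closureGrad Ω u p) (closureGrad Ω χ p)]
  ring

/-- The cross terms of `|∇(χ (u + b))|²` are absorbed by testing the weak equation with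
`χ² (u + b)`, so that only the gradient of the cutoff remains. -/
theorem poincare_mul_add_const (hu : IsFirstNeumannEigenfunction Ω u μ)
    (hΩ : IsBoundedConvexDomain Ω) {χ : E → ℝ} (hχ : SmoothOnClosure Ω χ) (b : ℝ) :
    μ * (b * (∫ p in Ω, χ p ^ 2 * (u p + b)) - (∫ p in Ω, χ p * (u p + b)) ^ 2 / volume.real Ω) ≤
      ∫ p in Ω, ‖closureGrad Ω χ p‖ ^ 2 * (u p + b) ^ 2 := by
  have h_v : SmoothOnClosure Ω (fun p => u p + b) := hu.smooth.add contDiffOn_const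
  have h_int {g : E → ℝ} (hg : ContinuousOn g (closure Ω)) : IntegrableOn g Ω :=
    integrableOn_of_continuousOn_closure hΩ.isBounded hg
  have h_sq : ∫ p in Ω, u p * (χ p * (χ p * (u p + b))) =
      (∫ p in Ω, (χ p * (u p + b)) ^ 2) - b * ∫ p in Ω, χ p ^ 2 * (u p + b) := by
    rw [← integral_const_mul, ← integral_sub
      (h_int ((hχ.continuousOn.fun_mul h_v.continuousOn).fun_pow 2))
      ((h_int ((hχ.continuousOn.fun_pow 2).fun_mul h_v.continuousOn)).const_mul b)]
    congr 1 with p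
    ring
  have h_poincare := hu.poincare_sub_sq_div hΩ (hχ.mul h_v)
  rw [hu.dirichletForm_mul_add_const hΩ hχ, h_sq] at h_poincare
  linarith

theorem of_eq_sInf (hΩ : IsBoundedConvexDomain Ω) (hu : SmoothOnClosure Ω u)
    (hne : ∃ p ∈ Ω, u p ≠ 0) (h_mean : ∫ p in Ω, u p = 0) (hμ : 0 < μ)
    (h_inf : μ = sInf {r | ∃ w : E → ℝ, ContDiffOn ℝ (⊤ : ℕ∞) w (closure Ω) ∧
      (∃ p ∈ Ω, w p ≠ 0) ∧ (∫ p in Ω, w p) = 0 ∧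
      r = (∫ p in Ω, ‖gradient w p‖ ^ 2) / (∫ p in Ω, (w p) ^ 2)})
    (h_attained : μ = (∫ p in Ω, ‖gradient u p‖ ^ 2) / (∫ p in Ω, (u p) ^ 2)) :
    IsFirstNeumannEigenfunction Ω u μ where
  smooth := hu
  integral_eq_zero := h_mean
  eigenvalue_pos := hμ
  energy_eq := by
    rw [dirichletForm_self_eq_setIntegral_gradient hΩ.isOpen, h_attained, div_mul_cancel₀ _
      (setIntegral_sq_pos hΩ.isOpen hΩ.isBounded hu.continuousOn hne).ne']
  poincare := by
    intro w hw hw_mean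
    by_cases hw_ne : ∃ p ∈ Ω, w p ≠ 0
    · rw [dirichletForm_self_eq_setIntegral_gradient hΩ.isOpen, h_inf, ← le_div_iff₀
        (setIntegral_sq_pos hΩ.isOpen hΩ.isBounded hw.continuousOn hw_ne)]
      refine csInf_le ⟨0, ?_⟩ ⟨w, hw, hw_ne, hw_mean, rfl⟩
      rintro r ⟨w', -, -, -, rfl⟩
      exact div_nonneg (integral_nonneg fun p => sq_nonneg _) (integral_nonneg fun p => sq_nonneg _)
    · push Not at hw_ne
      rw [setIntegral_congr_fun (g := fun _ => 0) hΩ.isOpen.measurableSet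
        fun p hp => by simp [hw_ne p hp], integral_zero, mul_zero]
      exact dirichletForm_self_nonneg Ω w

end IsFirstNeumannEigenfunction

end NeumannEigenfunction

section BlowUp

variable {E : Type*} [NormedAddCommGroup E] [InnerProductSpace ℝ E] {F : E → ℝ} {a z : E}

theorem tendsto_inv_mul_comp_add_smul [CompleteSpace E] (hF : DifferentiableAt ℝ F a)
    (ha : F a = 0) (z : E) :
    Tendsto (fun t : ℝ => t⁻¹ * F (a + t • z)) (𝓝[>] 0) (𝓝 ⟪gradient F a, z⟫) := by
  have h_line := (hF.hasFDerivAt.hasLineDerivAt z).tendsto_slope_zero_right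
  simpa [ha, inner_gradient_left] using h_line

theorem eventually_add_smul_mem_of_inner_gradient_neg [CompleteSpace E]
    (hF : DifferentiableAt ℝ F a) (ha : F a = 0) (hz : ⟪gradient F a, z⟫ < 0) :
    ∀ᶠ t in 𝓝[>] (0 : ℝ), F (a + t • z) < 0 := by
  filter_upwards [(tendsto_inv_mul_comp_add_smul hF ha z).eventually_lt_const hz,
    self_mem_nhdsWithin] with t h_slope ht
  exact (pos_iff_neg_of_mul_neg h_slope).1 (inv_pos.2 ht)

theorem eventually_add_smul_pos_of_inner_gradient_pos [CompleteSpace E]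
    (hF : DifferentiableAt ℝ F a) (ha : F a = 0) (hz : 0 < ⟪gradient F a, z⟫) :
    ∀ᶠ t in 𝓝[>] (0 : ℝ), 0 < F (a + t • z) := by
  filter_upwards [(tendsto_inv_mul_comp_add_smul hF ha z).eventually_const_lt hz,
    self_mem_nhdsWithin] with t h_slope ht
  exact (pos_iff_pos_of_mul_pos h_slope).1 (inv_pos.2 ht)

theorem inner_gradient_sub_nonpos_of_convex [CompleteSpace E] (hF : DifferentiableAt ℝ F a)
    (h_open : IsOpen {p | F p < 0}) (h_convex : Convex ℝ {p | F p < 0})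
    (ha : a ∈ closure {p | F p < 0}) (hFa : F a = 0) {q : E} (hq : F q < 0) :
    ⟪gradient F a, q - a⟫ ≤ 0 := by
  refine le_of_tendsto (tendsto_inv_mul_comp_add_smul hF hFa (q - a)) ?_
  filter_upwards [Ioc_mem_nhdsGT one_pos] with t ht
  have h_mem := h_convex.add_smul_sub_mem_interior' ha
    (mem_interior_iff_mem_nhds.2 (h_open.mem_nhds hq)) ht
  exact mul_nonpos_of_nonneg_of_nonpos (inv_nonneg.2 ht.1.le) (interior_subset h_mem).le

variable [FiniteDimensional ℝ E] {Ω : Set E} {u : E → ℝ} {μ δ : ℝ}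

theorem IsBoundedConvexDomain.closureGrad_gaussian_dilation (hΩ : IsBoundedConvexDomain Ω)
    (δ : ℝ) (a : E) {p : E} (hp : p ∈ closure Ω) :
    closureGrad Ω (fun q => gaussian (δ⁻¹ • (q - a))) p =
      (-2 * δ⁻¹ * gaussian (δ⁻¹ • (p - a))) • (δ⁻¹ • (p - a)) := by
  have h_deriv : HasFDerivAt (fun q => gaussian (δ⁻¹ • (q - a))) _ p :=
    (((hasFDerivAt_id p).sub_const a).const_smul δ⁻¹).norm_sq.neg.exp
  refine ext_inner_right ℝ fun v => ?_
  rw [closureGrad, inner_gradientWithin_left,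
    h_deriv.hasFDerivWithinAt.fderivWithin (hΩ.uniqueDiffOn_closure p hp)]
  simp [gaussian, real_inner_smul_left, inner_sub_left]
  ring

/-- The integrand of the weak Neumann equation tested with a Gaussian of width `δ` centred at `a`,
in the rescaled variable `z` with `p = a + δ z`. -/
def blowUp (Ω : Set E) (u : E → ℝ) (μ : ℝ) (a : E) (δ : ℝ) : E → ℝ :=
  indicator {z | a + δ • z ∈ Ω} fun z =>
    (⟪closureGrad Ω u (a + δ • z), z⟫ + δ / 2 * μ * u (a + δ • z)) * gaussian z

theorem tendsto_blowUp (hu : ContinuousOn u (closure Ω))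
    (h_grad : ContinuousOn (closureGrad Ω u) (closure Ω)) (ha : a ∈ closure Ω)
    (hz : ∀ᶠ δ : ℝ in 𝓝[>] 0, a + δ • z ∈ Ω) :
    Tendsto (fun δ => blowUp Ω u μ a δ z) (𝓝[>] 0) (𝓝 (⟪closureGrad Ω u a, z⟫ * gaussian z)) := by
  have h_path : Tendsto (fun δ : ℝ => a + δ • z) (𝓝[>] 0) (𝓝[closure Ω] a) := by
    refine tendsto_nhdsWithin_of_tendsto_nhds_of_eventually_within _ ?_
      (hz.mono fun δ hδ => subset_closure hδ)
    have h_cont : Continuous fun δ : ℝ => a + δ • z := by fun_prop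
    simpa using (h_cont.tendsto 0).mono_left nhdsWithin_le_nhds
  have h_scale : Tendsto (fun δ : ℝ => δ / 2 * μ) (𝓝[>] 0) (𝓝 0) := by
    have h_cont : Continuous fun δ : ℝ => δ / 2 * μ := by fun_prop
    simpa using (h_cont.tendsto 0).mono_left nhdsWithin_le_nhds
  have h_lim := ((((h_grad a ha).tendsto.comp h_path).inner (tendsto_const_nhds (x := z))).add
    (h_scale.mul ((hu a ha).tendsto.comp h_path))).mul_const (gaussian z)
  rw [zero_mul, add_zero] at h_lim
  refine h_lim.congr' ?_
  filter_upwards [hz] with δ hδ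
  simp [blowUp, hδ]

theorem norm_blowUp_le {G B : ℝ} (hG : 0 ≤ G) (hB : 0 ≤ B)
    (h_grad : ∀ p ∈ closure Ω, ‖closureGrad Ω u p‖ ≤ G) (hu : ∀ p ∈ closure Ω, ‖u p‖ ≤ B)
    (hμ : 0 ≤ μ) (hδ : 0 ≤ δ) (hδ1 : δ ≤ 1) (z : E) :
    ‖blowUp Ω u μ a δ z‖ ≤ (G + μ * B) * ((1 + 2 * ‖z‖) * gaussian z) := by
  have h_gauss := (gaussian_pos z).le
  by_cases hz : a + δ • z ∈ Ω
  · have h_inner : ‖⟪closureGrad Ω u (a + δ • z), z⟫‖ ≤ G * ‖z‖ :=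
      (norm_inner_le_norm _ z).trans (by gcongr; exact h_grad _ (subset_closure hz))
    have h_mass : ‖δ / 2 * μ * u (a + δ • z)‖ ≤ μ * B := by
      rw [norm_mul, Real.norm_of_nonneg (by positivity)]
      exact mul_le_mul (by nlinarith) (hu _ (subset_closure hz)) (norm_nonneg _) hμ
    rw [blowUp, indicator_of_mem (by exact hz), norm_mul, Real.norm_of_nonneg h_gauss, ← mul_assoc]
    refine mul_le_mul_of_nonneg_right ((norm_add_le _ _).trans ?_) h_gauss
    nlinarith [mul_nonneg hG (norm_nonneg z), mul_nonneg (mul_nonneg hμ hB) (norm_nonneg z)]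
  · rw [blowUp, indicator_of_notMem (by exact hz), norm_zero]
    positivity

variable [MeasurableSpace E] [BorelSpace E]

theorem ae_inner_ne_zero {n : E} (hn : n ≠ 0) : ∀ᵐ z : E, ⟪n, z⟫ ≠ 0 := by
  have h_ker : (ℝ ∙ n)ᗮ ≠ ⊤ := by simpa using hn
  filter_upwards [measure_eq_zero_iff_ae_notMem.1
    (Measure.addHaar_submodule volume (ℝ ∙ n)ᗮ h_ker)] with z hz h_zero
  exact hz (Submodule.mem_orthogonal_singleton_iff_inner_right.2 h_zero)

theorem IsFirstNeumannEigenfunction.integral_blowUp (hu : IsFirstNeumannEigenfunction Ω u μ)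
    (hΩ : IsBoundedConvexDomain Ω) (a : E) (hδ : 0 < δ) : ∫ z, blowUp Ω u μ a δ z = 0 := by
  set φ : E → ℝ := fun q => gaussian (δ⁻¹ • (q - a)) with hφ_def
  have hφ : SmoothOnClosure Ω φ := by
    refine ContDiff.contDiffOn (contDiff_gaussian.comp ?_)
    fun_prop
  set G : E → ℝ := fun p =>
    -(δ / 2) * (⟪closureGrad Ω u p, closureGrad Ω φ p⟫ - μ * (u p * φ p)) with hG
  have h_rescale : blowUp Ω u μ a δ = fun z => (fun p => indicator Ω G (a + p)) (δ • z) := by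
    funext z
    beta_reduce
    by_cases hz : a + δ • z ∈ Ω
    · rw [blowUp, indicator_of_mem (by exact hz), indicator_of_mem hz, hG, hφ_def]
      simp only [hΩ.closureGrad_gaussian_dilation δ a (subset_closure hz), add_sub_cancel_left,
        smul_smul, inv_mul_cancel₀ hδ.ne', one_smul, real_inner_smul_right]
      field_simp
      ring
    · rw [blowUp, indicator_of_notMem (by exact hz), indicator_of_notMem hz]
  rw [h_rescale, Measure.integral_comp_smul volume (fun p => indicator Ω G (a + p)) δ,
    integral_add_left_eq_self (indicator Ω G) a, integral_indicator hΩ.isOpen.measurableSet, hG,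
    integral_const_mul, integral_sub (hΩ.integrableOn_inner_closureGrad hu.smooth hφ)
      ((integrableOn_of_continuousOn_closure hΩ.isBounded
        (hu.smooth.continuousOn.fun_mul hφ.continuousOn)).const_mul μ),
    integral_const_mul, ← hu.dirichletForm_eq hΩ hφ, dirichletForm, sub_self, mul_zero, smul_zero]

theorem measurable_blowUp (hΩ : IsOpen Ω) (hu : ContinuousOn u (closure Ω))
    (h_grad : ContinuousOn (closureGrad Ω u) (closure Ω)) (δ : ℝ) :
    Measurable (blowUp Ω u μ a δ) := by
  classical
  have h_dil : Continuous fun z : E => a + δ • z := by fun_prop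
  have h_maps : MapsTo (fun z : E => a + δ • z) {z | a + δ • z ∈ Ω} (closure Ω) :=
    fun z hz => subset_closure hz
  rw [blowUp, ← Set.piecewise_eq_indicator]
  refine ContinuousOn.measurable_piecewise ?_ continuousOn_const
    (hΩ.preimage h_dil).measurableSet
  exact (((h_grad.comp h_dil.continuousOn h_maps).inner continuousOn_id).add
    (continuousOn_const.mul (hu.comp h_dil.continuousOn h_maps))).mul
      continuous_gaussian.continuousOn

theorem IsFirstNeumannEigenfunction.tendsto_integral_blowUp
    (hu : IsFirstNeumannEigenfunction Ω u μ) (hΩ : IsBoundedConvexDomain Ω)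
    (hF : DifferentiableAt ℝ F a) (h_sub : Ω = {p | F p < 0}) (ha : a ∈ closure Ω) (hFa : F a = 0)
    (hn : gradient F a ≠ 0) :
    Tendsto (fun δ => ∫ z, blowUp Ω u μ a δ z) (𝓝[>] 0)
      (𝓝 (∫ z in {z : E | ⟪gradient F a, z⟫ < 0}, ⟪closureGrad Ω u a, z⟫ * gaussian z)) := by
  have h_u := hu.smooth.continuousOn
  have h_grad := hΩ.continuousOn_closureGrad hu.smooth
  have h_compact := hΩ.isBounded.isCompact_closure
  obtain ⟨G, hG⟩ := h_compact.exists_bound_of_continuousOn h_grad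
  obtain ⟨B, hB⟩ := h_compact.exists_bound_of_continuousOn h_u
  have hG0 := (norm_nonneg _).trans (hG a ha)
  have hB0 := (norm_nonneg _).trans (hB a ha)
  have h_half : MeasurableSet {z : E | ⟪gradient F a, z⟫ < 0} :=
    (isOpen_lt (by fun_prop) continuous_const).measurableSet
  rw [← integral_indicator h_half]
  refine tendsto_integral_filter_of_dominated_convergence _
    (Eventually.of_forall fun δ => (measurable_blowUp hΩ.isOpen h_u h_grad δ).aestronglyMeasurable)
    ?_ (integrable_one_add_two_mul_norm_mul_gaussian.const_mul (G + μ * B)) ?_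
  · filter_upwards [Ioc_mem_nhdsGT one_pos] with δ hδ
    exact Eventually.of_forall fun z =>
      norm_blowUp_le hG0 hB0 hG hB hu.eigenvalue_pos.le hδ.1.le hδ.2 z
  · filter_upwards [ae_inner_ne_zero hn] with z hz
    rcases hz.lt_or_gt with hz | hz
    · rw [indicator_of_mem (by exact hz)]
      refine tendsto_blowUp h_u h_grad ha ?_
      rw [h_sub]
      exact eventually_add_smul_mem_of_inner_gradient_neg hF hFa hz
    · rw [indicator_of_notMem (by exact hz.not_gt)]
      refine tendsto_const_nhds.congr' ?_
      filter_upwards [eventually_add_smul_pos_of_inner_gradient_pos hF hFa hz] with δ hδ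
      rw [blowUp, indicator_of_notMem]
      simpa [h_sub] using hδ.le

/-- A minimiser of the Rayleigh quotient satisfies the natural boundary condition: the blow-up of
its weak equation at `a` lives on the half-space on which `⟪∇F a, ·⟫ < 0`. -/
theorem IsFirstNeumannEigenfunction.inner_gradient_closureGrad_eq_zero
    (hu : IsFirstNeumannEigenfunction Ω u μ) (hΩ : IsBoundedConvexDomain Ω)
    (hF : DifferentiableAt ℝ F a) (h_sub : Ω = {p | F p < 0}) (ha : a ∈ closure Ω) (hFa : F a = 0)
    (hn : gradient F a ≠ 0) : ⟪gradient F a, closureGrad Ω u a⟫ = 0 := by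
  refine inner_eq_zero_of_setIntegral_inner_mul_gaussian_eq_zero (tendsto_nhds_unique
    (hu.tendsto_integral_blowUp hΩ hF h_sub ha hFa hn) (tendsto_const_nhds.congr' ?_))
  filter_upwards [self_mem_nhdsWithin] with δ hδ
  exact (hu.integral_blowUp hΩ a hδ).symm

end BlowUp

/-! ### The maximum principle -/

section MaximumPrinciple

section SecondDerivative

variable {E : Type*} [NormedAddCommGroup E] [NormedSpace ℝ E] {f : E → ℝ} {p v w : E}

theorem hasDerivAt_comp_add_smul {s : ℝ} (hf : DifferentiableAt ℝ f (p + s • v)) :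
    HasDerivAt (fun t : ℝ => f (p + t • v)) (fderiv ℝ f (p + s • v) v) s := by
  have h_line : HasDerivAt (fun t : ℝ => p + t • v) v s := by
    simpa using ((hasDerivAt_id s).smul_const v).const_add p
  exact hf.hasFDerivAt.comp_hasDerivAt s h_line

theorem contDiffAt_fderiv_apply {n : WithTop ℕ∞} (hf : ContDiffAt ℝ (n + 1) f p) (v : E) :
    ContDiffAt ℝ n (fun q => fderiv ℝ f q v) p :=
  (hf.fderiv_right le_rfl).clm_apply contDiffAt_const

theorem fderiv_fderiv_apply_nonpos_of_isLocalMax (hf : ContDiffAt ℝ 2 f p)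
    (hmax : IsLocalMax f p) (v : E) : fderiv ℝ (fun q => fderiv ℝ f q v) p v ≤ 0 := by
  have h_line : Tendsto (fun s : ℝ => p + s • v) (𝓝 0) (𝓝 p) := by
    have h_cont : Continuous fun s : ℝ => p + s • v := by fun_prop
    simpa using h_cont.tendsto 0
  have h_diff : ∀ᶠ q in 𝓝 p, DifferentiableAt ℝ f q :=
    (hf.eventually (by simp)).mono fun q hq => hq.differentiableAt (by simp)
  have h_deriv : deriv (fun s : ℝ => f (p + s • v)) =ᶠ[𝓝 0]
      fun s => fderiv ℝ f (p + s • v) v :=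
    (h_line.eventually h_diff).mono fun s hs => (hasDerivAt_comp_add_smul hs).deriv
  have h_second : HasDerivAt (fun s : ℝ => fderiv ℝ f (p + s • v) v)
      (fderiv ℝ (fun q => fderiv ℝ f q v) p v) 0 := by
    have h_grad := (contDiffAt_fderiv_apply (n := 1) hf v).differentiableAt one_ne_zero
    simpa using hasDerivAt_comp_add_smul (s := 0) (p := p) (v := v) (by simpa using h_grad)
  rw [← h_second.deriv, ← h_deriv.deriv_eq]
  refine deriv_deriv_nonpos_of_isLocalMax
    (hasDerivAt_comp_add_smul (by simpa using h_diff.self_of_nhds)).continuousAt ?_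
  simpa [IsLocalMax, IsMaxFilter] using h_line.eventually hmax

theorem fderiv_fderiv_apply_comm (hf : ContDiffAt ℝ 2 f p) :
    fderiv ℝ (fun q => fderiv ℝ f q v) p w = fderiv ℝ (fun q => fderiv ℝ f q w) p v := by
  have h_symm : IsSymmSndFDerivAt ℝ f p := hf.isSymmSndFDerivAt (by simp)
  have h_diff : DifferentiableAt ℝ (fderiv ℝ f) p :=
    (hf.fderiv_right (m := 1) le_rfl).differentiableAt one_ne_zero
  have h_apply (x y : E) :
      fderiv ℝ (fun q => fderiv ℝ f q x) p y = fderiv ℝ (fderiv ℝ f) p y x := by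
    rw [fderiv_clm_apply h_diff (differentiableAt_const x)]
    simp
  rw [h_apply, h_apply, h_symm.eq]

end SecondDerivative

variable {n : ℕ} {f g : EuclideanSpace ℝ (Fin n) → ℝ} {p : EuclideanSpace ℝ (Fin n)}

theorem lap_congr (hfg : f =ᶠ[𝓝 p] g) : lap f p = lap g p := by
  refine Finset.sum_congr rfl fun i _ => ?_
  have h_first := (hfg.fderiv (𝕜 := ℝ)).fun_comp
    fun L : EuclideanSpace ℝ (Fin n) →L[ℝ] ℝ => L (EuclideanSpace.single i 1)
  have h_second := h_first.fderiv_eq (𝕜 := ℝ)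
  exact DFunLike.congr_fun h_second (EuclideanSpace.single i 1)

theorem lap_nonpos_of_isLocalMax (hf : ContDiffAt ℝ 2 f p) (hmax : IsLocalMax f p) :
    lap f p ≤ 0 :=
  Finset.sum_nonpos fun i _ =>
    fderiv_fderiv_apply_nonpos_of_isLocalMax hf hmax (EuclideanSpace.single i 1)

theorem lap_sub_const_mul (hf : ContDiffAt ℝ 2 f p) (hg : ContDiffAt ℝ 2 g p) (c : ℝ) :
    lap (fun q => f q - c * g q) p = lap f p - c * lap g p := by
  have h_diff {h : EuclideanSpace ℝ (Fin n) → ℝ} (hh : ContDiffAt ℝ 2 h p) :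
      ∀ᶠ q in 𝓝 p, DifferentiableAt ℝ h q :=
    (hh.eventually (by simp)).mono fun q hq => hq.differentiableAt (by simp)
  rw [lap, lap, lap, Finset.mul_sum, ← Finset.sum_sub_distrib]
  refine Finset.sum_congr rfl fun i _ => ?_
  have h_first : (fun q => fderiv ℝ (fun r => f r - c * g r) q (EuclideanSpace.single i 1)) =ᶠ[𝓝 p]
      fun q => fderiv ℝ f q (EuclideanSpace.single i 1) -
        c * fderiv ℝ g q (EuclideanSpace.single i 1) := by
    filter_upwards [h_diff hf, h_diff hg] with q hfq hgq
    rw [fderiv_fun_sub hfq (hgq.const_mul c), fderiv_const_mul hgq]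
    simp
  have h_df := (contDiffAt_fderiv_apply (n := 1) hf (EuclideanSpace.single i 1)).differentiableAt
    one_ne_zero
  have h_dg := (contDiffAt_fderiv_apply (n := 1) hg (EuclideanSpace.single i 1)).differentiableAt
    one_ne_zero
  rw [h_first.fderiv_eq, fderiv_fun_sub h_df (h_dg.const_mul c), fderiv_const_mul h_dg]
  simp

theorem lap_fderiv_apply (hf : ContDiffAt ℝ 3 f p) (v : EuclideanSpace ℝ (Fin n)) :
    lap (fun q => fderiv ℝ f q v) p = fderiv ℝ (lap f) p v := by
  have h_two (q) (hq : ContDiffAt ℝ 3 f q) : ContDiffAt ℝ 2 f q := hq.of_le (by norm_cast)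
  have h_comm (i : Fin n) :
      (fun q => fderiv ℝ (fun r => fderiv ℝ f r v) q (EuclideanSpace.single i 1)) =ᶠ[𝓝 p]
        fun q => fderiv ℝ (fun r => fderiv ℝ f r (EuclideanSpace.single i 1)) q v :=
    (hf.eventually (by simp)).mono fun q hq => fderiv_fderiv_apply_comm (h_two q hq)
  have h_first (i : Fin n) : ContDiffAt ℝ 2 (fun r => fderiv ℝ f r (EuclideanSpace.single i 1)) p :=
    contDiffAt_fderiv_apply hf _
  have h_second (i : Fin n) : DifferentiableAt ℝ (fun q => fderiv ℝ
      (fun r => fderiv ℝ f r (EuclideanSpace.single i 1)) q (EuclideanSpace.single i 1)) p :=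
    (contDiffAt_fderiv_apply (n := 1) (h_first i) _).differentiableAt one_ne_zero
  unfold lap
  rw [fderiv_fun_sum fun i _ => h_second i, _root_.sum_apply]
  refine Finset.sum_congr rfl fun i _ => ?_
  rw [(h_comm i).fderiv_eq, fderiv_fderiv_apply_comm (h_first i)]

variable {Ω : Set (EuclideanSpace ℝ (Fin n))} {v H : EuclideanSpace ℝ (Fin n) → ℝ} {μ M : ℝ}

theorem le_mul_of_le_mul_on_frontier (hΩ : IsOpen Ω) (hΩb : Bornology.IsBounded Ω)
    (hv : ContinuousOn v (closure Ω)) (hH : ContinuousOn H (closure Ω))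
    (hv2 : ∀ p ∈ Ω, ContDiffAt ℝ 2 v p) (hH2 : ∀ p ∈ Ω, ContDiffAt ℝ 2 H p)
    (hH_pos : ∀ p ∈ closure Ω, 0 < H p) (hv_lap : ∀ p ∈ Ω, -(μ * v p) ≤ lap v p)
    (hH_lap : ∀ p ∈ Ω, lap H p < -(μ * H p)) (hM : 0 ≤ M)
    (h_frontier : ∀ p ∈ frontier Ω, v p ≤ M * H p) : ∀ p ∈ Ω, v p ≤ M * H p := by
  intro q hq
  obtain ⟨p, hp, hmax⟩ := hΩb.isCompact_closure.exists_isMaxOn ⟨q, subset_closure hq⟩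
    (hv.div hH fun p hp => (hH_pos p hp).ne')
  set m := v p / H p with hm
  have hvp : v p = m * H p := by rw [hm, div_mul_cancel₀ _ (hH_pos p hp).ne']
  have hv_le : ∀ r ∈ closure Ω, v r ≤ m * H r := fun r hr => (div_le_iff₀ (hH_pos r hr)).1 (hmax hr)
  suffices hmM : m ≤ M from
    (hv_le q (subset_closure hq)).trans
      (mul_le_mul_of_nonneg_right hmM (hH_pos q (subset_closure hq)).le)
  by_contra! hMm
  by_cases hpΩ : p ∈ Ω
  · have h_localMax : IsLocalMax (fun r => v r - m * H r) p := by
      filter_upwards [hΩ.mem_nhds hpΩ] with r hr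
      linarith [hv_le r (subset_closure hr)]
    have h_lap := lap_nonpos_of_isLocalMax ((hv2 p hpΩ).sub (contDiffAt_const.mul (hH2 p hpΩ)))
      h_localMax
    rw [lap_sub_const_mul (hv2 p hpΩ) (hH2 p hpΩ)] at h_lap
    have hv_lap_p := hv_lap p hpΩ
    rw [hvp] at hv_lap_p
    nlinarith [mul_lt_mul_of_pos_left (hH_lap p hpΩ) (hM.trans_lt hMm)]
  · have h_le := h_frontier p ⟨hp, by rwa [hΩ.interior_eq]⟩
    rw [hvp] at h_le
    exact hMm.not_ge (le_of_mul_le_mul_right h_le (hH_pos p hp))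

theorem lap_cos_const_mul_apply (k : ℝ) (i : Fin n) (p : EuclideanSpace ℝ (Fin n)) :
    lap (fun q => Real.cos (k * q i)) p = -(k ^ 2 * Real.cos (k * p i)) := by
  have h_coord (q : EuclideanSpace ℝ (Fin n)) : HasFDerivAt (fun r => k * r i)
      (k • EuclideanSpace.proj i : EuclideanSpace ℝ (Fin n) →L[ℝ] ℝ) q :=
    (EuclideanSpace.proj i : EuclideanSpace ℝ (Fin n) →L[ℝ] ℝ).hasFDerivAt.const_mul k
  have h_first (j : Fin n) : (fun q => fderiv ℝ (fun r => Real.cos (k * r i)) q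
      (EuclideanSpace.single j 1)) = fun q => -(if i = j then k else 0) * Real.sin (k * q i) := by
    funext q
    rw [(h_coord q).cos.fderiv]
    simp [mul_comm]
  unfold lap
  simp only [h_first]
  have h_second (j : Fin n) : fderiv ℝ (fun q => -(if i = j then k else 0) * Real.sin (k * q i)) p
      (EuclideanSpace.single j 1) = if i = j then -(k ^ 2 * Real.cos (k * p i)) else 0 := by
    rw [((h_coord p).sin.const_mul _).fderiv]
    split_ifs with hij <;> simp [hij]
    ring
  simp only [h_second, Finset.sum_ite_eq, Finset.mem_univ, if_true]

/-- The barrier is `cos (k pᵢ)`, which stays above `1 / 2` in the slab `|pᵢ| ≤ ε`. -/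
theorem le_two_mul_of_le_on_frontier_of_abs_apply_le {k ε K : ℝ} (i : Fin n) (hΩ : IsOpen Ω)
    (hΩb : Bornology.IsBounded Ω) (hΩ_slab : ∀ p ∈ closure Ω, |p i| ≤ ε)
    (hv : ContinuousOn v (closure Ω)) (hv2 : ∀ p ∈ Ω, ContDiffAt ℝ 2 v p)
    (hv_lap : ∀ p ∈ Ω, -(μ * v p) ≤ lap v p) (hμk : μ < k ^ 2) (hk : 0 ≤ k) (hkε : k * ε ≤ 1)
    (hK : 0 ≤ K) (h_frontier : ∀ p ∈ frontier Ω, v p ≤ K) : ∀ p ∈ Ω, v p ≤ 2 * K := by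
  have h_smooth : ContDiff ℝ 2 fun p : EuclideanSpace ℝ (Fin n) => Real.cos (k * p i) := by fun_prop
  have h_half : ∀ p ∈ closure Ω, 1 / 2 ≤ Real.cos (k * p i) := by
    intro p hp
    have h_abs : |k * p i| ≤ 1 := by
      rw [abs_mul, abs_of_nonneg hk]
      exact (mul_le_mul_of_nonneg_left (hΩ_slab p hp) hk).trans hkε
    linarith [Real.one_sub_sq_div_two_le_cos (x := k * p i), (sq_le_one_iff_abs_le_one _).2 h_abs]
  have h_compare := le_mul_of_le_mul_on_frontier (μ := μ) (M := 2 * K) hΩ hΩb hv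
    h_smooth.continuous.continuousOn hv2 (fun p _ => h_smooth.contDiffAt)
    (fun p hp => by linarith [h_half p hp]) hv_lap
    (fun p hp => by
      rw [lap_cos_const_mul_apply]
      nlinarith [h_half p (subset_closure hp)]) (by positivity)
    (fun p hp => by nlinarith [h_frontier p hp, h_half p hp.1])
  exact fun p hp => (h_compare p hp).trans
    (mul_le_of_le_one_right (by positivity) (Real.cos_le_one _))

end MaximumPrinciple

local notation "ℝ²" => EuclideanSpace ℝ (Fin 2)

section Plane

@[simp] theorem mk2_apply_zero (x y : ℝ) : mk2 x y 0 = x := rfl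

@[simp] theorem mk2_apply_one (x y : ℝ) : mk2 x y 1 = y := rfl

theorem mk2_apply_zero_apply_one (p : ℝ²) : mk2 (p 0) (p 1) = p := by
  ext i
  fin_cases i <;> rfl

theorem smul_mk2_add_smul_mk2 (a b x y x' y' : ℝ) :
    a • mk2 x y + b • mk2 x' y' = mk2 (a * x + b * x') (a * y + b * y') := by
  ext i
  fin_cases i <;> rfl

theorem mk2_sub_mk2 (x y x' y' : ℝ) : mk2 x y - mk2 x' y' = mk2 (x - x') (y - y') := by
  ext i
  fin_cases i <;> rfl

theorem inner_mk2_right (p : ℝ²) (x y : ℝ) : ⟪p, mk2 x y⟫ = p 0 * x + p 1 * y := by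
  rw [PiLp.inner_apply, Fin.sum_univ_two]
  simp [mul_comm]

theorem norm_mk2_le (x y : ℝ) : ‖mk2 x y‖ ≤ |x| + |y| := by
  rw [EuclideanSpace.norm_eq, Fin.sum_univ_two]
  exact Real.sqrt_le_iff.2 ⟨by positivity, by
    simp only [mk2_apply_zero, mk2_apply_one, Real.norm_eq_abs]
    nlinarith [abs_nonneg x, abs_nonneg y]⟩

theorem measurePreserving_mk2 : MeasurePreserving fun z : ℝ × ℝ => mk2 z.1 z.2 := by
  have h_comp : (fun z : ℝ × ℝ => mk2 z.1 z.2) =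
      ⇑(MeasurableEquiv.toLp 2 (Fin 2 → ℝ)).symm.symm ∘ ⇑MeasurableEquiv.finTwoArrow.symm := by
    funext z
    ext i
    fin_cases i <;> rfl
  rw [h_comp]
  exact (EuclideanSpace.volume_preserving_symm_measurableEquiv_toLp (Fin 2)).symm.comp
    (volume_preserving_finTwoArrow ℝ).symm

theorem measurableEmbedding_mk2 : MeasurableEmbedding fun z : ℝ × ℝ => mk2 z.1 z.2 := by
  convert (MeasurableEquiv.finTwoArrow.symm.trans
    (MeasurableEquiv.toLp 2 (Fin 2 → ℝ))).measurableEmbedding using 1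
  funext z
  ext i
  fin_cases i <;> rfl

theorem continuous_mk2 : Continuous fun z : ℝ × ℝ => mk2 z.1 z.2 :=
  (EuclideanSpace.equiv (Fin 2) ℝ).symm.continuous.comp (by
    refine continuous_pi fun i => ?_
    fin_cases i
    exacts [continuous_fst, continuous_snd])

theorem continuous_mk2_right (x : ℝ) : Continuous (mk2 x) :=
  continuous_mk2.comp (Continuous.prodMk_right x)

theorem integrable_and_setIntegral_eq_integral_integral_cross2 {Ω : Set ℝ²} {f : ℝ² → ℝ}
    (hΩ : MeasurableSet Ω) (hf : IntegrableOn f Ω) :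
    Integrable (fun x => ∫ y in cross2 Ω x, f (mk2 x y)) ∧
      ∫ p in Ω, f p = ∫ x, ∫ y in cross2 Ω x, f (mk2 x y) := by
  have hΩ' : MeasurableSet ((fun z : ℝ × ℝ => mk2 z.1 z.2) ⁻¹' Ω) := continuous_mk2.measurable hΩ
  have h_int : IntegrableOn (fun z : ℝ × ℝ => f (mk2 z.1 z.2))
      ((fun z : ℝ × ℝ => mk2 z.1 z.2) ⁻¹' Ω) :=
    (measurePreserving_mk2.integrableOn_comp_preimage measurableEmbedding_mk2).2 hf
  rw [← integrable_indicator_iff hΩ', Measure.volume_eq_prod] at h_int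
  have h_fibre (x : ℝ) : ∫ y, ((fun z : ℝ × ℝ => mk2 z.1 z.2) ⁻¹' Ω).indicator
      (fun z => f (mk2 z.1 z.2)) (x, y) = ∫ y in cross2 Ω x, f (mk2 x y) :=
    integral_indicator ((continuous_mk2_right x).measurable hΩ)
  simp only [← h_fibre]
  refine ⟨h_int.integral_prod_left, ?_⟩
  rw [← measurePreserving_mk2.setIntegral_preimage_emb measurableEmbedding_mk2 f Ω,
    ← integral_indicator hΩ', Measure.volume_eq_prod, integral_prod _ h_int]

/-- The part of a planar set whose points have first coordinate in `s`. -/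
def slab (Ω : Set ℝ²) (s : Set ℝ) : Set ℝ² := Ω ∩ {p | p 0 ∈ s}

theorem slab_subset (Ω : Set ℝ²) (s : Set ℝ) : slab Ω s ⊆ Ω := inter_subset_left

theorem slab_mono (Ω : Set ℝ²) {s t : Set ℝ} (hst : s ⊆ t) : slab Ω s ⊆ slab Ω t :=
  inter_subset_inter_right _ fun _ hp => hst hp

theorem measurableSet_slab {Ω : Set ℝ²} {s : Set ℝ} (hΩ : MeasurableSet Ω) (hs : MeasurableSet s) :
    MeasurableSet (slab Ω s) :=
  hΩ.inter ((EuclideanSpace.proj (𝕜 := ℝ) (0 : Fin 2)).continuous.measurable hs)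

theorem setIntegral_slab_union {Ω : Set ℝ²} {s t : Set ℝ} {f : ℝ² → ℝ} (hΩ : MeasurableSet Ω)
    (hf : IntegrableOn f Ω) (hst : Disjoint s t) (ht : MeasurableSet t) :
    ∫ p in slab Ω (s ∪ t), f p = (∫ p in slab Ω s, f p) + ∫ p in slab Ω t, f p := by
  rw [← setIntegral_union _ (measurableSet_slab hΩ ht) (hf.mono_set (slab_subset Ω s))
    (hf.mono_set (slab_subset Ω t)), slab, slab, slab, ← inter_union_distrib_left]
  · rfl
  · exact disjoint_left.2 fun _ hp hp' => disjoint_left.1 hst hp.2 hp'.2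

theorem setIntegral_slab {Ω : Set ℝ²} {s : Set ℝ} {f : ℝ² → ℝ} (hΩ : MeasurableSet Ω)
    (hs : MeasurableSet s) (hf : IntegrableOn f Ω) :
    ∫ p in slab Ω s, f p = ∫ x in s, ∫ y in cross2 Ω x, f (mk2 x y) := by
  rw [(integrable_and_setIntegral_eq_integral_integral_cross2 (measurableSet_slab hΩ hs)
    (hf.mono_set (slab_subset Ω s))).2, ← integral_indicator hs]
  refine integral_congr_ae (ae_of_all _ fun x => ?_)
  by_cases hx : x ∈ s
  · rw [indicator_of_mem hx]
    have h_eq : cross2 (slab Ω s) x = cross2 Ω x := by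
      ext y
      simp [slab, cross2, hx]
    simp only [h_eq]
  · rw [indicator_of_notMem hx]
    have h_empty : cross2 (slab Ω s) x = ∅ := by
      ext y
      simp [slab, cross2, hx]
    simp only [h_empty, setIntegral_empty]

theorem ubar2_congr {Ω : Set ℝ²} {f g : ℝ² → ℝ} {x : ℝ} (hΩ : MeasurableSet Ω)
    (hfg : ∀ p ∈ Ω, p 0 = x → f p = g p) : ubar2 Ω f x = ubar2 Ω g x := by
  have h_cross : MeasurableSet (cross2 Ω x) := (continuous_mk2_right x).measurable hΩ
  rw [ubar2, ubar2, setIntegral_congr_fun h_cross fun y hy => hfg (mk2 x y) hy rfl]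

theorem ubar2_const_mul (Ω : Set ℝ²) (f : ℝ² → ℝ) (c x : ℝ) :
    ubar2 Ω (fun p => c * f p) x = c * ubar2 Ω f x := by
  rw [ubar2, integral_const_mul, mul_div_assoc, ubar2]

end Plane

/-- The planar convex domains of the theorem: bounded, contained in `(0, 1) × (-ε, ε)`, and with a
nonempty cross-section over every point of `(0, 1)`. -/
structure ThinConvexDomain (Ω : Set ℝ²) (ε : ℝ) : Prop extends IsBoundedConvexDomain Ω where
  apply_zero_mem : ∀ p ∈ Ω, p 0 ∈ Ioo (0 : ℝ) 1
  abs_apply_one_lt : ∀ p ∈ Ω, |p 1| < ε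
  nonempty_cross2 : ∀ x ∈ Ioo (0 : ℝ) 1, (cross2 Ω x).Nonempty

/-- The lower end of the cross-section of `Ω` over `x`. -/
def lowerBoundary (Ω : Set ℝ²) (x : ℝ) : ℝ := sInf (cross2 Ω x)

/-- The upper end of the cross-section of `Ω` over `x`. -/
def upperBoundary (Ω : Set ℝ²) (x : ℝ) : ℝ := sSup (cross2 Ω x)

/-- The point of the closed vertical fibre of `Ω` over `x` that divides it in the ratio
`t : (1 - t)`. As `t` runs through `(0, 1)`, these points move through the open fibre. -/
def fibrePoint (Ω : Set ℝ²) (x t : ℝ) : ℝ² :=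
  mk2 x ((1 - t) * lowerBoundary Ω x + t * upperBoundary Ω x)

namespace ThinConvexDomain

variable {Ω : Set ℝ²} {ε x y t : ℝ}

theorem pos (hΩ : ThinConvexDomain Ω ε) : 0 < ε :=
  hΩ.nonempty.elim fun p hp => (abs_nonneg _).trans_lt (hΩ.abs_apply_one_lt p hp)

theorem cross2_subset_Ioo (hΩ : ThinConvexDomain Ω ε) (x : ℝ) : cross2 Ω x ⊆ Ioo (-ε) ε :=
  fun y hy => abs_lt.1 (hΩ.abs_apply_one_lt (mk2 x y) hy)

theorem bddAbove_cross2 (hΩ : ThinConvexDomain Ω ε) (x : ℝ) : BddAbove (cross2 Ω x) :=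
  bddAbove_Ioo.mono (hΩ.cross2_subset_Ioo x)

theorem bddBelow_cross2 (hΩ : ThinConvexDomain Ω ε) (x : ℝ) : BddBelow (cross2 Ω x) :=
  bddBelow_Ioo.mono (hΩ.cross2_subset_Ioo x)

theorem isOpen_cross2 (hΩ : ThinConvexDomain Ω ε) (x : ℝ) : IsOpen (cross2 Ω x) :=
  hΩ.isOpen.preimage (continuous_mk2_right x)

theorem combo_mem (hΩ : ThinConvexDomain Ω ε) {a b x' y' : ℝ} (hy : mk2 x y ∈ Ω)
    (hy' : mk2 x' y' ∈ Ω) (ha : 0 ≤ a) (hb : 0 ≤ b) (hab : a + b = 1) :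
    mk2 (a * x + b * x') (a * y + b * y') ∈ Ω := by
  rw [← smul_mk2_add_smul_mk2]
  exact hΩ.convex hy hy' ha hb hab

theorem convex_cross2 (hΩ : ThinConvexDomain Ω ε) (x : ℝ) : Convex ℝ (cross2 Ω x) := by
  intro y hy z hz a b ha hb hab
  have h_mem := hΩ.combo_mem hy hz ha hb hab
  rwa [← add_mul, hab, one_mul] at h_mem

theorem cross2_eq_Ioo (hΩ : ThinConvexDomain Ω ε) (hx : x ∈ Ioo (0 : ℝ) 1) :
    cross2 Ω x = Ioo (lowerBoundary Ω x) (upperBoundary Ω x) := by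
  refine Subset.antisymm ?_ (IsConnected.Ioo_csInf_csSup_subset
    ⟨hΩ.nonempty_cross2 x hx, (hΩ.convex_cross2 x).isPreconnected⟩
    (hΩ.bddBelow_cross2 x) (hΩ.bddAbove_cross2 x))
  rw [← (hΩ.isOpen_cross2 x).interior_eq, ← interior_Icc]
  exact interior_mono (subset_Icc_csInf_csSup (hΩ.bddBelow_cross2 x) (hΩ.bddAbove_cross2 x))

theorem mk2_mem_iff (hΩ : ThinConvexDomain Ω ε) (hx : x ∈ Ioo (0 : ℝ) 1) :
    mk2 x y ∈ Ω ↔ y ∈ Ioo (lowerBoundary Ω x) (upperBoundary Ω x) := by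
  rw [← hΩ.cross2_eq_Ioo hx]
  rfl

theorem lowerBoundary_lt_upperBoundary (hΩ : ThinConvexDomain Ω ε) (hx : x ∈ Ioo (0 : ℝ) 1) :
    lowerBoundary Ω x < upperBoundary Ω x := by
  obtain ⟨y, hy⟩ := hΩ.nonempty_cross2 x hx
  rw [hΩ.cross2_eq_Ioo hx] at hy
  exact hy.1.trans hy.2

theorem neg_le_lowerBoundary (hΩ : ThinConvexDomain Ω ε) (hx : x ∈ Ioo (0 : ℝ) 1) :
    -ε ≤ lowerBoundary Ω x :=
  le_csInf (hΩ.nonempty_cross2 x hx) fun _ hy => (hΩ.cross2_subset_Ioo x hy).1.le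

theorem upperBoundary_le (hΩ : ThinConvexDomain Ω ε) (hx : x ∈ Ioo (0 : ℝ) 1) :
    upperBoundary Ω x ≤ ε :=
  csSup_le (hΩ.nonempty_cross2 x hx) fun _ hy => (hΩ.cross2_subset_Ioo x hy).2.le

theorem abs_lowerBoundary_le (hΩ : ThinConvexDomain Ω ε) (hx : x ∈ Ioo (0 : ℝ) 1) :
    |lowerBoundary Ω x| ≤ ε :=
  abs_le.2 ⟨hΩ.neg_le_lowerBoundary hx,
    (hΩ.lowerBoundary_lt_upperBoundary hx).le.trans (hΩ.upperBoundary_le hx)⟩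

theorem abs_upperBoundary_le (hΩ : ThinConvexDomain Ω ε) (hx : x ∈ Ioo (0 : ℝ) 1) :
    |upperBoundary Ω x| ≤ ε :=
  abs_le.2 ⟨(hΩ.neg_le_lowerBoundary hx).trans (hΩ.lowerBoundary_lt_upperBoundary hx).le,
    hΩ.upperBoundary_le hx⟩

theorem ωvol2_eq (hΩ : ThinConvexDomain Ω ε) (hx : x ∈ Ioo (0 : ℝ) 1) :
    ωvol2 Ω x = upperBoundary Ω x - lowerBoundary Ω x := by
  rw [ωvol2, hΩ.cross2_eq_Ioo hx, Real.volume_Ioo,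
    ENNReal.toReal_ofReal (sub_nonneg.2 (hΩ.lowerBoundary_lt_upperBoundary hx).le)]

theorem ωvol2_pos (hΩ : ThinConvexDomain Ω ε) (hx : x ∈ Ioo (0 : ℝ) 1) : 0 < ωvol2 Ω x := by
  rw [hΩ.ωvol2_eq hx]
  exact sub_pos.2 (hΩ.lowerBoundary_lt_upperBoundary hx)

theorem convexOn_lowerBoundary (hΩ : ThinConvexDomain Ω ε) :
    ConvexOn ℝ (Ioo 0 1) (lowerBoundary Ω) := by
  refine ⟨convex_Ioo 0 1, fun x hx x' hx' a b ha hb hab => le_of_forall_pos_lt_add fun e he => ?_⟩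
  obtain ⟨y, hy, hye⟩ := exists_lt_of_csInf_lt (hΩ.nonempty_cross2 x hx)
    (lt_add_of_pos_right (lowerBoundary Ω x) he)
  obtain ⟨y', hy', hye'⟩ := exists_lt_of_csInf_lt (hΩ.nonempty_cross2 x' hx')
    (lt_add_of_pos_right (lowerBoundary Ω x') he)
  have h_lt := ((hΩ.mk2_mem_iff (convex_Ioo (0 : ℝ) 1 hx hx' ha hb hab)).1
    (hΩ.combo_mem hy hy' ha hb hab)).1
  calc lowerBoundary Ω (a • x + b • x') < a * y + b * y' := h_lt
    _ ≤ a * (lowerBoundary Ω x + e) + b * (lowerBoundary Ω x' + e) := by gcongr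
    _ = a • lowerBoundary Ω x + b • lowerBoundary Ω x' + e := by
      simp only [smul_eq_mul]
      linear_combination e * hab

theorem concaveOn_upperBoundary (hΩ : ThinConvexDomain Ω ε) :
    ConcaveOn ℝ (Ioo 0 1) (upperBoundary Ω) := by
  refine ⟨convex_Ioo 0 1, fun x hx x' hx' a b ha hb hab => le_of_forall_pos_lt_add fun e he => ?_⟩
  obtain ⟨y, hy, hye⟩ := exists_lt_of_lt_csSup (hΩ.nonempty_cross2 x hx)
    (sub_lt_self (upperBoundary Ω x) he)
  obtain ⟨y', hy', hye'⟩ := exists_lt_of_lt_csSup (hΩ.nonempty_cross2 x' hx')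
    (sub_lt_self (upperBoundary Ω x') he)
  have h_lt := ((hΩ.mk2_mem_iff (convex_Ioo (0 : ℝ) 1 hx hx' ha hb hab)).1
    (hΩ.combo_mem hy hy' ha hb hab)).2
  calc a • upperBoundary Ω x + b • upperBoundary Ω x'
      = a * (upperBoundary Ω x - e) + b * (upperBoundary Ω x' - e) + e := by
        simp only [smul_eq_mul]
        linear_combination e * hab
    _ ≤ a * y + b * y' + e := by gcongr
    _ < upperBoundary Ω (a • x + b • x') + e := by gcongr

theorem concaveOn_ωvol2 (hΩ : ThinConvexDomain Ω ε) : ConcaveOn ℝ (Ioo 0 1) (ωvol2 Ω) :=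
  (hΩ.concaveOn_upperBoundary.sub hΩ.convexOn_lowerBoundary).congr fun _ hx =>
    (hΩ.ωvol2_eq hx).symm

theorem continuousOn_lowerBoundary (hΩ : ThinConvexDomain Ω ε) :
    ContinuousOn (lowerBoundary Ω) (Ioo 0 1) :=
  hΩ.convexOn_lowerBoundary.continuousOn isOpen_Ioo

theorem continuousOn_upperBoundary (hΩ : ThinConvexDomain Ω ε) :
    ContinuousOn (upperBoundary Ω) (Ioo 0 1) :=
  hΩ.concaveOn_upperBoundary.continuousOn isOpen_Ioo

theorem continuousOn_ωvol2 (hΩ : ThinConvexDomain Ω ε) : ContinuousOn (ωvol2 Ω) (Ioo 0 1) :=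
  hΩ.concaveOn_ωvol2.continuousOn isOpen_Ioo

theorem half_min_mul_ωvol2_le (hΩ : ThinConvexDomain Ω ε) (hx : x ∈ Ioo (0 : ℝ) 1)
    (hy : y ∈ Ioo (0 : ℝ) 1) : min x (1 - x) / 2 * ωvol2 Ω y ≤ ωvol2 Ω x :=
  half_min_mul_le_of_concaveOn hΩ.concaveOn_ωvol2 (fun _ _ => ENNReal.toReal_nonneg) hx hy

theorem fibrePoint_mem (hΩ : ThinConvexDomain Ω ε) (hx : x ∈ Ioo (0 : ℝ) 1)
    (ht : t ∈ Ioo (0 : ℝ) 1) : fibrePoint Ω x t ∈ Ω := by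
  have h_lt := hΩ.lowerBoundary_lt_upperBoundary hx
  rw [fibrePoint, hΩ.mk2_mem_iff hx]
  constructor <;> nlinarith [ht.1, ht.2]

theorem continuous_fibrePoint (Ω : Set ℝ²) (x : ℝ) : Continuous (fibrePoint Ω x) :=
  (continuous_mk2_right x).comp (by fun_prop)

theorem fibrePoint_mem_closure (hΩ : ThinConvexDomain Ω ε) (hx : x ∈ Ioo (0 : ℝ) 1)
    (ht : t ∈ Icc (0 : ℝ) 1) : fibrePoint Ω x t ∈ closure Ω := by
  rw [← closure_Ioo zero_ne_one] at ht
  exact map_mem_closure (continuous_fibrePoint Ω x) ht fun s hs => hΩ.fibrePoint_mem hx hs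

theorem continuousAt_fibrePoint_left (hΩ : ThinConvexDomain Ω ε) (hx : x ∈ Ioo (0 : ℝ) 1)
    (t : ℝ) : ContinuousAt (fun x => fibrePoint Ω x t) x := by
  have h_lower := hΩ.continuousOn_lowerBoundary.continuousAt (isOpen_Ioo.mem_nhds hx)
  have h_upper := hΩ.continuousOn_upperBoundary.continuousAt (isOpen_Ioo.mem_nhds hx)
  exact continuous_mk2.continuousAt.comp (f := fun x => (x, _)) (by fun_prop)

end ThinConvexDomain

/-! ### Averages over vertical fibres -/

namespace ThinConvexDomain

variable {Ω : Set ℝ²} {ε x m M : ℝ} {f g : ℝ² → ℝ}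

theorem ubar2_eq_intervalIntegral (hΩ : ThinConvexDomain Ω ε) (f : ℝ² → ℝ)
    (hx : x ∈ Ioo (0 : ℝ) 1) : ubar2 Ω f x = ∫ t in (0 : ℝ)..1, f (fibrePoint Ω x t) := by
  have h_lt := hΩ.lowerBoundary_lt_upperBoundary hx
  have h_param (t : ℝ) : fibrePoint Ω x t =
      mk2 x (lowerBoundary Ω x + (upperBoundary Ω x - lowerBoundary Ω x) * t) := by
    rw [fibrePoint]
    ring_nf
  simp only [h_param]
  rw [intervalIntegral.integral_comp_add_mul (fun y => f (mk2 x y)) (sub_pos.2 h_lt).ne', ubar2,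
    hΩ.ωvol2_eq hx, hΩ.cross2_eq_Ioo hx, ← integral_Ioc_eq_integral_Ioo,
    ← intervalIntegral.integral_of_le h_lt.le, smul_eq_mul, inv_mul_eq_div]
  simp

theorem intervalIntegrable_comp_fibrePoint (hΩ : ThinConvexDomain Ω ε)
    (hf : ContinuousOn f (closure Ω)) (hx : x ∈ Ioo (0 : ℝ) 1) :
    IntervalIntegrable (fun t => f (fibrePoint Ω x t)) volume 0 1 := by
  refine ContinuousOn.intervalIntegrable ?_
  rw [uIcc_of_le zero_le_one]
  exact hf.comp (continuous_fibrePoint Ω x).continuousOn fun t ht => hΩ.fibrePoint_mem_closure hx ht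

theorem ubar2_mono (hΩ : ThinConvexDomain Ω ε) (hf : ContinuousOn f (closure Ω))
    (hg : ContinuousOn g (closure Ω)) (hx : x ∈ Ioo (0 : ℝ) 1)
    (hfg : ∀ p ∈ Ω, p 0 = x → f p ≤ g p) : ubar2 Ω f x ≤ ubar2 Ω g x := by
  rw [hΩ.ubar2_eq_intervalIntegral f hx, hΩ.ubar2_eq_intervalIntegral g hx]
  exact intervalIntegral.integral_mono_on_of_le_Ioo zero_le_one
    (hΩ.intervalIntegrable_comp_fibrePoint hf hx) (hΩ.intervalIntegrable_comp_fibrePoint hg hx)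
    fun t ht => hfg _ (hΩ.fibrePoint_mem hx ht) rfl

theorem ubar2_const (hΩ : ThinConvexDomain Ω ε) (c : ℝ) (hx : x ∈ Ioo (0 : ℝ) 1) :
    ubar2 Ω (fun _ => c) x = c := by
  simp [hΩ.ubar2_eq_intervalIntegral _ hx]

theorem ubar2_le (hΩ : ThinConvexDomain Ω ε) (hf : ContinuousOn f (closure Ω))
    (hx : x ∈ Ioo (0 : ℝ) 1) (hM : ∀ p ∈ Ω, p 0 = x → f p ≤ M) : ubar2 Ω f x ≤ M :=
  (hΩ.ubar2_mono hf continuousOn_const hx hM).trans_eq (hΩ.ubar2_const M hx)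

theorem le_ubar2 (hΩ : ThinConvexDomain Ω ε) (hf : ContinuousOn f (closure Ω))
    (hx : x ∈ Ioo (0 : ℝ) 1) (hm : ∀ p ∈ Ω, p 0 = x → m ≤ f p) : m ≤ ubar2 Ω f x :=
  (hΩ.ubar2_const m hx).symm.trans_le (hΩ.ubar2_mono continuousOn_const hf hx hm)

theorem abs_sub_ubar2_le_of_forall (hΩ : ThinConvexDomain Ω ε) (hf : ContinuousOn f (closure Ω))
    (hx : x ∈ Ioo (0 : ℝ) 1) (hM : ∀ p ∈ Ω, p 0 = x → |m - f p| ≤ M) : |m - ubar2 Ω f x| ≤ M :=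
  abs_sub_le_iff.2
    ⟨sub_le_comm.1 (hΩ.le_ubar2 hf hx fun p hp hpx => by linarith [(abs_le.1 (hM p hp hpx)).2]),
      sub_le_iff_le_add.2 (hΩ.ubar2_le hf hx fun p hp hpx => by
        linarith [(abs_le.1 (hM p hp hpx)).1])⟩

theorem exists_abs_le_of_continuousOn (hΩ : ThinConvexDomain Ω ε)
    (hf : ContinuousOn f (closure Ω)) : ∃ M, ∀ p ∈ closure Ω, |f p| ≤ M :=
  hΩ.isBounded.isCompact_closure.exists_bound_of_continuousOn hf

theorem continuousOn_ubar2 (hΩ : ThinConvexDomain Ω ε) (hf : ContinuousOn f (closure Ω)) :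
    ContinuousOn (ubar2 Ω f) (Ioo 0 1) := by
  refine ContinuousOn.congr (fun x hx => ?_) fun x hx => hΩ.ubar2_eq_intervalIntegral f hx
  obtain ⟨M, hM⟩ := hΩ.exists_abs_le_of_continuousOn hf
  have h_near : ∀ᶠ z in 𝓝 x, z ∈ Ioo (0 : ℝ) 1 := isOpen_Ioo.mem_nhds hx
  have h_Icc {t : ℝ} (ht : t ∈ uIoc (0 : ℝ) 1) : t ∈ Icc (0 : ℝ) 1 :=
    Ioc_subset_Icc_self (uIoc_of_le (zero_le_one (α := ℝ)) ▸ ht)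
  refine ContinuousAt.continuousWithinAt (intervalIntegral.continuousAt_of_dominated_interval
    (bound := fun _ => M) ?_ ?_ intervalIntegrable_const ?_)
  · filter_upwards [h_near] with z hz
    exact (hΩ.intervalIntegrable_comp_fibrePoint hf hz).aestronglyMeasurable_restrict_uIoc
  · filter_upwards [h_near] with z hz
    exact ae_of_all _ fun t ht => hM _ (hΩ.fibrePoint_mem_closure hz (h_Icc ht))
  · refine ae_of_all _ fun t ht => ?_
    exact (hf _ (hΩ.fibrePoint_mem_closure hx (h_Icc ht))).tendsto.comp
      (tendsto_nhdsWithin_iff.2 ⟨hΩ.continuousAt_fibrePoint_left hx t,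
        h_near.mono fun z hz => hΩ.fibrePoint_mem_closure hz (h_Icc ht)⟩)

end ThinConvexDomain

/-! ### The flux identity -/

theorem eqOn_zero_of_forall_intervalIntegral_contDiff_mul_eq_zero {H : ℝ → ℝ} {a b : ℝ}
    (hab : a ≤ b) (hH : ContinuousOn H (Ioo a b))
    (h_zero : ∀ φ : ℝ → ℝ, ContDiff ℝ (⊤ : ℕ∞) φ → ∫ x in a..b, φ x * H x = 0) :
    EqOn H 0 (Ioo a b) := by
  have h_ae : ∀ᵐ x, x ∈ Ioo a b → H x = 0 := by
    refine isOpen_Ioo.ae_eq_zero_of_integral_contDiff_smul_eq_zero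
      (hH.locallyIntegrableOn measurableSet_Ioo) fun φ hφ _ hφ_supp => ?_
    rw [← h_zero φ hφ, intervalIntegral.integral_of_le hab, integral_Ioc_eq_integral_Ioo]
    refine (setIntegral_eq_integral_of_forall_compl_eq_zero fun x hx => ?_).symm
    rw [image_eq_zero_of_notMem_tsupport fun hx' => hx (hφ_supp hx'), zero_smul]
  exact Measure.eqOn_open_of_ae_eq ((ae_restrict_iff' measurableSet_Ioo).2 h_ae) isOpen_Ioo hH
    continuousOn_const

section CoordinateFunctions

variable {ι : Type*} [Fintype ι] {Ω : Set (EuclideanSpace ℝ ι)} {u : EuclideanSpace ℝ ι → ℝ}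
  {μ : ℝ} {χ : ℝ → ℝ}

theorem smoothOnClosure_comp_apply (hχ : ContDiff ℝ (⊤ : ℕ∞) χ) (i : ι) :
    SmoothOnClosure Ω fun p => χ (p i) :=
  (hχ.comp (contDiff_piLp_apply (p := 2))).contDiffOn

theorem closureGrad_comp_apply [DecidableEq ι] (hΩ : IsBoundedConvexDomain Ω)
    (hχ : Differentiable ℝ χ) (i : ι) {p : EuclideanSpace ℝ ι} (hp : p ∈ closure Ω) :
    closureGrad Ω (fun q => χ (q i)) p = EuclideanSpace.single i (deriv χ (p i)) := by
  have h_proj : HasFDerivAt (fun q : EuclideanSpace ℝ ι => q i)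
      (EuclideanSpace.proj (𝕜 := ℝ) i) p :=
    (EuclideanSpace.proj (𝕜 := ℝ) i).hasFDerivAt
  have h_comp := ((hχ (p i)).hasDerivAt.comp_hasFDerivAt p h_proj).hasFDerivWithinAt
    (s := closure Ω)
  ext j
  rw [closureGrad, gradientWithin_apply, show (fun q : EuclideanSpace ℝ ι => χ (q i)) =
    χ ∘ fun q => q i from rfl, h_comp.fderivWithin (hΩ.uniqueDiffOn_closure p hp)]
  by_cases hij : i = j <;> simp [hij, eq_comm]

theorem IsFirstNeumannEigenfunction.setIntegral_deriv_comp_apply_mul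
    (hu : IsFirstNeumannEigenfunction Ω u μ) (hΩ : IsBoundedConvexDomain Ω)
    (hχ : ContDiff ℝ (⊤ : ℕ∞) χ) (i : ι) :
    ∫ p in Ω, deriv χ (p i) * closureGrad Ω u p i = μ * ∫ p in Ω, χ (p i) * u p := by
  classical
  simp only [mul_comm (χ _)]
  rw [← hu.dirichletForm_eq hΩ (smoothOnClosure_comp_apply hχ i), dirichletForm]
  refine setIntegral_congr_fun hΩ.isOpen.measurableSet fun p hp => ?_
  simp only [closureGrad_comp_apply hΩ (hχ.differentiable (by simp)) i (subset_closure hp),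
    EuclideanSpace.inner_single_right, conj_trivial]

end CoordinateFunctions

namespace ThinConvexDomain

variable {Ω : Set ℝ²} {ε μ x : ℝ} {f u : ℝ² → ℝ} {s : Set ℝ} {χ : ℝ → ℝ}

theorem measurableSet (hΩ : ThinConvexDomain Ω ε) : MeasurableSet Ω := hΩ.isOpen.measurableSet

theorem integrableOn (hΩ : ThinConvexDomain Ω ε) (hf : ContinuousOn f (closure Ω)) :
    IntegrableOn f Ω :=
  integrableOn_of_continuousOn_closure hΩ.isBounded hf

theorem integral_cross2_eq (hΩ : ThinConvexDomain Ω ε) (f : ℝ² → ℝ) (x : ℝ) :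
    ∫ y in cross2 Ω x, f (mk2 x y) = ωvol2 Ω x * ubar2 Ω f x := by
  by_cases hx : x ∈ Ioo (0 : ℝ) 1
  · rw [ubar2, mul_div_cancel₀ _ (hΩ.ωvol2_pos hx).ne']
  · have h_empty : cross2 Ω x = ∅ :=
      eq_empty_of_forall_notMem fun y hy => hx (hΩ.apply_zero_mem (mk2 x y) hy)
    simp [ωvol2, h_empty]

theorem integrable_ωvol2_mul_ubar2 (hΩ : ThinConvexDomain Ω ε)
    (hf : ContinuousOn f (closure Ω)) : Integrable fun x => ωvol2 Ω x * ubar2 Ω f x := by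
  simp only [← hΩ.integral_cross2_eq f]
  exact (integrable_and_setIntegral_eq_integral_integral_cross2 hΩ.measurableSet
    (hΩ.integrableOn hf)).1

theorem setIntegral_slab_eq (hΩ : ThinConvexDomain Ω ε) (hf : ContinuousOn f (closure Ω))
    (hs : MeasurableSet s) : ∫ p in slab Ω s, f p = ∫ x in s, ωvol2 Ω x * ubar2 Ω f x := by
  simp only [← hΩ.integral_cross2_eq f]
  exact setIntegral_slab hΩ.measurableSet hs (hΩ.integrableOn hf)

theorem slab_Iic_one (hΩ : ThinConvexDomain Ω ε) : slab Ω (Iic 1) = Ω :=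
  inter_eq_left.2 fun p hp => (hΩ.apply_zero_mem p hp).2.le

theorem slab_Iic_eq_empty (hΩ : ThinConvexDomain Ω ε) (hx : x ≤ 0) : slab Ω (Iic x) = ∅ :=
  eq_empty_of_forall_notMem fun p hp => (hp.2.trans hx).not_gt (hΩ.apply_zero_mem p hp.1).1

theorem setIntegral_slab_Iic_eq_intervalIntegral (hΩ : ThinConvexDomain Ω ε)
    (hf : ContinuousOn f (closure Ω)) (x : ℝ) :
    ∫ p in slab Ω (Iic x), f p = ∫ t in (0 : ℝ)..x, ωvol2 Ω t * ubar2 Ω f t := by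
  have h_int := hΩ.integrable_ωvol2_mul_ubar2 hf
  rw [← intervalIntegral.integral_Iic_sub_Iic h_int.integrableOn h_int.integrableOn,
    ← hΩ.setIntegral_slab_eq hf measurableSet_Iic, ← hΩ.setIntegral_slab_eq hf measurableSet_Iic,
    hΩ.slab_Iic_eq_empty le_rfl, setIntegral_empty, sub_zero]

theorem continuous_setIntegral_slab_Iic (hΩ : ThinConvexDomain Ω ε)
    (hf : ContinuousOn f (closure Ω)) : Continuous fun x => ∫ p in slab Ω (Iic x), f p := by
  simp only [hΩ.setIntegral_slab_Iic_eq_intervalIntegral hf]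
  exact intervalIntegral.continuous_primitive
    (fun _ _ => (hΩ.integrable_ωvol2_mul_ubar2 hf).intervalIntegrable) 0

theorem hasDerivAt_setIntegral_slab_Iic (hΩ : ThinConvexDomain Ω ε)
    (hf : ContinuousOn f (closure Ω)) (hx : x ∈ Ioo (0 : ℝ) 1) :
    HasDerivAt (fun x => ∫ p in slab Ω (Iic x), f p) (ωvol2 Ω x * ubar2 Ω f x) x := by
  have h_cont : ContinuousOn (fun x => ωvol2 Ω x * ubar2 Ω f x) (Ioo 0 1) :=
    hΩ.continuousOn_ωvol2.mul (hΩ.continuousOn_ubar2 hf)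
  simp only [hΩ.setIntegral_slab_Iic_eq_intervalIntegral hf]
  exact intervalIntegral.integral_hasDerivAt_right
    (hΩ.integrable_ωvol2_mul_ubar2 hf).intervalIntegrable
    (h_cont.stronglyMeasurableAtFilter isOpen_Ioo x hx)
    (h_cont.continuousAt (isOpen_Ioo.mem_nhds hx))

theorem setIntegral_comp_apply_zero_mul (hΩ : ThinConvexDomain Ω ε)
    (hf : ContinuousOn f (closure Ω)) (hχ : Continuous χ) :
    ∫ p in Ω, χ (p 0) * f p = ∫ x in (0 : ℝ)..1, χ x * (ωvol2 Ω x * ubar2 Ω f x) := by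
  have h_ubar (x : ℝ) : ubar2 Ω (fun p => χ (p 0) * f p) x = χ x * ubar2 Ω f x := by
    simp only [ubar2, mk2_apply_zero, integral_const_mul, mul_div_assoc]
  have h_cont : Continuous fun p : ℝ² => χ (p 0) := by fun_prop
  have h_slab := hΩ.setIntegral_slab_Iic_eq_intervalIntegral (h_cont.continuousOn.fun_mul hf) 1
  rw [hΩ.slab_Iic_one] at h_slab
  rw [h_slab]
  simp only [h_ubar, mul_left_comm (χ _)]

theorem setIntegral_comp_apply_zero_mul_eq_neg (hΩ : ThinConvexDomain Ω ε)
    (hf : ContinuousOn f (closure Ω)) (h_mean : ∫ p in Ω, f p = 0) (hχ : ContDiff ℝ 1 χ) :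
    ∫ p in Ω, χ (p 0) * f p = -∫ x in (0 : ℝ)..1, deriv χ x * ∫ p in slab Ω (Iic x), f p := by
  rw [hΩ.setIntegral_comp_apply_zero_mul hf hχ.continuous,
    intervalIntegral.integral_mul_deriv_eq_deriv_mul_of_hasDerivAt
      (v := fun x => ∫ p in slab Ω (Iic x), f p) hχ.continuous.continuousOn
      (hΩ.continuous_setIntegral_slab_Iic hf).continuousOn
      (fun x _ => (hχ.differentiable one_ne_zero x).hasDerivAt)
      (fun x hx => hΩ.hasDerivAt_setIntegral_slab_Iic hf (by simpa using hx))
      ((hχ.continuous_deriv le_rfl).intervalIntegrable _ _)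
      (hΩ.integrable_ωvol2_mul_ubar2 hf).intervalIntegrable,
    hΩ.slab_Iic_one, hΩ.slab_Iic_eq_empty le_rfl, h_mean, setIntegral_empty,
    mul_zero, mul_zero, sub_zero, zero_sub]

theorem continuousOn_closureGrad_apply (hΩ : ThinConvexDomain Ω ε) (hf : SmoothOnClosure Ω f)
    (i : Fin 2) : ContinuousOn (fun p => closureGrad Ω f p i) (closure Ω) :=
  (EuclideanSpace.proj (𝕜 := ℝ) i).continuous.comp_continuousOn
    (hΩ.toIsBoundedConvexDomain.continuousOn_closureGrad hf)

theorem ωvol2_mul_ubar2_closureGrad_zero (hΩ : ThinConvexDomain Ω ε)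
    (hu : IsFirstNeumannEigenfunction Ω u μ) (hx : x ∈ Ioo (0 : ℝ) 1) :
    ωvol2 Ω x * ubar2 Ω (fun p => closureGrad Ω u p 0) x = -(μ * ∫ p in slab Ω (Iic x), u p) := by
  have hu_cont := hu.smooth.continuousOn
  have hD_cont := hΩ.continuousOn_closureGrad_apply hu.smooth 0
  have hF_cont := hΩ.continuous_setIntegral_slab_Iic hu_cont
  refine eq_neg_of_add_eq_zero_left (eqOn_zero_of_forall_intervalIntegral_contDiff_mul_eq_zero
    (H := fun x => ωvol2 Ω x * ubar2 Ω (fun p => closureGrad Ω u p 0) x +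
      μ * ∫ p in slab Ω (Iic x), u p) zero_le_one
    ((hΩ.continuousOn_ωvol2.mul (hΩ.continuousOn_ubar2 hD_cont)).add
      (continuousOn_const.mul hF_cont.continuousOn)) (fun φ hφ => ?_) hx)
  let χ : ℝ → ℝ := fun x => ∫ s in (0 : ℝ)..x, φ s
  have hχ_deriv : deriv χ = φ := funext (hφ.continuous.deriv_integral φ 0)
  have hχ : ContDiff ℝ (⊤ : ℕ∞) χ := contDiff_infty_iff_deriv.2
    ⟨fun x => (hφ.continuous.integral_hasStrictDerivAt 0 x).hasDerivAt.differentiableAt,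
      hχ_deriv.symm ▸ hφ⟩
  have h_weak := hu.setIntegral_deriv_comp_apply_mul hΩ.toIsBoundedConvexDomain hχ 0
  rw [hΩ.setIntegral_comp_apply_zero_mul_eq_neg hu_cont hu.integral_eq_zero
    (hχ.of_le (by exact_mod_cast le_top)), hχ_deriv,
    hΩ.setIntegral_comp_apply_zero_mul hD_cont hφ.continuous] at h_weak
  have h_int := ((hΩ.integrable_ωvol2_mul_ubar2 hD_cont).intervalIntegrable
    (a := 0) (b := 1)).continuousOn_mul hφ.continuous.continuousOn
  simp only [mul_add, mul_left_comm _ μ]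
  rw [intervalIntegral.integral_add h_int
    (((hφ.continuous.fun_mul hF_cont).intervalIntegrable _ _).const_mul μ),
    intervalIntegral.integral_const_mul, h_weak]
  ring

end ThinConvexDomain

/-! ### Growth of the fibre averages -/

theorem IsBoundedConvexDomain.exists_forall_abs_sub_sub_inner_closureGrad_le {E : Type*}
    [NormedAddCommGroup E] [InnerProductSpace ℝ E] [FiniteDimensional ℝ E] {Ω : Set E} {f : E → ℝ}
    (hΩ : IsBoundedConvexDomain Ω) (hf : SmoothOnClosure Ω f) {κ : ℝ} (hκ : 0 < κ) :
    ∃ δ > 0, ∀ p ∈ closure Ω, ∀ q ∈ closure Ω, ‖q - p‖ < δ →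
      |f q - f p - ⟪closureGrad Ω f p, q - p⟫| ≤ κ * ‖q - p‖ := by
  have h_unif := hΩ.isBounded.isCompact_closure.uniformContinuousOn_of_continuous
    (ContDiffOn.continuousOn_fderivWithin hf hΩ.uniqueDiffOn_closure (by simp))
  obtain ⟨δ, hδ, h_close⟩ := Metric.uniformContinuousOn_iff.1 h_unif κ hκ
  refine ⟨δ, hδ, fun p hp q hq hpq => ?_⟩
  rw [closureGrad, inner_gradientWithin_left]
  refine (hΩ.convex.closure.inter (convex_ball p δ)).norm_image_sub_le_of_norm_hasFDerivWithin_le'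
    (f' := fderivWithin ℝ f (closure Ω)) (fun z hz =>
      (hf.differentiableOn z hz.1).hasFDerivWithinAt.mono inter_subset_left) (fun z hz => ?_)
    ⟨hp, Metric.mem_ball_self hδ⟩ ⟨hq, by rwa [mem_ball_iff_norm]⟩
  rw [← dist_eq_norm]
  exact (h_close z hz.1 p hp hz.2).le

namespace ThinConvexDomain

variable {Ω : Set ℝ²} {ε x y z t g M κ : ℝ} {f : ℝ² → ℝ}

theorem abs_fibrePoint_sub_apply_one_le (hΩ : ThinConvexDomain Ω ε) (hx : x ∈ Ioo (0 : ℝ) 1)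
    (hz : |z - x| < min x (1 - x) / 2) (ht : t ∈ Icc (0 : ℝ) 1) :
    |fibrePoint Ω z t 1 - fibrePoint Ω x t 1| ≤ 4 * ε / min x (1 - x) * |z - x| := by
  have h_pos : 0 < min x (1 - x) := lt_min hx.1 (sub_pos.2 hx.2)
  have h_ball : Metric.ball x (min x (1 - x)) ⊆ Ioo 0 1 := fun w hw => by
    obtain ⟨h₁, h₂⟩ := abs_lt.1 (Metric.mem_ball.1 hw)
    constructor <;> linarith [min_le_left x (1 - x), min_le_right x (1 - x)]
  have h_lip {F : ℝ → ℝ} (hF : LipschitzOnWith (2 * ε / (min x (1 - x) / 2)).toNNReal F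
      (Metric.ball x (min x (1 - x) - min x (1 - x) / 2))) :
      |F z - F x| ≤ 4 * ε / min x (1 - x) * |z - x| := by
    have h_le := hF.dist_le_mul z (by rwa [sub_half]) x
      (Metric.mem_ball_self (by linarith))
    rwa [Real.coe_toNNReal _ (div_nonneg (by linarith [hΩ.pos]) (by linarith)),
      show 2 * ε / (min x (1 - x) / 2) = 4 * ε / min x (1 - x) by field_simp; ring] at h_le
  have h_lower := h_lip ((hΩ.convexOn_lowerBoundary.subset h_ball (convex_ball _ _)
    ).lipschitzOnWith_of_abs_le (half_pos h_pos) fun w hw => hΩ.abs_lowerBoundary_le (h_ball hw))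
  have h_upper := h_lip ((hΩ.concaveOn_upperBoundary.subset h_ball (convex_ball _ _)
    ).lipschitzOnWith_of_abs_le (half_pos h_pos) fun w hw => hΩ.abs_upperBoundary_le (h_ball hw))
  calc |fibrePoint Ω z t 1 - fibrePoint Ω x t 1|
      = |(1 - t) * (lowerBoundary Ω z - lowerBoundary Ω x) +
          t * (upperBoundary Ω z - upperBoundary Ω x)| := by
        simp only [fibrePoint, mk2_apply_one]
        ring_nf
    _ ≤ (1 - t) * |lowerBoundary Ω z - lowerBoundary Ω x| +
          t * |upperBoundary Ω z - upperBoundary Ω x| := by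
        refine (abs_add_le _ _).trans_eq ?_
        rw [abs_mul, abs_mul, abs_of_nonneg ht.1, abs_of_nonneg (sub_nonneg.2 ht.2)]
    _ ≤ 4 * ε / min x (1 - x) * |z - x| := by
        nlinarith [mul_le_mul_of_nonneg_left h_lower (sub_nonneg.2 ht.2),
          mul_le_mul_of_nonneg_left h_upper ht.1]

theorem fibrePoint_sub_fibrePoint (Ω : Set ℝ²) (x z t : ℝ) : fibrePoint Ω z t - fibrePoint Ω x t =
    mk2 (z - x) (fibrePoint Ω z t 1 - fibrePoint Ω x t 1) :=
  mk2_sub_mk2 _ _ _ _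

theorem norm_fibrePoint_sub_le (hΩ : ThinConvexDomain Ω ε) (hx : x ∈ Ioo (0 : ℝ) 1)
    (hz : |z - x| < min x (1 - x) / 2) (ht : t ∈ Icc (0 : ℝ) 1) :
    ‖fibrePoint Ω z t - fibrePoint Ω x t‖ ≤ (1 + 4 * ε / min x (1 - x)) * |z - x| := by
  rw [fibrePoint_sub_fibrePoint]
  refine (norm_mk2_le _ _).trans ?_
  linarith [hΩ.abs_fibrePoint_sub_apply_one_le hx hz ht]

theorem abs_sub_sub_mul_closureGrad_zero_le (hΩ : ThinConvexDomain Ω ε)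
    (hf : SmoothOnClosure Ω f) (hx : x ∈ Ioo (0 : ℝ) 1)
    (hM : ∀ p ∈ Ω, p 0 = x → |closureGrad Ω f p 1| ≤ M * min x (1 - x)) (hκ : 0 < κ) :
    ∀ᶠ z in 𝓝[>] x, ∀ t ∈ Ioo (0 : ℝ) 1, |f (fibrePoint Ω z t) - f (fibrePoint Ω x t) -
      (z - x) * closureGrad Ω f (fibrePoint Ω x t) 0| ≤ (4 * M * ε + κ) * (z - x) := by
  have h_pos : 0 < min x (1 - x) := lt_min hx.1 (sub_pos.2 hx.2)
  have hL : 0 < 1 + 4 * ε / min x (1 - x) := by have := hΩ.pos; positivity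
  obtain ⟨δ, hδ, h_taylor⟩ :=
    hΩ.exists_forall_abs_sub_sub_inner_closureGrad_le hf (div_pos hκ hL)
  filter_upwards [Ioo_mem_nhdsGT (lt_add_of_pos_right x (half_pos h_pos)),
    Ioo_mem_nhdsGT (lt_add_of_pos_right x (div_pos hδ hL)), Ioo_mem_nhdsGT hx.2]
    with z hzd hzδ hz t ht
  have hp := hΩ.fibrePoint_mem hx ht
  have hq := hΩ.fibrePoint_mem ⟨hx.1.trans hz.1, hz.2⟩ ht
  have h_abs : |z - x| = z - x := abs_of_pos (sub_pos.2 hz.1)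
  have h_near : |z - x| < min x (1 - x) / 2 := by linarith [hzd.2]
  have h_vert := hΩ.abs_fibrePoint_sub_apply_one_le hx h_near (Ioo_subset_Icc_self ht)
  have h_norm := hΩ.norm_fibrePoint_sub_le hx h_near (Ioo_subset_Icc_self ht)
  rw [h_abs] at h_vert h_norm
  have h_expand := (h_taylor _ (subset_closure hp) _ (subset_closure hq) (h_norm.trans_lt
    (by rw [← lt_div_iff₀' hL]; linarith [hzδ.2]))).trans
    (mul_le_mul_of_nonneg_left h_norm (div_pos hκ hL).le)
  rw [← mul_assoc, div_mul_cancel₀ _ hL.ne', fibrePoint_sub_fibrePoint, inner_mk2_right]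
    at h_expand
  have h_grad := hM _ hp rfl
  have h_drift : |closureGrad Ω f (fibrePoint Ω x t) 1 *
      (fibrePoint Ω z t 1 - fibrePoint Ω x t 1)| ≤ 4 * M * ε * (z - x) :=
    calc _ = |closureGrad Ω f (fibrePoint Ω x t) 1| * |fibrePoint Ω z t 1 - fibrePoint Ω x t 1| :=
          abs_mul _ _
      _ ≤ (M * min x (1 - x)) * (4 * ε / min x (1 - x) * (z - x)) :=
          mul_le_mul h_grad h_vert (abs_nonneg _) ((abs_nonneg _).trans h_grad)
      _ = 4 * M * ε * (z - x) := by field_simp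
  rw [abs_le] at h_expand h_drift ⊢
  constructor <;> linarith [h_expand.1, h_expand.2, h_drift.1, h_drift.2]

theorem abs_ubar2_sub_sub_mul_ubar2_closureGrad_zero_le (hΩ : ThinConvexDomain Ω ε)
    (hf : SmoothOnClosure Ω f) (hx : x ∈ Ioo (0 : ℝ) 1)
    (hM : ∀ p ∈ Ω, p 0 = x → |closureGrad Ω f p 1| ≤ M * min x (1 - x)) (hκ : 0 < κ) :
    ∀ᶠ z in 𝓝[>] x, |ubar2 Ω f z - ubar2 Ω f x -
      (z - x) * ubar2 Ω (fun p => closureGrad Ω f p 0) x| ≤ (4 * M * ε + κ) * (z - x) := by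
  filter_upwards [hΩ.abs_sub_sub_mul_closureGrad_zero_le hf hx hM hκ, Ioo_mem_nhdsGT hx.2]
    with z h_fibre hz
  have hz01 : z ∈ Ioo (0 : ℝ) 1 := ⟨hx.1.trans hz.1, hz.2⟩
  have h_int_z := hΩ.intervalIntegrable_comp_fibrePoint hf.continuousOn hz01
  have h_int_x := hΩ.intervalIntegrable_comp_fibrePoint hf.continuousOn hx
  have h_int_grad := (hΩ.intervalIntegrable_comp_fibrePoint
    (hΩ.continuousOn_closureGrad_apply hf 0) hx).const_mul (z - x)
  rw [hΩ.ubar2_eq_intervalIntegral _ hz01, hΩ.ubar2_eq_intervalIntegral _ hx,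
    hΩ.ubar2_eq_intervalIntegral _ hx, ← intervalIntegral.integral_const_mul,
    ← intervalIntegral.integral_sub h_int_z h_int_x,
    ← intervalIntegral.integral_sub (h_int_z.sub h_int_x) h_int_grad]
  have h_int := intervalIntegral.norm_integral_le_of_norm_le_const_ae (a := 0) (b := 1)
    (f := fun t => f (fibrePoint Ω z t) - f (fibrePoint Ω x t) -
      (z - x) * closureGrad Ω f (fibrePoint Ω x t) 0) (C := (4 * M * ε + κ) * (z - x)) ?_
  · rwa [sub_zero, abs_one, mul_one] at h_int
  filter_upwards [Measure.ae_ne volume (1 : ℝ)] with t ht1 ht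
  rw [uIoc_of_le zero_le_one] at ht
  exact h_fibre t ⟨ht.1, ht.2.lt_of_ne ht1⟩

theorem ubar2_sub_le (hΩ : ThinConvexDomain Ω ε) (hf : SmoothOnClosure Ω f)
    (hx : 0 < x) (hxy : x ≤ y) (hy : y < 1)
    (hM : ∀ p ∈ Ω, p 0 ∈ Icc x y → |closureGrad Ω f p 1| ≤ M * min (p 0) (1 - p 0))
    (hg : ∀ z ∈ Icc x y, ubar2 Ω (fun p => closureGrad Ω f p 0) z ≤ g) :
    ubar2 Ω f y - ubar2 Ω f x ≤ (g + 4 * M * ε) * (y - x) := by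
  have h_sub : Icc x y ⊆ Ioo 0 1 := Icc_subset_Ioo hx hy
  refine sub_le_mul_of_frequently_slope_lt hxy
    ((hΩ.continuousOn_ubar2 hf.continuousOn).mono h_sub) fun s hs r hr => ?_
  have hs' := Ico_subset_Icc_self hs
  have h_exp := hΩ.abs_ubar2_sub_sub_mul_ubar2_closureGrad_zero_le hf (h_sub hs')
    (fun p hp hps => hps ▸ hM p hp (hps.symm ▸ hs')) (half_pos (sub_pos.2 hr))
  refine (h_exp.and self_mem_nhdsWithin).frequently.mono fun z ⟨h_le, hz⟩ => ?_
  have hsz : 0 < z - s := sub_pos.2 hz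
  rw [slope_def_field, div_lt_iff₀ hsz]
  nlinarith [(abs_le.1 h_le).2, mul_le_mul_of_nonneg_left (hg s hs') hsz.le,
    mul_pos hsz (sub_pos.2 hr)]

theorem le_ubar2_sub (hΩ : ThinConvexDomain Ω ε) (hf : SmoothOnClosure Ω f)
    (hx : 0 < x) (hxy : x ≤ y) (hy : y < 1)
    (hM : ∀ p ∈ Ω, p 0 ∈ Icc x y → |closureGrad Ω f p 1| ≤ M * min (p 0) (1 - p 0))
    (hg : ∀ z ∈ Icc x y, g ≤ ubar2 Ω (fun p => closureGrad Ω f p 0) z) :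
    (g - 4 * M * ε) * (y - x) ≤ ubar2 Ω f y - ubar2 Ω f x := by
  have h_neg {p : ℝ²} (hp : p ∈ closure Ω) (i : Fin 2) :
      closureGrad Ω (fun q => -1 * f q) p i = -1 * closureGrad Ω f p i := by
    rw [hΩ.closureGrad_const_mul hf (-1) hp, PiLp.smul_apply, smul_eq_mul]
  have h_le := hΩ.ubar2_sub_le (contDiffOn_const.mul hf : SmoothOnClosure Ω fun p => -1 * f p)
    hx hxy hy (M := M) (g := -g)
    (fun p hp hpx => by
      rw [h_neg (subset_closure hp), neg_one_mul, abs_neg]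
      exact hM p hp hpx)
    (fun z hz => by
      rw [ubar2_congr hΩ.measurableSet fun p hp _ => h_neg (subset_closure hp) 0, ubar2_const_mul]
      linarith [hg z hz])
  simp only [ubar2_const_mul] at h_le
  linarith

end ThinConvexDomain

/-! ### Areas of slabs -/

namespace ThinConvexDomain

variable {Ω : Set ℝ²} {ε x y c a k : ℝ} {f : ℝ² → ℝ}

theorem ωvol2_mul_ubar2_one (hΩ : ThinConvexDomain Ω ε) (x : ℝ) :
    ωvol2 Ω x * ubar2 Ω (fun _ => 1) x = ωvol2 Ω x := by
  rw [← hΩ.integral_cross2_eq, setIntegral_const, smul_eq_mul, mul_one, Measure.real, ωvol2]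

theorem integrable_ωvol2 (hΩ : ThinConvexDomain Ω ε) : Integrable (ωvol2 Ω) := by
  simpa only [hΩ.ωvol2_mul_ubar2_one] using
    hΩ.integrable_ωvol2_mul_ubar2 (f := fun _ => 1) continuousOn_const

theorem volume_real_slab (hΩ : ThinConvexDomain Ω ε) {s : Set ℝ} (hs : MeasurableSet s) :
    volume.real (slab Ω s) = ∫ x in s, ωvol2 Ω x := by
  simpa [hΩ.ωvol2_mul_ubar2_one] using
    hΩ.setIntegral_slab_eq (f := fun _ => (1 : ℝ)) continuousOn_const hs

theorem volume_ne_top (hΩ : ThinConvexDomain Ω ε) : volume Ω ≠ ⊤ :=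
  hΩ.isBounded.measure_lt_top.ne

theorem volume_slab_ne_top (hΩ : ThinConvexDomain Ω ε) (s : Set ℝ) : volume (slab Ω s) ≠ ⊤ :=
  measure_ne_top_of_subset (slab_subset Ω s) hΩ.volume_ne_top

theorem volume_real_slab_le (hΩ : ThinConvexDomain Ω ε) (s : Set ℝ) :
    volume.real (slab Ω s) ≤ volume.real Ω :=
  measureReal_mono (slab_subset Ω s) hΩ.volume_ne_top

theorem mul_sub_le_volume_real_slab_Ioo (hΩ : ThinConvexDomain Ω ε) (hxy : x ≤ y)
    (hc : ∀ z ∈ Ioo x y, c ≤ ωvol2 Ω z) : c * (y - x) ≤ volume.real (slab Ω (Ioo x y)) := by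
  rw [hΩ.volume_real_slab measurableSet_Ioo]
  have h_mono := setIntegral_mono_on (integrableOn_const (by simp)) hΩ.integrable_ωvol2.integrableOn
    measurableSet_Ioo hc
  rwa [setIntegral_const, Real.volume_real_Ioo_of_le hxy, smul_eq_mul, mul_comm] at h_mono

theorem volume_real_slab_Ioo_le_mul_sub (hΩ : ThinConvexDomain Ω ε) (hxy : x ≤ y)
    (hc : ∀ z ∈ Ioo x y, ωvol2 Ω z ≤ c) : volume.real (slab Ω (Ioo x y)) ≤ c * (y - x) := by
  rw [hΩ.volume_real_slab measurableSet_Ioo]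
  have h_mono := setIntegral_mono_on hΩ.integrable_ωvol2.integrableOn (integrableOn_const (by simp))
    measurableSet_Ioo hc
  rwa [setIntegral_const, Real.volume_real_Ioo_of_le hxy, smul_eq_mul, mul_comm] at h_mono

theorem slab_Ioo_zero_one (hΩ : ThinConvexDomain Ω ε) : slab Ω (Ioo 0 1) = Ω :=
  inter_eq_left.2 hΩ.apply_zero_mem

theorem half_min_mul_volume_real_le_ωvol2 (hΩ : ThinConvexDomain Ω ε) (hx : x ∈ Ioo (0 : ℝ) 1) :
    min x (1 - x) / 2 * volume.real Ω ≤ ωvol2 Ω x := by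
  have h_pos : 0 < min x (1 - x) / 2 := half_pos (lt_min hx.1 (sub_pos.2 hx.2))
  have h_area := hΩ.volume_real_slab_Ioo_le_mul_sub zero_le_one fun z hz =>
    (le_div_iff₀' h_pos).2 (hΩ.half_min_mul_ωvol2_le hx hz)
  rwa [hΩ.slab_Ioo_zero_one, sub_zero, mul_one, le_div_iff₀' h_pos] at h_area

theorem ωvol2_le_mul_volume_real (hΩ : ThinConvexDomain Ω ε) (hx : x ∈ Ioo (0 : ℝ) 1) :
    ωvol2 Ω x ≤ 16 * volume.real Ω := by
  have h_area := hΩ.mul_sub_le_volume_real_slab_Ioo (x := 1 / 4) (y := 3 / 4) (by norm_num)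
    (c := ωvol2 Ω x / 8) fun z hz => by
      have hz_min : 1 / 4 ≤ min z (1 - z) := le_min hz.1.le (by linarith [hz.2])
      have h_ω : 0 ≤ ωvol2 Ω x := ENNReal.toReal_nonneg
      nlinarith [hΩ.half_min_mul_ωvol2_le (x := z) ⟨by linarith [hz.1], by linarith [hz.2]⟩ hx]
  linarith [hΩ.volume_real_slab_le (Ioo (1 / 4) (3 / 4))]

theorem volume_real_slab_Ioo_le (hΩ : ThinConvexDomain Ω ε) (hx : 0 ≤ x) (hxy : x ≤ y)
    (hy : y ≤ 1) : volume.real (slab Ω (Ioo x y)) ≤ 16 * volume.real Ω * (y - x) :=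
  hΩ.volume_real_slab_Ioo_le_mul_sub hxy fun _ hz =>
    hΩ.ωvol2_le_mul_volume_real ⟨hx.trans_lt hz.1, hz.2.trans_le hy⟩

theorem mul_volume_real_le_volume_real_slab (hΩ : ThinConvexDomain Ω ε) {s : Set ℝ} (ha : 0 ≤ a)
    (hx : a / 2 ≤ x) (hxa : x + a / 2 ≤ 1 - a / 2) (hs : Ioo x (x + a / 2) ⊆ s) :
    a ^ 2 / 8 * volume.real Ω ≤ volume.real (slab Ω s) := by
  have h_area := hΩ.mul_sub_le_volume_real_slab_Ioo (x := x) (y := x + a / 2) (by linarith)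
    (c := a / 4 * volume.real Ω) fun z hz => by
      have hz_min : a / 2 ≤ min z (1 - z) := le_min (by linarith [hz.1]) (by linarith [hz.2])
      nlinarith [hΩ.half_min_mul_volume_real_le_ωvol2 (x := z)
        ⟨by linarith [hz.1], by linarith [hz.2]⟩, measureReal_nonneg (μ := volume) (s := Ω)]
  have h_mono := measureReal_mono (slab_mono Ω hs) (hΩ.volume_slab_ne_top s)
  linarith

theorem volume_real_slab_Iic_mem_Icc (hΩ : ThinConvexDomain Ω ε) (ha : 0 ≤ a)
    (hx : x ∈ Icc a (1 - a)) :
    volume.real (slab Ω (Iic x)) ∈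
      Icc (a ^ 2 / 8 * volume.real Ω) ((1 - a ^ 2 / 8) * volume.real Ω) := by
  have h_left := hΩ.mul_volume_real_le_volume_real_slab (x := x - a / 2) (s := Iic x) ha
    (by linarith [hx.1]) (by linarith [hx.2]) fun z hz => by
      rw [mem_Iic]
      linarith [hz.2]
  have h_right := hΩ.mul_volume_real_le_volume_real_slab (x := x) (s := Ioi x) ha
    (by linarith [hx.1]) (by linarith [hx.2]) Ioo_subset_Ioi_self
  have h_split : volume.real (slab Ω (Iic x ∪ Ioi x)) =
      volume.real (slab Ω (Iic x)) + volume.real (slab Ω (Ioi x)) := by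
    simpa using setIntegral_slab_union hΩ.measurableSet
      (hΩ.integrableOn (f := fun _ => (1 : ℝ)) continuousOn_const)
      (Iic_disjoint_Ioi (le_refl x)) measurableSet_Ioi
  have h_univ : slab Ω univ = Ω := inter_univ Ω
  rw [Iic_union_Ioi, h_univ] at h_split
  constructor <;> linarith

theorem mul_volume_real_slab_le_setIntegral_slab (hΩ : ThinConvexDomain Ω ε)
    (hf : ContinuousOn f (closure Ω)) {s : Set ℝ} (hs : MeasurableSet s)
    (hk : ∀ x ∈ s, k ≤ ubar2 Ω f x) :
    k * volume.real (slab Ω s) ≤ ∫ p in slab Ω s, f p := by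
  rw [hΩ.volume_real_slab hs, hΩ.setIntegral_slab_eq hf hs, ← integral_const_mul]
  refine setIntegral_mono_on (hΩ.integrable_ωvol2.integrableOn.const_mul k)
    (hΩ.integrable_ωvol2_mul_ubar2 hf).integrableOn hs fun x hx => ?_
  rw [mul_comm]
  exact mul_le_mul_of_nonneg_left (hk x hx) ENNReal.toReal_nonneg

end ThinConvexDomain

/-! ### The vertical derivative -/

section SmoothOnClosure

variable {E : Type*} [NormedAddCommGroup E] [InnerProductSpace ℝ E] {Ω : Set E} {f : E → ℝ}
  {p q : E} {G : ℝ}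

theorem SmoothOnClosure.contDiffAt (hf : SmoothOnClosure Ω f) (hΩ : IsOpen Ω) (hp : p ∈ Ω)
    (n : ℕ) : ContDiffAt ℝ n f p :=
  contDiffAt_infty.1
    (ContDiffOn.contDiffAt hf (mem_of_superset (hΩ.mem_nhds hp) subset_closure)) n

theorem SmoothOnClosure.differentiableAt (hf : SmoothOnClosure Ω f) (hΩ : IsOpen Ω) (hp : p ∈ Ω) :
    DifferentiableAt ℝ f p :=
  (hf.contDiffAt hΩ hp 1).differentiableAt (by simp)

variable [FiniteDimensional ℝ E]

theorem IsBoundedConvexDomain.abs_sub_le_mul_norm_sub (hΩ : IsBoundedConvexDomain Ω)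
    (hf : SmoothOnClosure Ω f) (hG : ∀ z ∈ Ω, ‖closureGrad Ω f z‖ ≤ G) (hp : p ∈ Ω) (hq : q ∈ Ω) :
    |f p - f q| ≤ G * ‖p - q‖ := by
  refine hΩ.convex.norm_image_sub_le_of_norm_fderiv_le (𝕜 := ℝ)
    (fun z hz => hf.differentiableAt hΩ.isOpen hz) (fun z hz => ?_) hq hp
  have h_grad := hG z hz
  rwa [closureGrad_eq_gradient hΩ.isOpen hz, gradient, LinearIsometryEquiv.norm_map] at h_grad

end SmoothOnClosure

section DifferentiatedEquation

variable {n : ℕ} {Ω : Set (EuclideanSpace ℝ (Fin n))} {u : EuclideanSpace ℝ (Fin n) → ℝ}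
  {p : EuclideanSpace ℝ (Fin n)} {μ : ℝ}

theorem lap_neg (f : EuclideanSpace ℝ (Fin n) → ℝ) (p : EuclideanSpace ℝ (Fin n)) :
    lap (fun q => -f q) p = -lap f p := by
  simp [lap, fderiv_fun_neg]

theorem closureGrad_apply_eq_fderiv (hΩ : IsOpen Ω) (hp : p ∈ Ω) (i : Fin n) :
    closureGrad Ω u p i = fderiv ℝ u p (EuclideanSpace.single i 1) := by
  rw [closureGrad, gradientWithin_apply,
    fderivWithin_of_mem_nhds (mem_of_superset (hΩ.mem_nhds hp) subset_closure)]

theorem closureGrad_apply_eventuallyEq (hΩ : IsOpen Ω) (hp : p ∈ Ω) (i : Fin n) :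
    (fun q => closureGrad Ω u q i) =ᶠ[𝓝 p] fun q => fderiv ℝ u q (EuclideanSpace.single i 1) :=
  (hΩ.eventually_mem hp).mono fun _ hq => closureGrad_apply_eq_fderiv hΩ hq i

theorem contDiffAt_closureGrad_apply (hΩ : IsOpen Ω) (hu : SmoothOnClosure Ω u) (hp : p ∈ Ω)
    (i : Fin n) : ContDiffAt ℝ 2 (fun q => closureGrad Ω u q i) p :=
  (contDiffAt_fderiv_apply (n := 2) (by exact_mod_cast hu.contDiffAt hΩ hp 3)
    (EuclideanSpace.single i 1)).congr_of_eventuallyEq (closureGrad_apply_eventuallyEq hΩ hp i)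

theorem lap_closureGrad_apply (hΩ : IsOpen Ω) (hu : SmoothOnClosure Ω u)
    (h_lap : ∀ q ∈ Ω, lap u q = -(μ * u q)) (hp : p ∈ Ω) (i : Fin n) :
    lap (fun q => closureGrad Ω u q i) p = -(μ * closureGrad Ω u p i) := by
  have h_pde : lap u =ᶠ[𝓝 p] fun q => -(μ * u q) := (hΩ.eventually_mem hp).mono h_lap
  rw [lap_congr (closureGrad_apply_eventuallyEq hΩ hp i),
    lap_fderiv_apply (by exact_mod_cast hu.contDiffAt hΩ hp 3), h_pde.fderiv_eq,
    fderiv_fun_neg, fderiv_const_mul (hu.differentiableAt hΩ hp), closureGrad_apply_eq_fderiv hΩ hp]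
  simp

end DifferentiatedEquation

/-- A function with `Ω` as its negative set and `∂Ω` as a regular zero set: the encoding of the
smoothness of the boundary. -/
structure IsDefiningFunction {E : Type*} [NormedAddCommGroup E] [InnerProductSpace ℝ E]
    [CompleteSpace E] (Ω : Set E) (F : E → ℝ) : Prop where
  differentiable : Differentiable ℝ F
  eq_setOf_neg : Ω = {p | F p < 0}
  frontier_eq : frontier Ω = {p | F p = 0}
  gradient_ne_zero : ∀ p ∈ frontier Ω, gradient F p ≠ 0

namespace ThinConvexDomain

variable {Ω : Set ℝ²} {ε μ x y B G k : ℝ} {u F : ℝ² → ℝ} {a n p q v : ℝ²}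

theorem abs_apply_one_le (hΩ : ThinConvexDomain Ω ε) (ha : a ∈ closure Ω) : |a 1| ≤ ε := by
  have h_closed : IsClosed {p : ℝ² | |p 1| ≤ ε} := isClosed_le (by fun_prop) continuous_const
  exact closure_minimal (fun p hp => (hΩ.abs_apply_one_lt p hp).le) h_closed ha

theorem abs_apply_one_sub_le (hΩ : ThinConvexDomain Ω ε) (hp : p ∈ closure Ω)
    (hq : q ∈ closure Ω) : |p 1 - q 1| ≤ 2 * ε :=
  (abs_sub _ _).trans (by linarith [hΩ.abs_apply_one_le hp, hΩ.abs_apply_one_le hq])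

theorem abs_normal_apply_zero_mul_le (hΩ : ThinConvexDomain Ω ε) (ha : a ∈ closure Ω)
    (ha' : a 0 ∈ Ioo (0 : ℝ) 1) (hn : ∀ z ∈ Ω, ⟪n, z - a⟫ ≤ 0) :
    |n 0| * min (a 0) (1 - a 0) ≤ 4 * ε * |n 1| := by
  have h_support (x : ℝ) (hx : x ∈ Ioo (0 : ℝ) 1) : n 0 * (x - a 0) ≤ 2 * ε * |n 1| := by
    obtain ⟨y, hy⟩ := hΩ.nonempty_cross2 x hx
    have h_le := hn _ hy
    rw [← mk2_apply_zero_apply_one a, mk2_sub_mk2, inner_mk2_right] at h_le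
    have h_vert : |n 1 * (y - a 1)| ≤ |n 1| * (2 * ε) := by
      rw [abs_mul]
      gcongr
      exact hΩ.abs_apply_one_sub_le (p := mk2 x y) (subset_closure hy) ha
    linarith [(abs_le.1 h_vert).1]
  have h_left := h_support (a 0 / 2) ⟨by linarith [ha'.1], by linarith [ha'.2]⟩
  have h_right := h_support ((1 + a 0) / 2) ⟨by linarith [ha'.1], by linarith [ha'.2]⟩
  rcases le_total 0 (n 0) with h_sign | h_sign
  · rw [abs_of_nonneg h_sign]
    nlinarith [min_le_right (a 0) (1 - a 0)]
  · rw [abs_of_nonpos h_sign]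
    nlinarith [min_le_left (a 0) (1 - a 0)]

end ThinConvexDomain

theorem abs_apply_one_le_of_inner_eq_zero {n v : ℝ²} {d B K : ℝ} (hn : n ≠ 0) (hnv : ⟪n, v⟫ = 0)
    (hd : 0 < d) (h_normal : |n 0| * d ≤ K * |n 1|) (hv : |v 0| ≤ B * d) : |v 1| ≤ B * K := by
  have hB : 0 ≤ B := nonneg_of_mul_nonneg_left ((abs_nonneg _).trans hv) hd
  have hn1 : 0 < |n 1| := by
    refine abs_pos.2 fun h_zero => hn ?_
    have hn0 : n 0 = 0 := by
      rw [h_zero, abs_zero, mul_zero] at h_normal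
      exact abs_nonpos_iff.1 (nonpos_of_mul_nonpos_left h_normal hd)
    rw [← mk2_apply_zero_apply_one n, hn0, h_zero]
    ext i
    fin_cases i <;> rfl
  rw [← mk2_apply_zero_apply_one v, inner_mk2_right] at hnv
  refine le_of_mul_le_mul_left ?_ hn1
  calc |n 1| * |v 1| = |n 0| * |v 0| := by
        rw [← abs_mul, ← abs_mul, eq_neg_of_add_eq_zero_right hnv, abs_neg]
    _ ≤ |n 0| * (B * d) := by gcongr
    _ = B * (|n 0| * d) := by ring
    _ ≤ B * (K * |n 1|) := by gcongr
    _ = |n 1| * (B * K) := by ring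

namespace ThinConvexDomain

variable {Ω : Set ℝ²} {ε μ x y B G k : ℝ} {f u F : ℝ² → ℝ} {a p q : ℝ²}

theorem norm_closureGrad_le_of_mem_closure (hΩ : ThinConvexDomain Ω ε) (hf : SmoothOnClosure Ω f)
    (h_grad : ∀ p ∈ Ω, ‖closureGrad Ω f p‖ ≤ B * max (min (p 0) (1 - p 0)) ε)
    (ha : a ∈ closure Ω) : ‖closureGrad Ω f a‖ ≤ B * max (min (a 0) (1 - a 0)) ε := by
  refine le_on_closure (f := fun p => ‖closureGrad Ω f p‖)
    (g := fun p : ℝ² => B * max (min (p 0) (1 - p 0)) ε) h_grad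
    (hΩ.toIsBoundedConvexDomain.continuousOn_closureGrad hf).norm ?_ ha
  fun_prop

theorem abs_closureGrad_apply_one_le_of_mem_frontier (hΩ : ThinConvexDomain Ω ε)
    (hF : IsDefiningFunction Ω F) (hu : IsFirstNeumannEigenfunction Ω u μ) (hB : 0 ≤ B)
    (h_grad : ∀ p ∈ Ω, ‖closureGrad Ω u p‖ ≤ B * max (min (p 0) (1 - p 0)) ε)
    (ha : a ∈ frontier Ω) : |closureGrad Ω u a 1| ≤ B * (4 * ε) := by
  have ha_cl : a ∈ closure Ω := ha.1
  have h_le := hΩ.norm_closureGrad_le_of_mem_closure hu.smooth h_grad ha_cl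
  have h_coord (i : Fin 2) := (PiLp.norm_apply_le (closureGrad Ω u a) i).trans h_le
  rcases le_or_gt (min (a 0) (1 - a 0)) ε with h_end | h_mid
  · refine (h_coord 1).trans ?_
    rw [max_eq_right h_end]
    nlinarith [hΩ.pos]
  · have h_pos := hΩ.pos.trans h_mid
    have hFa : F a = 0 := by
      rw [hF.frontier_eq] at ha
      exact ha
    have h_normal (z : ℝ²) (hz : z ∈ Ω) : ⟪gradient F a, z - a⟫ ≤ 0 :=
      inner_gradient_sub_nonpos_of_convex (hF.differentiable a) (hF.eq_setOf_neg ▸ hΩ.isOpen)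
        (hF.eq_setOf_neg ▸ hΩ.convex) (hF.eq_setOf_neg ▸ ha_cl) hFa
        (by rw [hF.eq_setOf_neg] at hz; exact hz)
    refine abs_apply_one_le_of_inner_eq_zero (hF.gradient_ne_zero a ha)
      (hu.inner_gradient_closureGrad_eq_zero hΩ.toIsBoundedConvexDomain (hF.differentiable a)
        hF.eq_setOf_neg ha_cl hFa (hF.gradient_ne_zero a ha)) h_pos
      (hΩ.abs_normal_apply_zero_mul_le ha_cl ⟨h_pos.trans_le (min_le_left _ _),
        sub_pos.1 (h_pos.trans_le (min_le_right _ _))⟩ h_normal) ?_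
    simpa only [max_eq_left h_mid.le, Real.norm_eq_abs] using h_coord 0

theorem abs_closureGrad_apply_one_le (hΩ : ThinConvexDomain Ω ε) (hF : IsDefiningFunction Ω F)
    (hu : IsFirstNeumannEigenfunction Ω u μ) (h_lap : ∀ p ∈ Ω, lap u p = -(μ * u p)) (hB : 0 ≤ B)
    (h_grad : ∀ p ∈ Ω, ‖closureGrad Ω u p‖ ≤ B * max (min (p 0) (1 - p 0)) ε)
    (hμk : μ < k ^ 2) (hk : 0 ≤ k) (hkε : k * ε ≤ 1) (hp : p ∈ Ω) :
    |closureGrad Ω u p 1| ≤ 2 * (B * (4 * ε)) := by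
  have hK : 0 ≤ B * (4 * ε) := by
    have h_pos := hΩ.pos
    positivity
  have h_frontier (a : ℝ²) (ha : a ∈ frontier Ω) := abs_le.1
    (hΩ.abs_closureGrad_apply_one_le_of_mem_frontier hF hu hB h_grad ha)
  have h_cont := hΩ.continuousOn_closureGrad_apply hu.smooth 1
  have h_smooth (q : ℝ²) (hq : q ∈ Ω) := contDiffAt_closureGrad_apply hΩ.isOpen hu.smooth hq 1
  have h_eq (q : ℝ²) (hq : q ∈ Ω) := lap_closureGrad_apply hΩ.isOpen hu.smooth h_lap hq 1
  have h_slab (a : ℝ²) (ha : a ∈ closure Ω) : |a 1| ≤ ε := hΩ.abs_apply_one_le ha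
  have h_upper := le_two_mul_of_le_on_frontier_of_abs_apply_le 1 hΩ.isOpen hΩ.isBounded h_slab
    h_cont h_smooth (fun q hq => (h_eq q hq).ge) hμk hk hkε hK fun a ha => (h_frontier a ha).2
  have h_lower := le_two_mul_of_le_on_frontier_of_abs_apply_le 1 hΩ.isOpen hΩ.isBounded h_slab
    (v := fun q => -closureGrad Ω u q 1) h_cont.neg (fun q hq => (h_smooth q hq).neg)
    (fun q hq => by rw [lap_neg, h_eq q hq, mul_neg]) hμk hk hkε hK
    fun a ha => neg_le.1 (h_frontier a ha).1
  exact abs_le.2 ⟨neg_le.1 (h_lower p hp), h_upper p hp⟩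

theorem hasDerivAt_comp_mk2_right (hΩ : ThinConvexDomain Ω ε) (hf : SmoothOnClosure Ω f)
    (hy : y ∈ cross2 Ω x) :
    HasDerivAt (fun y => f (mk2 x y)) (closureGrad Ω f (mk2 x y) 1) y := by
  have h_line (t : ℝ) : mk2 x t = mk2 x 0 + t • EuclideanSpace.single 1 (1 : ℝ) := by
    ext i
    fin_cases i <;> simp
  have hy' : mk2 x y ∈ Ω := hy
  have h_comp : (fun t => f (mk2 x t)) =
      fun t => f (mk2 x 0 + t • EuclideanSpace.single 1 (1 : ℝ)) := by
    funext t
    rw [← h_line]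
  rw [closureGrad_apply_eq_fderiv hΩ.isOpen hy', h_comp, h_line y]
  rw [h_line y] at hy'
  exact hasDerivAt_comp_add_smul (hf.differentiableAt hΩ.isOpen hy')

theorem abs_sub_ubar2_le (hΩ : ThinConvexDomain Ω ε) (hf : SmoothOnClosure Ω f)
    (hG : ∀ p ∈ Ω, |closureGrad Ω f p 1| ≤ G) (hp : p ∈ Ω) :
    |f p - ubar2 Ω f (p 0)| ≤ 2 * G * ε := by
  have hG0 : 0 ≤ G := (abs_nonneg _).trans (hG p hp)
  refine hΩ.abs_sub_ubar2_le_of_forall hf.continuousOn (hΩ.apply_zero_mem p hp) fun q hq hqp => ?_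
  have h_mvt := (hΩ.convex_cross2 (p 0)).norm_image_sub_le_of_norm_hasDerivWithin_le
    (fun y hy => (hΩ.hasDerivAt_comp_mk2_right hf hy).hasDerivWithinAt)
    (fun y hy => hG (mk2 (p 0) y) hy) (x := q 1) (y := p 1)
    (by rwa [cross2, mem_ofPred_eq, ← hqp, mk2_apply_zero_apply_one])
    (by rwa [cross2, mem_ofPred_eq, mk2_apply_zero_apply_one])
  rw [mk2_apply_zero_apply_one, ← hqp, mk2_apply_zero_apply_one] at h_mvt
  refine h_mvt.trans ?_
  nlinarith [hΩ.abs_apply_one_sub_le (subset_closure hp) (subset_closure hq),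
    Real.norm_eq_abs (p 1 - q 1)]

theorem abs_sub_le_mul_abs_apply_zero_sub_add (hΩ : ThinConvexDomain Ω ε)
    (hf : SmoothOnClosure Ω f) (hG : ∀ p ∈ Ω, ‖closureGrad Ω f p‖ ≤ G) (hp : p ∈ Ω)
    (hq : q ∈ Ω) : |f p - f q| ≤ G * (|p 0 - q 0| + 2 * ε) := by
  refine (hΩ.toIsBoundedConvexDomain.abs_sub_le_mul_norm_sub hf hG hp hq).trans ?_
  have h_norm : ‖p - q‖ ≤ |p 0 - q 0| + |p 1 - q 1| := by
    rw [← mk2_apply_zero_apply_one p, ← mk2_apply_zero_apply_one q, mk2_sub_mk2]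
    exact norm_mk2_le _ _
  have h_vert := hΩ.abs_apply_one_sub_le (subset_closure hp) (subset_closure hq)
  exact mul_le_mul_of_nonneg_left (by linarith) ((norm_nonneg _).trans (hG p hp))

end ThinConvexDomain

/-! ### The spectral argument -/

section WeightedMass

variable {Ω : Set ℝ²} {ε x y M : ℝ} {f : ℝ² → ℝ}

theorem ThinConvexDomain.abs_setIntegral_sub_setIntegral_slab_Iic_le (hΩ : ThinConvexDomain Ω ε)
    (hf : ContinuousOn f (closure Ω)) (hfM : ∀ p ∈ Ω, p 0 ∈ Ioo x y → |f p| ≤ M)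
    (hf0 : ∀ p ∈ Ω, y ≤ p 0 → f p = 0) :
    |(∫ p in Ω, f p) - ∫ p in slab Ω (Iic x), f p| ≤ M * volume.real (slab Ω (Ioo x y)) := by
  have h_split := setIntegral_slab_union hΩ.measurableSet (hΩ.integrableOn hf)
    (Iic_disjoint_Ioi (le_refl x)) measurableSet_Ioi
  have h_univ : slab Ω univ = Ω := inter_univ Ω
  have h_support : ∫ p in slab Ω (Ioi x), f p = ∫ p in slab Ω (Ioo x y), f p :=
    setIntegral_eq_of_subset_of_forall_sdiff_eq_zero
      (measurableSet_slab hΩ.measurableSet measurableSet_Ioi)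
      (slab_mono Ω Ioo_subset_Ioi_self) fun p hp =>
        hf0 p hp.1.1 (not_lt.1 fun hpy => hp.2 ⟨hp.1.1, hp.1.2, hpy⟩)
  rw [Iic_union_Ioi, h_univ, h_support] at h_split
  rw [h_split, add_sub_cancel_left]
  exact norm_setIntegral_le_of_norm_le_const (f := f) (C := M)
    (hΩ.volume_slab_ne_top (Ioo x y)).lt_top fun p hp => hfM p hp.1 hp.2

/-- The two quotients `I₁`, `I₂` are the masses of `χ (u + b)` and `χ² (u + b)`, which differ by at
most `s` from the mass `P + b R` of `u + b` to the left of the transition of `χ`. -/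
theorem sq_mul_half_sub_le_mul_sub_sq {b β B r R P η s I₁ I₂ : ℝ} (hβ : 0 ≤ β) (hβb : β ≤ b)
    (hbB : b ≤ B) (hB : 1 ≤ B) (hr : 0 ≤ r) (hr_half : r ≤ 1 / 2) (hrR : r ≤ R) (hRr : R ≤ 1 - r)
    (hP : 0 ≤ P) (hPη : P ≤ η) (hs : 0 ≤ s) (hηs : η + s ≤ 1) (hI₁ : |I₁ - (P + b * R)| ≤ s)
    (hI₂ : |I₂ - (P + b * R)| ≤ s) :
    β ^ 2 * r / 2 - 4 * B * (η + s) ≤ b * I₂ - I₁ ^ 2 := by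
  have hb : 0 ≤ b := hβ.trans hβb
  have h_bR : 0 ≤ b * R := mul_nonneg hb (hr.trans hrR)
  have h_bRB : b * R ≤ B := by nlinarith
  have h_I₂ : b * (b * R) - B * (η + s) ≤ b * I₂ := by
    have := (abs_le.1 hI₂).1
    nlinarith
  have h_I₁ : I₁ ^ 2 ≤ (b * R) ^ 2 + 3 * B * (η + s) := by
    have h_abs : |I₁| ≤ b * R + (η + s) := by
      obtain ⟨h_lower, h_upper⟩ := abs_le.1 hI₁
      exact abs_le.2 ⟨by linarith, by linarith⟩
    have h_sq := pow_le_pow_left₀ (abs_nonneg I₁) h_abs 2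
    rw [sq_abs] at h_sq
    nlinarith
  have h_variance : β ^ 2 * r / 2 ≤ b * (b * R) - (b * R) ^ 2 := by
    have h_RR : r / 2 ≤ R * (1 - R) := by nlinarith
    have h_sq : β ^ 2 ≤ b ^ 2 := pow_le_pow_left₀ hβ hβb 2
    nlinarith [mul_le_mul h_sq h_RR (by linarith) (sq_nonneg b)]
  linarith

end WeightedMass

/-- A first Neumann eigenfunction `u` of the thin domain `Ω` with `|u| ≤ B`, with `|∇u|` at most
`B` times the distance to the ends of `(0, 1)` (or `ε`), and with `u` at least `c` to the left of
`a` and at most `-c` to the right of `1 - a`. -/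
structure SeparatedEigenfunction (Ω : Set ℝ²) (ε : ℝ) (u : ℝ² → ℝ) (μ B c a : ℝ) : Prop extends
    ThinConvexDomain Ω ε, IsFirstNeumannEigenfunction Ω u μ where
  one_le_bound : 1 ≤ B
  threshold_pos : 0 < c
  margin_pos : 0 < a
  margin_le : a ≤ 1 / 4
  le_margin : ε ≤ a
  abs_le_bound : ∀ p ∈ Ω, |u p| ≤ B
  norm_closureGrad_le : ∀ p ∈ Ω, ‖closureGrad Ω u p‖ ≤ B * max (min (p 0) (1 - p 0)) ε
  le_of_apply_zero_le : ∀ p ∈ Ω, p 0 ≤ a → c ≤ u p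
  le_neg_of_le_apply_zero : ∀ p ∈ Ω, 1 - a ≤ p 0 → u p ≤ -c

namespace SeparatedEigenfunction

variable {Ω : Set ℝ²} {ε μ B c a x y β δ η : ℝ} {u : ℝ² → ℝ} {p q : ℝ²}

theorem bound_pos (hu : SeparatedEigenfunction Ω ε u μ B c a) : 0 < B :=
  zero_lt_one.trans_le hu.one_le_bound

theorem continuousOn (hu : SeparatedEigenfunction Ω ε u μ B c a) : ContinuousOn u (closure Ω) :=
  hu.smooth.continuousOn

theorem volume_pos (hu : SeparatedEigenfunction Ω ε u μ B c a) : 0 < volume.real Ω :=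
  hu.toIsBoundedConvexDomain.volume_real_pos

theorem mem_Ioo_of_mem_Icc (hu : SeparatedEigenfunction Ω ε u μ B c a)
    (hx : x ∈ Icc a (1 - a)) : x ∈ Ioo (0 : ℝ) 1 :=
  Icc_subset_Ioo hu.margin_pos (by linarith [hu.margin_pos]) hx

theorem norm_closureGrad_le_bound (hu : SeparatedEigenfunction Ω ε u μ B c a) (hp : p ∈ Ω) :
    ‖closureGrad Ω u p‖ ≤ B := by
  have h_max : max (min (p 0) (1 - p 0)) ε ≤ 1 :=
    max_le ((min_le_left _ _).trans (hu.apply_zero_mem p hp).2.le)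
      (by linarith [hu.le_margin, hu.margin_le])
  exact (hu.norm_closureGrad_le p hp).trans (mul_le_of_le_one_right hu.bound_pos.le h_max)

theorem abs_sub_le (hu : SeparatedEigenfunction Ω ε u μ B c a) (hp : p ∈ Ω) (hq : q ∈ Ω) :
    |u p - u q| ≤ B * (|p 0 - q 0| + 2 * ε) :=
  hu.abs_sub_le_mul_abs_apply_zero_sub_add hu.smooth (fun _ => hu.norm_closureGrad_le_bound) hp hq

theorem abs_closureGrad_apply_one_le_mul_min (hu : SeparatedEigenfunction Ω ε u μ B c a)
    (hp : p ∈ Ω) (hpa : p 0 ∈ Icc a (1 - a)) :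
    |closureGrad Ω u p 1| ≤ B * min (p 0) (1 - p 0) := by
  have h_max : max (min (p 0) (1 - p 0)) ε = min (p 0) (1 - p 0) :=
    max_eq_left (hu.le_margin.trans (le_min hpa.1 (by linarith [hpa.2])))
  exact (PiLp.norm_apply_le (closureGrad Ω u p) 1).trans
    (h_max ▸ hu.norm_closureGrad_le p hp)

theorem le_ubar2_of_le (hu : SeparatedEigenfunction Ω ε u μ B c a) (hx : x ∈ Ioo (0 : ℝ) 1)
    (hxa : x ≤ a) : c ≤ ubar2 Ω u x :=
  hu.le_ubar2 hu.continuousOn hx fun p hp hpx => hu.le_of_apply_zero_le p hp (hpx.trans_le hxa)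

theorem ubar2_le_neg_of_le (hu : SeparatedEigenfunction Ω ε u μ B c a) (hx : x ∈ Ioo (0 : ℝ) 1)
    (hxa : 1 - a ≤ x) : ubar2 Ω u x ≤ -c :=
  hu.ubar2_le hu.continuousOn hx fun p hp hpx =>
    hu.le_neg_of_le_apply_zero p hp (hxa.trans_eq hpx.symm)

theorem eigenvalue_le (hu : SeparatedEigenfunction Ω ε u μ B c a) :
    μ * (c ^ 2 * a ^ 2) ≤ 8 * B ^ 2 := by
  have h_energy : μ * (∫ p in Ω, u p ^ 2) ≤ B ^ 2 * volume.real Ω := by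
    rw [← hu.energy_eq, dirichletForm_self]
    refine (le_abs_self _).trans (norm_setIntegral_le_of_norm_le_const
      (f := fun p => ‖closureGrad Ω u p‖ ^ 2) (C := B ^ 2) hu.volume_ne_top.lt_top fun p hp => ?_)
    rw [norm_pow, norm_norm]
    exact pow_le_pow_left₀ (norm_nonneg _) (hu.norm_closureGrad_le_bound hp) 2
  have h_sq_int : IntegrableOn (fun p => u p ^ 2) Ω := hu.integrableOn (hu.continuousOn.fun_pow 2)
  have h_left : c ^ 2 * volume.real (slab Ω (Iic a)) ≤ ∫ p in slab Ω (Iic a), u p ^ 2 :=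
    setIntegral_ge_of_const_le_real (measurableSet_slab hu.measurableSet measurableSet_Iic)
      (hu.volume_slab_ne_top _)
      (fun p hp => pow_le_pow_left₀ hu.threshold_pos.le (hu.le_of_apply_zero_le p hp.1 hp.2) 2)
      (h_sq_int.mono_set (slab_subset Ω _))
  have h_mono : ∫ p in slab Ω (Iic a), u p ^ 2 ≤ ∫ p in Ω, u p ^ 2 :=
    setIntegral_mono_set h_sq_int (ae_of_all _ fun p => sq_nonneg (u p))
      (slab_subset Ω _).eventuallyLE
  have h_area := (hu.volume_real_slab_Iic_mem_Icc hu.margin_pos.le (x := a)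
    ⟨le_rfl, by linarith [hu.margin_le]⟩).1
  have h_mass : c ^ 2 * (a ^ 2 / 8 * volume.real Ω) ≤ ∫ p in Ω, u p ^ 2 :=
    (mul_le_mul_of_nonneg_left h_area (sq_nonneg c)).trans (h_left.trans h_mono)
  have h_chain := (mul_le_mul_of_nonneg_left h_mass hu.eigenvalue_pos.le).trans h_energy
  refine le_of_mul_le_mul_right ?_ hu.volume_pos
  linarith

theorem setIntegral_slab_Iic_le (hu : SeparatedEigenfunction Ω ε u μ B c a) (x : ℝ) :
    ∫ p in slab Ω (Iic x), u p ≤ B * volume.real Ω :=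
  (le_abs_self _).trans <| (norm_setIntegral_le_of_norm_le_const (f := u)
    (hu.volume_slab_ne_top _).lt_top fun p hp => hu.abs_le_bound p hp.1).trans <|
    mul_le_mul_of_nonneg_left (hu.volume_real_slab_le _) hu.bound_pos.le

theorem neg_le_ubar2_closureGrad_zero (hu : SeparatedEigenfunction Ω ε u μ B c a)
    (hx : x ∈ Icc a (1 - a)) :
    -(2 * μ * B / a) ≤ ubar2 Ω (fun p => closureGrad Ω u p 0) x := by
  have hx_mem := hu.mem_Ioo_of_mem_Icc hx
  have h_flux := hu.ωvol2_mul_ubar2_closureGrad_zero hu.toIsFirstNeumannEigenfunction hx_mem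
  have h_mass := mul_le_mul_of_nonneg_left (hu.setIntegral_slab_Iic_le x) hu.eigenvalue_pos.le
  have h_width : a / 2 * volume.real Ω ≤ ωvol2 Ω x := by
    have h_min : a ≤ min x (1 - x) := le_min hx.1 (by linarith [hx.2])
    nlinarith [hu.half_min_mul_volume_real_le_ωvol2 hx_mem, hu.volume_pos]
  have h_slope : 0 ≤ 2 * μ * B / a := by
    have := hu.eigenvalue_pos
    have := hu.bound_pos
    have := hu.margin_pos
    positivity
  have h_scaled := mul_le_mul_of_nonneg_left h_width h_slope
  have h_eq : 2 * μ * B / a * (a / 2 * volume.real Ω) = μ * (B * volume.real Ω) := by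
    field_simp [hu.margin_pos.ne']
  refine le_of_mul_le_mul_left ?_ (hu.ωvol2_pos hx_mem)
  linarith

theorem le_eigenvalue (hu : SeparatedEigenfunction Ω ε u μ B c a) (hε : 4 * B * ε ≤ c) :
    c * a ≤ 2 * B * μ := by
  have ha := hu.margin_pos
  have ha_le := hu.margin_le
  have h_drop := hu.le_ubar2_sub hu.smooth ha (by linarith : a ≤ 1 - a) (by linarith)
    (fun p => hu.abs_closureGrad_apply_one_le_mul_min) fun z => hu.neg_le_ubar2_closureGrad_zero
  have h_left := hu.le_ubar2_of_le ⟨ha, by linarith⟩ le_rfl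
  have h_right := hu.ubar2_le_neg_of_le (x := 1 - a) ⟨by linarith, by linarith⟩ le_rfl
  have h_slope : c ≤ 2 * μ * B / a := by
    have := hu.threshold_pos
    by_contra! h_lt
    nlinarith [mul_pos hu.bound_pos hu.pos]
  rw [le_div_iff₀ ha] at h_slope
  linarith

theorem abs_sub_ubar2_le_of_mem_Ioo (hu : SeparatedEigenfunction Ω ε u μ B c a)
    (hx : x ∈ Icc a (1 - a)) (hεδ : ε ≤ δ) (hp : p ∈ Ω) (hpx : p 0 ∈ Ioo x (x + δ)) :
    |u p - ubar2 Ω u x| ≤ 3 * B * δ := by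
  refine hu.abs_sub_ubar2_le_of_forall hu.continuousOn (hu.mem_Ioo_of_mem_Icc hx)
    fun q hq hqx => (hu.abs_sub_le hp hq).trans ?_
  have h_dist : |p 0 - q 0| ≤ δ := by
    rw [hqx, abs_of_pos (sub_pos.2 hpx.1)]
    linarith [hpx.2]
  nlinarith [hu.bound_pos]

theorem volume_real_transition_le (hu : SeparatedEigenfunction Ω ε u μ B c a)
    (hx : x ∈ Icc a (1 - a)) (hδ : 0 < δ) (hδa : δ ≤ a) :
    volume.real (slab Ω (Ioo x (x + δ))) ≤ 16 * δ * volume.real Ω := by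
  have h_area := hu.volume_real_slab_Ioo_le (y := x + δ) (hu.mem_Ioo_of_mem_Icc hx).1.le
    (by linarith) (by linarith [hx.2])
  linarith

theorem abs_weightedMass_sub_le (hu : SeparatedEigenfunction Ω ε u μ B c a)
    (hx : x ∈ Icc a (1 - a)) (hεδ : ε ≤ δ) (hδa : δ ≤ a) {χ : ℝ → ℝ} (hχ : Continuous χ)
    (hχ_abs : ∀ s, |χ s| ≤ 1) (hχ_one : ∀ s ≤ x, χ s = 1) (hχ_zero : ∀ s, x + δ ≤ s → χ s = 0) :
    |(∫ p in Ω, χ (p 0) * (u p + -ubar2 Ω u x)) - ((∫ p in slab Ω (Iic x), u p) +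
      -ubar2 Ω u x * volume.real (slab Ω (Iic x)))| ≤ 48 * B * δ * volume.real Ω := by
  have hδ : 0 < δ := hu.pos.trans_le hεδ
  have h_left : ∫ p in slab Ω (Iic x), χ (p 0) * (u p + -ubar2 Ω u x) =
      (∫ p in slab Ω (Iic x), u p) + -ubar2 Ω u x * volume.real (slab Ω (Iic x)) := by
    have h_one : ∫ p in slab Ω (Iic x), χ (p 0) * (u p + -ubar2 Ω u x) =
        ∫ p in slab Ω (Iic x), (u p + -ubar2 Ω u x) :=
      setIntegral_congr_fun (measurableSet_slab hu.measurableSet measurableSet_Iic) fun p hp => by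
        simp only [hχ_one _ hp.2, one_mul]
    rw [h_one, integral_add ((hu.integrableOn hu.continuousOn).mono_set (slab_subset Ω _))
      (integrableOn_const (hu.volume_slab_ne_top _)), setIntegral_const, smul_eq_mul, mul_comm]
  rw [← h_left]
  have h_transition := hu.abs_setIntegral_sub_setIntegral_slab_Iic_le (x := x) (y := x + δ)
    (f := fun p => χ (p 0) * (u p + -ubar2 Ω u x)) (M := 3 * B * δ)
    ((hχ.comp (by fun_prop)).continuousOn.fun_mul (hu.continuousOn.add continuousOn_const))
    (fun p hp hpx => ?_) fun p _ hpx => by rw [hχ_zero _ hpx, zero_mul]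
  · refine h_transition.trans ?_
    have h_area := hu.volume_real_transition_le hx hδ hδa
    have h_δ : 48 * B * δ * δ ≤ 48 * B * δ :=
      mul_le_of_le_one_right (by have := hu.bound_pos; positivity) (by linarith [hu.margin_le])
    have h_pos : 0 ≤ 3 * B * δ := by have := hu.bound_pos; positivity
    nlinarith [hu.volume_pos, mul_le_mul_of_nonneg_left h_area h_pos]
  · rw [abs_mul, ← sub_eq_add_neg]
    exact (mul_le_of_le_one_left (abs_nonneg _) (hχ_abs _)).trans
      (hu.abs_sub_ubar2_le_of_mem_Ioo hx hεδ hp hpx)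

theorem setIntegral_norm_closureGrad_cutoff_sq_mul_le (hu : SeparatedEigenfunction Ω ε u μ B c a)
    (hx : x ∈ Icc a (1 - a)) (hεδ : ε ≤ δ) (hδa : δ ≤ a) :
    ∫ p in Ω, ‖closureGrad Ω (fun q => cutoff x δ (q 0)) p‖ ^ 2 * (u p + -ubar2 Ω u x) ^ 2 ≤
      144 * transitionSlope ^ 2 * B ^ 2 * δ * volume.real Ω := by
  have hδ : 0 < δ := hu.pos.trans_le hεδ
  have h_grad (p : ℝ²) (hp : p ∈ Ω) :
      ‖closureGrad Ω (fun q => cutoff x δ (q 0)) p‖ = |deriv (cutoff x δ) (p 0)| := by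
    rw [closureGrad_comp_apply hu.toIsBoundedConvexDomain (contDiff_cutoff.differentiable (by simp))
      0 (subset_closure hp), PiLp.norm_single, Real.norm_eq_abs]
  have h_left : ∫ p in slab Ω (Iic x), ‖closureGrad Ω (fun q => cutoff x δ (q 0)) p‖ ^ 2 *
      (u p + -ubar2 Ω u x) ^ 2 = 0 :=
    setIntegral_eq_zero_of_forall_eq_zero fun p hp => by
      rw [h_grad p hp.1, deriv_cutoff_eq_zero hδ (Or.inl hp.2), abs_zero, zero_pow two_ne_zero,
        zero_mul]
  have h_transition := hu.abs_setIntegral_sub_setIntegral_slab_Iic_le (x := x) (y := x + δ)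
    (M := (transitionSlope / δ) ^ 2 * (3 * B * δ) ^ 2)
    (((hu.continuousOn_closureGrad (smoothOnClosure_comp_apply (contDiff_cutoff (x := x) (δ := δ))
      0)).norm.fun_pow 2).fun_mul
      ((hu.continuousOn.fun_add (continuousOn_const (c := -ubar2 Ω u x))).fun_pow 2))
    (fun p hp hpx => ?_) fun p hp hpx => by
      rw [h_grad p hp, deriv_cutoff_eq_zero hδ (Or.inr hpx), abs_zero, zero_pow two_ne_zero,
        zero_mul]
  · rw [h_left, sub_zero] at h_transition
    calc ∫ p in Ω, ‖closureGrad Ω (fun q => cutoff x δ (q 0)) p‖ ^ 2 * (u p + -ubar2 Ω u x) ^ 2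
        ≤ (transitionSlope / δ) ^ 2 * (3 * B * δ) ^ 2 * volume.real (slab Ω (Ioo x (x + δ))) :=
          (le_abs_self _).trans h_transition
      _ ≤ (transitionSlope / δ) ^ 2 * (3 * B * δ) ^ 2 * (16 * δ * volume.real Ω) :=
          mul_le_mul_of_nonneg_left (hu.volume_real_transition_le hx hδ hδa) (by positivity)
      _ = 144 * transitionSlope ^ 2 * B ^ 2 * δ * volume.real Ω := by
          field_simp
          ring
  · rw [h_grad p hp, abs_mul, abs_pow, abs_pow, abs_abs, ← sub_eq_add_neg]
    exact mul_le_mul (pow_le_pow_left₀ (abs_nonneg _) (abs_deriv_cutoff_le hδ) 2)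
      (pow_le_pow_left₀ (abs_nonneg _) (hu.abs_sub_ubar2_le_of_mem_Ioo hx hεδ hp hpx) 2)
      (by positivity) (by positivity)

theorem neg_ubar2_le (hu : SeparatedEigenfunction Ω ε u μ B c a) (hx : x ∈ Ioo (0 : ℝ) 1) :
    -ubar2 Ω u x ≤ B :=
  neg_le.1 <| hu.le_ubar2 hu.continuousOn hx fun p hp _ => (abs_le.1 (hu.abs_le_bound p hp)).1

theorem abs_cutoffMass_div_sub_le (hu : SeparatedEigenfunction Ω ε u μ B c a)
    (hx : x ∈ Icc a (1 - a)) (hεδ : ε ≤ δ) (hδa : δ ≤ a) {n : ℕ} (hn : n ≠ 0) :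
    |(∫ p in Ω, cutoff x δ (p 0) ^ n * (u p + -ubar2 Ω u x)) / volume.real Ω -
      ((∫ p in slab Ω (Iic x), u p) / volume.real Ω +
        -ubar2 Ω u x * (volume.real (slab Ω (Iic x)) / volume.real Ω))| ≤ 48 * B * δ := by
  have hδ : 0 < δ := hu.pos.trans_le hεδ
  have hW := hu.volume_pos
  rw [← mul_div_assoc, ← add_div, ← sub_div, abs_div, abs_of_pos hW, div_le_iff₀ hW]
  refine hu.abs_weightedMass_sub_le hx hεδ hδa (χ := fun s => cutoff x δ s ^ n)
    (contDiff_cutoff.continuous.pow n) (fun s => ?_)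
    (fun s hs => by rw [cutoff_eq_one hδ hs, one_pow])
    fun s hs => by rw [cutoff_eq_zero hδ hs, zero_pow hn]
  rw [abs_of_nonneg (pow_nonneg cutoff_nonneg n)]
  exact pow_le_one₀ cutoff_nonneg cutoff_le_one

/-- Testing the Poincaré inequality with `χ (u - ū(x))`, where `χ` cuts off just after `x`: if `ū`
is negative at `x`, then the mass of `u` to the left of `x` cannot be small. -/
theorem mul_sq_sub_le_of_ubar2_le_neg (hu : SeparatedEigenfunction Ω ε u μ B c a)
    (hx : x ∈ Icc a (1 - a)) (hεδ : ε ≤ δ) (hδa : δ ≤ a) (hβ : 0 ≤ β)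
    (hxβ : ubar2 Ω u x ≤ -β) (h_mass : 0 ≤ ∫ p in slab Ω (Iic x), u p)
    (h_massη : ∫ p in slab Ω (Iic x), u p ≤ η * volume.real Ω) (hηδ : η + 48 * B * δ ≤ 1) :
    μ * (β ^ 2 * (a ^ 2 / 8) / 2 - 4 * B * (η + 48 * B * δ)) ≤
      144 * transitionSlope ^ 2 * B ^ 2 * δ := by
  have hW := hu.volume_pos
  have h_area := hu.volume_real_slab_Iic_mem_Icc hu.margin_pos.le hx
  have h_mass₁ := hu.abs_cutoffMass_div_sub_le hx hεδ hδa one_ne_zero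
  simp only [pow_one] at h_mass₁
  have h_mass₂ := hu.abs_cutoffMass_div_sub_le hx hεδ hδa two_ne_zero
  have hδ : 0 < δ := hu.pos.trans_le hεδ
  have h_lower := sq_mul_half_sub_le_mul_sub_sq (r := a ^ 2 / 8) (η := η) hβ (le_neg.1 hxβ)
    (hu.neg_ubar2_le (hu.mem_Ioo_of_mem_Icc hx)) hu.one_le_bound (by positivity)
    (by nlinarith [hu.margin_pos, hu.margin_le]) ((le_div_iff₀ hW).2 h_area.1)
    ((div_le_iff₀ hW).2 h_area.2) (div_nonneg h_mass hW.le) ((div_le_iff₀ hW).2 h_massη)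
    (by have := hu.bound_pos; positivity) hηδ h_mass₁ h_mass₂
  have h_poincare := (hu.poincare_mul_add_const hu.toIsBoundedConvexDomain
    (smoothOnClosure_comp_apply (contDiff_cutoff (x := x) (δ := δ)) 0) (-ubar2 Ω u x)).trans
    (hu.setIntegral_norm_closureGrad_cutoff_sq_mul_le hx hεδ hδa)
  refine (mul_le_mul_of_nonneg_left h_lower hu.eigenvalue_pos.le).trans ?_
  refine le_of_mul_le_mul_right (le_of_eq_of_le ?_ h_poincare) hW
  field_simp

theorem ubar2_closureGrad_zero_le (hu : SeparatedEigenfunction Ω ε u μ B c a)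
    (hx : x ∈ Ioo (0 : ℝ) 1) (hη : 0 ≤ η)
    (h_mass : η * volume.real Ω ≤ ∫ p in slab Ω (Iic x), u p) :
    ubar2 Ω (fun p => closureGrad Ω u p 0) x ≤ -(μ * η / 16) := by
  have h_flux := hu.ωvol2_mul_ubar2_closureGrad_zero hu.toIsFirstNeumannEigenfunction hx
  have h_slope : 0 ≤ μ * η / 16 := by
    have := hu.eigenvalue_pos
    positivity
  have h_width := mul_le_mul_of_nonneg_left (hu.ωvol2_le_mul_volume_real hx) h_slope
  have h_scaled := mul_le_mul_of_nonneg_left h_mass hu.eigenvalue_pos.le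
  refine le_of_mul_le_mul_left ?_ (hu.ωvol2_pos hx)
  linarith

theorem mul_volume_real_le_setIntegral_slab_Iic_margin
    (hu : SeparatedEigenfunction Ω ε u μ B c a) :
    c * (a ^ 2 / 8) * volume.real Ω ≤ ∫ p in slab Ω (Iic a), u p := by
  have h_area := (hu.volume_real_slab_Iic_mem_Icc hu.margin_pos.le (x := a)
    ⟨le_rfl, by linarith [hu.margin_le]⟩).1
  have h_mass : c * volume.real (slab Ω (Iic a)) ≤ ∫ p in slab Ω (Iic a), u p :=
    setIntegral_ge_of_const_le_real (measurableSet_slab hu.measurableSet measurableSet_Iic)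
      (hu.volume_slab_ne_top _) (fun p hp => hu.le_of_apply_zero_le p hp.1 hp.2)
      ((hu.integrableOn hu.continuousOn).mono_set (slab_subset Ω _))
  rw [mul_assoc]
  exact (mul_le_mul_of_nonneg_left h_area hu.threshold_pos.le).trans h_mass

theorem ubar2_le_neg_of_setIntegral_slab_Iic_eq (hu : SeparatedEigenfunction Ω ε u μ B c a)
    (hx : x ∈ Icc a (1 - a)) (hη : 0 ≤ η) (hηc : 4 * η < c * (a ^ 2 / 8))
    (hε : 16 * B * ε ≤ c * (a ^ 2 / 8))
    (h_mass : ∫ p in slab Ω (Iic x), u p = η * volume.real Ω)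
    (h_ge : ∀ z ∈ Icc a x, η * volume.real Ω ≤ ∫ p in slab Ω (Iic z), u p) :
    ubar2 Ω u x ≤ -(c * (a ^ 2 / 8) / 2) := by
  have hBε : 0 ≤ B * ε := mul_nonneg hu.bound_pos.le hu.pos.le
  have h_mem {z : ℝ} (hz : z ∈ Icc a x) : z ∈ Ioo (0 : ℝ) 1 :=
    hu.mem_Ioo_of_mem_Icc ⟨hz.1, hz.2.trans hx.2⟩
  by_contra! h_lt
  have h_lower (z : ℝ) (hz : z ∈ Ioc a x) : -(3 / 4 * (c * (a ^ 2 / 8))) ≤ ubar2 Ω u z := by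
    have hz_mem := h_mem (Ioc_subset_Icc_self hz)
    have h_growth := hu.ubar2_sub_le hu.smooth hz_mem.1 hz.2 (hu.mem_Ioo_of_mem_Icc hx).2
      (fun p hp hpz => hu.abs_closureGrad_apply_one_le_mul_min hp
        ⟨hz.1.le.trans hpz.1, hpz.2.trans hx.2⟩) (g := 0) fun w hw => by
          have hwx : w ∈ Icc a x := ⟨hz.1.le.trans hw.1, hw.2⟩
          have := hu.ubar2_closureGrad_zero_le (h_mem hwx) hη (h_ge w hwx)
          have := mul_nonneg hu.eigenvalue_pos.le hη
          linarith
    have h_length : x - z ≤ 1 := by linarith [(hu.mem_Ioo_of_mem_Icc hx).2, hz_mem.1]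
    nlinarith
  have h_right := hu.mul_volume_real_slab_le_setIntegral_slab hu.continuousOn measurableSet_Ioc
    h_lower
  have h_area := hu.volume_real_slab_le (Ioc a x)
  have h_split := setIntegral_slab_union hu.measurableSet (hu.integrableOn hu.continuousOn)
    (Iic_disjoint_Ioc (le_refl a) (c := x)) measurableSet_Ioc
  rw [Iic_union_Ioc_eq_Iic hx.1, h_mass] at h_split
  nlinarith [hu.mul_volume_real_le_setIntegral_slab_Iic_margin, hu.volume_pos, hu.threshold_pos]

theorem mul_volume_real_le_setIntegral_slab_Iic (hu : SeparatedEigenfunction Ω ε u μ B c a)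
    (hη : 0 ≤ η) (hηc : 4 * η < c * (a ^ 2 / 8)) (hε : 16 * B * ε ≤ c * (a ^ 2 / 8))
    (hεδ : ε ≤ δ) (hδa : δ ≤ a) (hηδ : η + 48 * B * δ ≤ 1)
    (h_gap : 144 * transitionSlope ^ 2 * B ^ 2 * δ <
      μ * ((c * (a ^ 2 / 8) / 2) ^ 2 * (a ^ 2 / 8) / 2 - 4 * B * (η + 48 * B * δ)))
    (hx : x ∈ Icc a (1 - a)) : η * volume.real Ω ≤ ∫ p in slab Ω (Iic x), u p := by
  have h_threshold : 0 ≤ c * (a ^ 2 / 8) := by linarith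
  by_contra! h_lt
  obtain ⟨z, hz, h_mass, h_ge⟩ := exists_eq_and_forall_Icc_le hx.1
    (hu.continuous_setIntegral_slab_Iic hu.continuousOn).continuousOn
    ((mul_le_mul_of_nonneg_right (by linarith) hu.volume_pos.le).trans
      hu.mul_volume_real_le_setIntegral_slab_Iic_margin) h_lt.le
  have hz_mem : z ∈ Icc a (1 - a) := ⟨hz.1, hz.2.trans hx.2⟩
  have h_ubar := hu.ubar2_le_neg_of_setIntegral_slab_Iic_eq hz_mem hη hηc hε h_mass h_ge
  exact h_gap.not_ge <| hu.mul_sq_sub_le_of_ubar2_le_neg hz_mem hεδ hδa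
    (div_nonneg h_threshold zero_le_two) h_ubar (h_mass ▸ mul_nonneg hη hu.volume_pos.le)
    h_mass.le hηδ

end SeparatedEigenfunction

theorem exists_pos_gap {B c a : ℝ} (hB : 0 < B) (hc : 0 < c) (ha : 0 < a) :
    ∃ δ > 0, δ ≤ a ∧ 4 * δ < c * (a ^ 2 / 8) ∧ δ + 48 * B * δ ≤ 1 ∧
      ∀ μ, c * a ≤ 2 * B * μ → 144 * transitionSlope ^ 2 * B ^ 2 * δ <
        μ * ((c * (a ^ 2 / 8) / 2) ^ 2 * (a ^ 2 / 8) / 2 - 4 * B * (δ + 48 * B * δ)) := by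
  have h_eventually_lt {f g : ℝ → ℝ} (hf : Continuous f) (hg : Continuous g) (h0 : f 0 < g 0) :
      ∀ᶠ δ in 𝓝[>] 0, f δ < g δ :=
    (hf.continuousAt.eventually_lt hg.continuousAt h0).filter_mono nhdsWithin_le_nhds
  obtain ⟨δ, hδ, hδa, hδc, hδ_one, hδ_gap⟩ := (eventually_mem_nhdsWithin.and <|
    (h_eventually_lt continuous_id continuous_const ha).and <|
    (h_eventually_lt (f := fun δ => 4 * δ) (g := fun _ => c * (a ^ 2 / 8)) (by fun_prop)
      (by fun_prop) (by simp only [mul_zero]; positivity)).and <|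
    (h_eventually_lt (f := fun δ => δ + 48 * B * δ) (g := fun _ => 1) (by fun_prop)
      (by fun_prop) (by norm_num)).and <|
    h_eventually_lt (f := fun δ => 144 * transitionSlope ^ 2 * B ^ 2 * δ)
      (g := fun δ => c * a / (2 * B) *
        ((c * (a ^ 2 / 8) / 2) ^ 2 * (a ^ 2 / 8) / 2 - 4 * B * (δ + 48 * B * δ)))
      (by fun_prop) (by fun_prop) (by simp only [mul_zero, add_zero, sub_zero]; positivity)).exists
  refine ⟨δ, hδ, hδa.le, hδc, hδ_one.le, fun μ hμ => hδ_gap.trans_le ?_⟩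
  have h_left : 0 ≤ 144 * transitionSlope ^ 2 * B ^ 2 * δ :=
    mul_nonneg (by positivity) (le_of_lt hδ)
  refine mul_le_mul_of_nonneg_right ((div_le_iff₀' (by positivity)).2 hμ) ?_
  exact (pos_of_mul_pos_right (h_left.trans_lt hδ_gap) (by positivity)).le

/-- The flux identity turns the lower bound on the mass of `u` to the left of each middle section
into a definite rate of decrease of `ū`. -/
theorem SeparatedEigenfunction.exists_forall_mul_sub_le_ubar2_sub {B c a : ℝ} (hB : 0 < B)
    (hc : 0 < c) (ha : 0 < a) :
    ∃ κ > 0, ∃ ε₁ > 0, ∀ {Ω : Set ℝ²} {ε : ℝ} {u : ℝ² → ℝ} {μ : ℝ},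
      SeparatedEigenfunction Ω ε u μ B c a → ε < ε₁ → ∀ x ∈ Icc a (1 - a), ∀ y ∈ Icc x (1 - a),
        κ * (y - x) ≤ ubar2 Ω u x - ubar2 Ω u y := by
  obtain ⟨δ, hδ, hδa, hδc, hδ_one, h_gap⟩ := exists_pos_gap hB hc ha
  have hκ : 0 < c * a / (2 * B) * δ / 32 := by positivity
  refine ⟨c * a / (2 * B) * δ / 32, hκ, min δ (min (c * (a ^ 2 / 8)) (c * a / (2 * B) * δ / 32) /
    (16 * B)), by positivity, fun {Ω ε u μ} hu hε x hx y hy => ?_⟩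
  obtain ⟨hεδ, hε⟩ := lt_min_iff.1 hε
  obtain ⟨hεc, hεκ⟩ := lt_min_iff.1 ((lt_div_iff₀' (by positivity)).1 hε)
  have ha_sq : a ^ 2 / 8 ≤ 1 := by nlinarith [hu.margin_le]
  have hμ : c * a ≤ 2 * B * μ := hu.le_eigenvalue (by nlinarith [mul_pos hB hu.pos])
  have hμ_div : c * a / (2 * B) ≤ μ := (div_le_iff₀' (by positivity)).2 hμ
  have h_growth := hu.ubar2_sub_le hu.smooth (hu.mem_Ioo_of_mem_Icc hx).1 hy.1
    (hu.mem_Ioo_of_mem_Icc ⟨hx.1.trans hy.1, hy.2⟩).2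
    (fun p hp hpz => hu.abs_closureGrad_apply_one_le_mul_min hp
      ⟨hx.1.trans hpz.1, hpz.2.trans hy.2⟩) (g := -(2 * (c * a / (2 * B) * δ / 32))) fun z hz => by
        have hz_mem : z ∈ Icc a (1 - a) := ⟨hx.1.trans hz.1, hz.2.trans hy.2⟩
        have h_slope := hu.ubar2_closureGrad_zero_le (hu.mem_Ioo_of_mem_Icc hz_mem) (le_of_lt hδ)
          (hu.mul_volume_real_le_setIntegral_slab_Iic (le_of_lt hδ) hδc hεc.le hεδ.le hδa hδ_one
            (h_gap μ hμ) hz_mem)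
        nlinarith [mul_le_mul_of_nonneg_right hμ_div (le_of_lt hδ)]
  nlinarith [sub_nonneg.2 hy.1, mul_pos hB hu.pos]

/-! ### Normalisation and the width of the nodal set -/

/-- A first Neumann eigenfunction `u` of the smoothly bounded thin domain `Ω` obeying the gradient
and endpoint estimates of [CJK2009] with constants `c₀` and `C₀`. -/
structure CJKEigenfunction (Ω : Set ℝ²) (ε : ℝ) (u : ℝ² → ℝ) (μ c₀ C₀ : ℝ) : Prop extends
    ThinConvexDomain Ω ε, IsFirstNeumannEigenfunction Ω u μ where
  exists_isDefiningFunction : ∃ F, IsDefiningFunction Ω F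
  exists_ne_zero : ∃ p ∈ Ω, u p ≠ 0
  lap_eq : ∀ p ∈ Ω, lap u p = -(μ * u p)
  norm_gradient_le : ∀ p ∈ Ω, ‖gradient u p‖ ≤
    C₀ * max (min (p 0) (1 - p 0)) ε * sSup ((fun q => |u q|) '' Ω)
  mul_sSup_le : c₀ * sSup (u '' Ω) ≤ -sInf (u '' Ω)
  neg_sInf_le : -sInf (u '' Ω) ≤ C₀ * sSup (u '' Ω)
  exists_tendsto_zero : ∃ L, Tendsto (ubar2 Ω u) (𝓝[>] 0) (𝓝 L) ∧ (1 - C₀ * ε) * sSup (u '' Ω) ≤ L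
  exists_tendsto_one : ∃ L, Tendsto (ubar2 Ω u) (𝓝[<] 1) (𝓝 L) ∧ L ≤ (1 - C₀ * ε) * sInf (u '' Ω)

namespace CJKEigenfunction

variable {Ω : Set ℝ²} {ε μ c₀ C₀ c a x : ℝ} {u : ℝ² → ℝ} {p q : ℝ²}

theorem continuousOn (hu : CJKEigenfunction Ω ε u μ c₀ C₀) : ContinuousOn u (closure Ω) :=
  hu.smooth.continuousOn

theorem mem_Icc_sInf_sSup (hu : CJKEigenfunction Ω ε u μ c₀ C₀) (hp : p ∈ Ω) :
    u p ∈ Icc (sInf (u '' Ω)) (sSup (u '' Ω)) := by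
  have h_bdd := (hu.isBounded.isCompact_closure.image_of_continuousOn
    hu.continuousOn).isBounded.subset (image_mono subset_closure)
  exact ⟨csInf_le h_bdd.bddBelow (mem_image_of_mem u hp),
    le_csSup h_bdd.bddAbove (mem_image_of_mem u hp)⟩

theorem sSup_pos (hu : CJKEigenfunction Ω ε u μ c₀ C₀) (hC₀ : 0 < C₀) : 0 < sSup (u '' Ω) := by
  obtain ⟨p, hp, hp_ne⟩ := hu.exists_ne_zero
  obtain ⟨h_inf, h_sup⟩ := hu.mem_Icc_sInf_sSup hp
  by_contra! h_nonpos
  have := mul_nonpos_of_nonneg_of_nonpos hC₀.le h_nonpos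
  exact hp_ne (le_antisymm (h_sup.trans h_nonpos) (by linarith [hu.neg_sInf_le]))

theorem abs_le_mul_sSup (hu : CJKEigenfunction Ω ε u μ c₀ C₀) (hC₀ : 0 < C₀) (hp : p ∈ Ω) :
    |u p| ≤ (1 + C₀) * sSup (u '' Ω) := by
  obtain ⟨h_inf, h_sup⟩ := hu.mem_Icc_sInf_sSup hp
  have h_pos := hu.sSup_pos hC₀
  have := mul_pos hC₀ h_pos
  exact abs_le.2 ⟨by linarith [hu.neg_sInf_le], by linarith⟩

theorem norm_closureGrad_le (hu : CJKEigenfunction Ω ε u μ c₀ C₀) (hC₀ : 0 < C₀) (hp : p ∈ Ω) :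
    ‖closureGrad Ω u p‖ ≤
      (1 + C₀) ^ 2 * sSup (u '' Ω) * max (min (p 0) (1 - p 0)) ε := by
  have h_sup : sSup ((fun q => |u q|) '' Ω) ≤ (1 + C₀) * sSup (u '' Ω) :=
    csSup_le (hu.nonempty.image _) (forall_mem_image.2 fun q hq => hu.abs_le_mul_sSup hC₀ hq)
  have h_max : 0 ≤ max (min (p 0) (1 - p 0)) ε := hu.pos.le.trans (le_max_right _ _)
  have h_pos := hu.sSup_pos hC₀
  rw [closureGrad_eq_gradient hu.isOpen hp]
  calc ‖gradient u p‖
      ≤ C₀ * max (min (p 0) (1 - p 0)) ε * ((1 + C₀) * sSup (u '' Ω)) :=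
        (hu.norm_gradient_le p hp).trans (mul_le_mul_of_nonneg_left h_sup (by positivity))
    _ = C₀ * (1 + C₀) * sSup (u '' Ω) * max (min (p 0) (1 - p 0)) ε := by ring
    _ ≤ (1 + C₀) ^ 2 * sSup (u '' Ω) * max (min (p 0) (1 - p 0)) ε := by
        gcongr
        nlinarith

theorem abs_sub_ubar2_le_of_abs_sub_le (hu : CJKEigenfunction Ω ε u μ c₀ C₀) (hC₀ : 0 < C₀)
    (ha : a ≤ 1) (hεa : ε ≤ a) (hp : p ∈ Ω) (hx : x ∈ Ioo (0 : ℝ) 1) (hpx : |p 0 - x| ≤ a) :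
    |u p - ubar2 Ω u x| ≤ (1 + C₀) ^ 2 * sSup (u '' Ω) * (3 * a) := by
  have h_coeff : 0 ≤ (1 + C₀) ^ 2 * sSup (u '' Ω) := by
    have := hu.sSup_pos hC₀
    positivity
  have h_grad (q : ℝ²) (hq : q ∈ Ω) : ‖closureGrad Ω u q‖ ≤ (1 + C₀) ^ 2 * sSup (u '' Ω) :=
    (hu.norm_closureGrad_le hC₀ hq).trans <| mul_le_of_le_one_right h_coeff <|
      max_le ((min_le_left _ _).trans (hu.apply_zero_mem q hq).2.le) (hεa.trans ha)
  refine hu.abs_sub_ubar2_le_of_forall hu.continuousOn hx fun q hq hqx => ?_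
  refine (hu.abs_sub_le_mul_abs_apply_zero_sub_add hu.smooth h_grad hp hq).trans ?_
  rw [hqx]
  exact mul_le_mul_of_nonneg_left (by linarith) h_coeff

theorem sub_le_of_apply_zero_le (hu : CJKEigenfunction Ω ε u μ c₀ C₀) (hC₀ : 0 < C₀) (ha : a ≤ 1)
    (hεa : ε ≤ a) (hp : p ∈ Ω) (hpa : p 0 ≤ a) :
    (1 - C₀ * ε) * sSup (u '' Ω) - (1 + C₀) ^ 2 * sSup (u '' Ω) * (3 * a) ≤ u p := by
  obtain ⟨L, hL, hL_ge⟩ := hu.exists_tendsto_zero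
  have h_lim : L ≤ u p + (1 + C₀) ^ 2 * sSup (u '' Ω) * (3 * a) := by
    refine le_of_tendsto hL ?_
    filter_upwards [Ioo_mem_nhdsGT (hu.pos.trans_le hεa)] with x hx
    have h_close := hu.abs_sub_ubar2_le_of_abs_sub_le hC₀ ha hεa hp (x := x)
      ⟨hx.1, hx.2.trans_le ha⟩
      (abs_le.2 ⟨by linarith [hx.2, (hu.apply_zero_mem p hp).1], by linarith [hx.1]⟩)
    linarith [(abs_le.1 h_close).1]
  linarith

theorem le_add_of_le_apply_zero (hu : CJKEigenfunction Ω ε u μ c₀ C₀) (hC₀ : 0 < C₀) (ha : a ≤ 1)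
    (hεa : ε ≤ a) (hp : p ∈ Ω) (hpa : 1 - a ≤ p 0) :
    u p ≤ (1 - C₀ * ε) * sInf (u '' Ω) + (1 + C₀) ^ 2 * sSup (u '' Ω) * (3 * a) := by
  obtain ⟨L, hL, hL_le⟩ := hu.exists_tendsto_one
  have h_lim : u p - (1 + C₀) ^ 2 * sSup (u '' Ω) * (3 * a) ≤ L := by
    refine ge_of_tendsto hL ?_
    filter_upwards [Ioo_mem_nhdsLT (sub_lt_self 1 (hu.pos.trans_le hεa))] with x hx
    have h_close := hu.abs_sub_ubar2_le_of_abs_sub_le hC₀ ha hεa hp (x := x)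
      ⟨(sub_nonneg.2 ha).trans_lt hx.1, hx.2⟩
      (abs_le.2 ⟨by linarith [hx.2], by linarith [hx.1, (hu.apply_zero_mem p hp).2]⟩)
    linarith [(abs_le.1 h_close).2]
  linarith

theorem separatedEigenfunction (hu : CJKEigenfunction Ω ε u μ c₀ C₀) (hC₀ : 0 < C₀) (hc : 0 < c)
    (hc_half : c ≤ 1 / 2) (hcc₀ : 2 * c ≤ c₀) (ha : 4 * (1 + C₀) ^ 2 * a = c) (hεa : ε ≤ a) :
    SeparatedEigenfunction Ω ε (fun p => (sSup (u '' Ω))⁻¹ * u p) μ ((1 + C₀) ^ 2) c a := by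
  have hm := hu.sSup_pos hC₀
  have ha_pos : 0 < a := hu.pos.trans_le hεa
  have ha_le : a ≤ 1 / 8 := by nlinarith
  have hCε : C₀ * ε ≤ 1 / 8 := by nlinarith [mul_le_mul_of_nonneg_left hεa hC₀.le, sq_nonneg C₀]
  refine ⟨hu.toThinConvexDomain, hu.const_mul hu.toIsBoundedConvexDomain _, by nlinarith, hc,
    ha_pos, by linarith, hεa, fun p hp => ?_, fun p hp => ?_, fun p hp hpa => ?_,
    fun p hp hpa => ?_⟩
  · rw [abs_mul, abs_of_pos (inv_pos.2 hm), inv_mul_le_iff₀ hm, mul_comm (sSup _)]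
    refine (hu.abs_le_mul_sSup hC₀ hp).trans (mul_le_mul_of_nonneg_right ?_ hm.le)
    nlinarith
  · rw [hu.closureGrad_const_mul hu.smooth _ (subset_closure hp), norm_smul, Real.norm_eq_abs,
      abs_of_pos (inv_pos.2 hm), inv_mul_le_iff₀ hm]
    exact (hu.norm_closureGrad_le hC₀ hp).trans_eq (by ring)
  · rw [le_inv_mul_iff₀ hm]
    have h_le := hu.sub_le_of_apply_zero_le hC₀ (by linarith) hεa hp hpa
    nlinarith
  · rw [inv_mul_le_iff₀ hm]
    have h_le := hu.le_add_of_le_apply_zero hC₀ (by linarith) hεa hp hpa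
    have h_inf : sInf (u '' Ω) ≤ -(2 * c * sSup (u '' Ω)) := by
      nlinarith [hu.mul_sSup_le]
    nlinarith [mul_le_mul_of_nonneg_left h_inf (by linarith : 0 ≤ 1 - C₀ * ε), mul_pos hc hm]

end CJKEigenfunction

theorem SeparatedEigenfunction.mul_abs_apply_zero_sub_le {Ω : Set ℝ²} {ε μ B c a κ G s : ℝ}
    {u : ℝ² → ℝ} {p : ℝ²} (hu : SeparatedEigenfunction Ω ε u μ B c a)
    (h_decay : ∀ x ∈ Icc a (1 - a), ∀ y ∈ Icc x (1 - a), κ * (y - x) ≤ ubar2 Ω u x - ubar2 Ω u y)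
    (h_grad : ∀ q ∈ Ω, |closureGrad Ω u q 1| ≤ G) (hs : s ∈ Ioo (0 : ℝ) 1)
    (hs0 : ubar2 Ω u s = 0) (hp : p ∈ Ω) (hp0 : u p = 0) : κ * |p 0 - s| ≤ 2 * G * ε := by
  have hc := hu.threshold_pos
  have hs_mem : s ∈ Icc a (1 - a) := by
    constructor <;> by_contra! h_lt
    · linarith [hu.le_ubar2_of_le hs h_lt.le]
    · linarith [hu.ubar2_le_neg_of_le hs h_lt.le]
  have hp_mem : p 0 ∈ Icc a (1 - a) := by
    constructor <;> by_contra! h_lt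
    · linarith [hu.le_of_apply_zero_le p hp h_lt.le]
    · linarith [hu.le_neg_of_le_apply_zero p hp h_lt.le]
  have h_average := abs_le.1 (hu.abs_sub_ubar2_le hu.smooth h_grad hp)
  rw [hp0] at h_average
  rcases le_total (p 0) s with h_le | h_le
  · rw [abs_of_nonpos (sub_nonpos.2 h_le)]
    linarith [h_decay _ hp_mem _ ⟨h_le, hs_mem.2⟩]
  · rw [abs_of_nonneg (sub_nonneg.2 h_le)]
    linarith [h_decay _ hs_mem _ ⟨h_le, hp_mem.2⟩]

theorem CJKEigenfunction.exists_forall_abs_apply_zero_sub_le {c₀ C₀ : ℝ} (hc₀ : 0 < c₀)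
    (hC₀ : 0 < C₀) :
    ∃ C > 0, ∃ ε₀ > 0, ∀ {Ω : Set ℝ²} {ε : ℝ} {u : ℝ² → ℝ} {μ s : ℝ},
      CJKEigenfunction Ω ε u μ c₀ C₀ → ε < ε₀ → s ∈ Ioo (0 : ℝ) 1 → ubar2 Ω u s = 0 →
        ∀ p ∈ Ω, u p = 0 → |p 0 - s| ≤ C * ε ^ 2 := by
  obtain ⟨c, hc, hc_half, hcc₀⟩ : ∃ c > 0, c ≤ 1 / 2 ∧ 2 * c ≤ c₀ :=
    ⟨min 1 c₀ / 2, by positivity, by linarith [min_le_left 1 c₀], by linarith [min_le_right 1 c₀]⟩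
  obtain ⟨a, ha, hac⟩ : ∃ a > 0, 4 * (1 + C₀) ^ 2 * a = c :=
    ⟨c / (4 * (1 + C₀) ^ 2), by positivity, by field_simp⟩
  obtain ⟨k, hk, hk_sq⟩ : ∃ k > 0, 8 * ((1 + C₀) ^ 2) ^ 2 / (c ^ 2 * a ^ 2) < k ^ 2 :=
    ⟨8 * ((1 + C₀) ^ 2) ^ 2 / (c ^ 2 * a ^ 2) + 1, by positivity, by
      have : 0 ≤ 8 * ((1 + C₀) ^ 2) ^ 2 / (c ^ 2 * a ^ 2) := by positivity
      nlinarith⟩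
  obtain ⟨κ, hκ, ε₁, hε₁, h_decay⟩ :=
    SeparatedEigenfunction.exists_forall_mul_sub_le_ubar2_sub (B := (1 + C₀) ^ 2)
      (by positivity) hc ha
  refine ⟨16 * (1 + C₀) ^ 2 / κ, by positivity, min ε₁ (min a (1 / k)), by positivity,
    fun {Ω ε u μ s} hu hε hs hs0 p hp hp0 => ?_⟩
  obtain ⟨hε₁, hεa, hεk⟩ : ε < ε₁ ∧ ε < a ∧ ε < 1 / k := by simpa only [lt_min_iff] using hε
  have hv := hu.separatedEigenfunction hC₀ hc hc_half hcc₀ hac hεa.le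
  have hm := hu.sSup_pos hC₀
  obtain ⟨F, hF⟩ := hu.exists_isDefiningFunction
  have h_grad (q : ℝ²) (hq : q ∈ Ω) :
      |closureGrad Ω (fun z => (sSup (u '' Ω))⁻¹ * u z) q 1| ≤ 8 * (1 + C₀) ^ 2 * ε := by
    have h_le := hu.abs_closureGrad_apply_one_le hF hu.toIsFirstNeumannEigenfunction hu.lap_eq
      (by positivity) (fun z => hu.norm_closureGrad_le hC₀)
      (((le_div_iff₀ (by positivity)).2 hv.eigenvalue_le).trans_lt hk_sq) hk.le
      ((lt_div_iff₀' hk).1 hεk).le hq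
    rw [hu.closureGrad_const_mul hu.smooth _ (subset_closure hq), PiLp.smul_apply, smul_eq_mul,
      abs_mul, abs_of_pos (inv_pos.2 hm), inv_mul_le_iff₀ hm]
    linarith
  have h_width := hv.mul_abs_apply_zero_sub_le (h_decay hv hε₁) h_grad hs
    (by rw [ubar2_const_mul, hs0, mul_zero]) hp (by rw [hp0, mul_zero])
  rw [div_mul_eq_mul_div, le_div_iff₀' hκ]
  linarith

/-- In dimension 2, every point of the nodal set has first coordinate
within `Cε²` of the smallest zero `s₀` of the cross-sectional average `ū`; in particular
the projection of the nodal set to the x-axis has diameter at most `Cε²`. -/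
theorem nodal_set_width_eps_squared_2d
    (c₀ C₀ : ℝ) (hc₀ : 0 < c₀) (hC₀ : 0 < C₀) :
    ∃ C > (0:ℝ), ∃ ε₀ > (0:ℝ),
    ∀ (ε : ℝ) (Ω : Set (EuclideanSpace ℝ (Fin 2)))
      (u : EuclideanSpace ℝ (Fin 2) → ℝ) (lam L0 L1 s₀ : ℝ),
      0 < ε → ε < ε₀ →
      IsOpen Ω → Convex ℝ Ω → Bornology.IsBounded Ω →
      -- smooth boundary
      (∃ F : EuclideanSpace ℝ (Fin 2) → ℝ, ContDiff ℝ (⊤:ℕ∞) F ∧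
        Ω = {p | F p < 0} ∧ frontier Ω = {p | F p = 0} ∧
        ∀ p ∈ frontier Ω, gradient F p ≠ 0) →
      -- Ω ⊆ (0,1) × (-ε, ε)
      (∀ x y, mk2 x y ∈ Ω → x ∈ Ioo (0:ℝ) 1 ∧ y ∈ Ioo (-ε) ε) →
      -- nonempty cross-sections
      (∀ s ∈ Ioo (0:ℝ) 1, (cross2 Ω s).Nonempty) →
      -- u is a nonzero mean-zero smooth Neumann eigenfunction with eigenvalue lam
      ContDiffOn ℝ (⊤:ℕ∞) u (closure Ω) →
      (∃ p ∈ Ω, u p ≠ 0) →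
      (∫ p in Ω, u p) = 0 →
      (∀ p ∈ Ω, lap u p = -(lam * u p)) →
      (∀ p ∈ frontier Ω, ∀ v, (∀ z ∈ Ω, ⟪v, z - p⟫ ≤ 0) → ⟪gradient u p, v⟫ = 0) →
      0 < lam →
      -- lam is the smallest nonzero Neumann eigenvalue (variational
      -- characterization), attained at u
      lam = sInf {r | ∃ w : EuclideanSpace ℝ (Fin 2) → ℝ,
        ContDiffOn ℝ (⊤:ℕ∞) w (closure Ω) ∧ (∃ p ∈ Ω, w p ≠ 0) ∧ (∫ p in Ω, w p) = 0 ∧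
        r = (∫ p in Ω, ‖gradient w p‖ ^ 2) / (∫ p in Ω, (w p) ^ 2)} →
      lam = (∫ p in Ω, ‖gradient u p‖ ^ 2) / (∫ p in Ω, (u p) ^ 2) →
      -- facts from [CJK2009], assumed as hypotheses
      (∀ p ∈ Ω, ‖gradient u p‖ ≤
        C₀ * max (min (p 0) (1 - p 0)) ε * sSup ((fun q => |u q|) '' Ω)) →
      c₀ * sSup (u '' Ω) ≤ -sInf (u '' Ω) →
      -sInf (u '' Ω) ≤ C₀ * sSup (u '' Ω) →
      Tendsto (ubar2 Ω u) (𝓝[>] 0) (𝓝 L0) →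
      (1 - C₀ * ε) * sSup (u '' Ω) ≤ L0 →
      Tendsto (ubar2 Ω u) (𝓝[<] 1) (𝓝 L1) →
      L1 ≤ (1 - C₀ * ε) * sInf (u '' Ω) →
      -- s₀ is the smallest zero of ū in (0,1)
      s₀ ∈ Ioo (0:ℝ) 1 → ubar2 Ω u s₀ = 0 →
      (∀ s ∈ Ioo (0:ℝ) 1, ubar2 Ω u s = 0 → s₀ ≤ s) →
      (∀ p ∈ Ω, u p = 0 → |p 0 - s₀| ≤ C * ε ^ 2) ∧
      (∀ p ∈ Ω, ∀ q ∈ Ω, u p = 0 → u q = 0 → |p 0 - q 0| ≤ C * ε ^ 2) := by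
  obtain ⟨C, hC, ε₀, hε₀, h_width⟩ :=
    CJKEigenfunction.exists_forall_abs_apply_zero_sub_le hc₀ hC₀
  refine ⟨2 * C, by positivity, ε₀, hε₀, ?_⟩
  intro ε Ω u lam L0 L1 s₀ _ hε h_open h_convex h_bounded h_boundary h_box h_cross hu hne h_mean
    h_lap _ h_lam h_inf h_attained h_grad h_sup h_neg_inf hL0 hL0_ge hL1 hL1_le hs₀ hs₀_zero _
  obtain ⟨F, hF, h_neg, h_frontier, h_gradF⟩ := h_boundary
  have h_box' (p : ℝ²) (hp : p ∈ Ω) : p 0 ∈ Ioo 0 1 ∧ p 1 ∈ Ioo (-ε) ε :=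
    h_box _ _ ((mk2_apply_zero_apply_one p).symm ▸ hp)
  have hΩ : ThinConvexDomain Ω ε :=
    ⟨⟨h_open, h_convex, h_bounded, hne.imp fun _ => And.left⟩, fun p hp => (h_box' p hp).1,
      fun p hp => abs_lt.2 (h_box' p hp).2, h_cross⟩
  have h_eigen : CJKEigenfunction Ω ε u lam c₀ C₀ :=
    ⟨hΩ, .of_eq_sInf hΩ.toIsBoundedConvexDomain hu hne h_mean h_lam h_inf h_attained,
      ⟨F, hF.differentiable (by simp), h_neg, h_frontier, h_gradF⟩, hne, h_lap, h_grad, h_sup,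
      h_neg_inf, ⟨L0, hL0, hL0_ge⟩, ⟨L1, hL1, hL1_le⟩⟩
  have h_near (p : ℝ²) (hp : p ∈ Ω) (hp0 : u p = 0) : |p 0 - s₀| ≤ C * ε ^ 2 :=
    h_width h_eigen hε hs₀ hs₀_zero p hp hp0
  have h_nonneg : 0 ≤ C * ε ^ 2 := by positivity
  refine ⟨fun p hp hp0 => by linarith [h_near p hp hp0], fun p hp q hq hp0 hq0 => ?_⟩
  have h_triangle := abs_sub_le (p 0) s₀ (q 0)
  rw [abs_sub_comm s₀] at h_triangle
  linarith [h_near p hp hp0, h_near q hq hq0]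
end
end

section
/- Let Ω and ω be as in the context. Then for all 0 < a < b < 1: ω(b) ≤ ω(a) (b/a)^{n−1} and ω(a) ≤ ω(b) ((1−a)/(1−b))^{n−1}. -/
open MeasureTheory Set Filter Topology RealInnerProductSpace

noncomputable section

/-- The point `(x, y) ∈ ℝ × ℝ^m ≅ ℝ^{m+1}`. -/
def mkPt (m : ℕ) (x : ℝ) (y : EuclideanSpace ℝ (Fin m)) : EuclideanSpace ℝ (Fin (m+1)) :=
  (EuclideanSpace.equiv (Fin (m+1)) ℝ).symm (Fin.cons x ((EuclideanSpace.equiv (Fin m) ℝ) y))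

/-- The cross-section `Ω(s) = {y : (s, y) ∈ Ω}`. -/
def cross {m : ℕ} (Ω : Set (EuclideanSpace ℝ (Fin (m+1)))) (s : ℝ) :
    Set (EuclideanSpace ℝ (Fin m)) := {y | mkPt m s y ∈ Ω}

/-- `ω(s)`: the (n-1)-dimensional volume of the cross-section `Ω(s)`. -/
def ωvol {m : ℕ} (Ω : Set (EuclideanSpace ℝ (Fin (m+1)))) (s : ℝ) : ℝ :=
  (volume (cross Ω s)).toReal

/-- The cross-sectional average `ū(x)` of `u`. -/
def ubarFn {m : ℕ} (Ω : Set (EuclideanSpace ℝ (Fin (m+1))))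
    (u : EuclideanSpace ℝ (Fin (m+1)) → ℝ) (x : ℝ) : ℝ :=
  (∫ y in cross Ω x, u (mkPt m x y)) / ωvol Ω x

/-! If `(x, y) ∈ C` with `C` convex, the homothety of centre `y` and ratio `t ∈ [0, 1]` maps the
fibre of `C` over `c` into the fibre over `a = (1 - t) x + t c`. In dimension `d` it scales volumes
by `t ^ d`, so the fibre over `c` has at most `((c - x) / (a - x)) ^ d` times the volume of the
fibre over `a`. The theorem is the limit of this bound as `x` tends to an endpoint of the projection
of `C`. -/

theorem sub_div_sub_mem_Ioo_of_sbtw {𝕜 : Type*} [Field 𝕜] [LinearOrder 𝕜] [IsStrictOrderedRing 𝕜]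
    {e a c : 𝕜} (h : Sbtw 𝕜 e a c) : (a - e) / (c - e) ∈ Ioo (0 : 𝕜) 1 := by
  have hec : c - e ≠ 0 := sub_ne_zero.2 h.left_ne_right.symm
  obtain ⟨t, ht, rfl⟩ := h.mem_image_Ioo
  simpa [AffineMap.lineMap_apply, hec] using ht

theorem image_homothety_preimage_prodMk_subset {𝕜 F E : Type*} [CommRing 𝕜] [PartialOrder 𝕜]
    [IsOrderedRing 𝕜] [AddCommGroup F] [Module 𝕜 F] [AddCommGroup E] [Module 𝕜 E] {C : Set (F × E)}
    (hC : Convex 𝕜 C) {x : F} {y : E} (hxy : (x, y) ∈ C) (c : F) {t : 𝕜} (ht : t ∈ Icc (0 : 𝕜) 1) :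
    AffineMap.homothety y t '' (Prod.mk c ⁻¹' C) ⊆ Prod.mk (AffineMap.lineMap x c t) ⁻¹' C := by
  rintro _ ⟨z, hz, rfl⟩
  have hmem : AffineMap.lineMap (x, y) (c, z) t ∈ C := hC.lineMap_mem hxy hz ht
  exact hmem

section ConvexFibers

variable {F E : Type*} [AddCommGroup F] [Module ℝ F] [NormedAddCommGroup E] [NormedSpace ℝ E]
  [FiniteDimensional ℝ E] [MeasurableSpace E] [BorelSpace E] (μ : Measure E) [μ.IsAddHaarMeasure]

theorem ofReal_pow_mul_measure_preimage_prodMk_le {C : Set (F × E)} (hC : Convex ℝ C) {x : F}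
    (hx : (Prod.mk x ⁻¹' C).Nonempty) (c : F) {t : ℝ} (ht : t ∈ Icc (0 : ℝ) 1) :
    ENNReal.ofReal t ^ Module.finrank ℝ E * μ (Prod.mk c ⁻¹' C) ≤
      μ (Prod.mk (AffineMap.lineMap x c t) ⁻¹' C) := by
  obtain ⟨y, hxy⟩ := hx
  calc ENNReal.ofReal t ^ Module.finrank ℝ E * μ (Prod.mk c ⁻¹' C)
      = μ (AffineMap.homothety y t '' (Prod.mk c ⁻¹' C)) := by
        rw [Measure.addHaar_image_homothety, abs_of_nonneg (pow_nonneg ht.1 _),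
          ENNReal.ofReal_pow ht.1]
    _ ≤ μ (Prod.mk (AffineMap.lineMap x c t) ⁻¹' C) :=
        measure_mono (image_homothety_preimage_prodMk_subset hC hxy c ht)

theorem ofReal_div_pow_mul_measure_preimage_prodMk_le {C : Set (ℝ × E)} (hC : Convex ℝ C)
    {e a c : ℝ} (he : e ∈ closure {x | (Prod.mk x ⁻¹' C).Nonempty}) (h : Sbtw ℝ e a c) :
    ENNReal.ofReal ((a - e) / (c - e)) ^ Module.finrank ℝ E * μ (Prod.mk c ⁻¹' C) ≤
      μ (Prod.mk a ⁻¹' C) := by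
  have hratio := sub_div_sub_mem_Ioo_of_sbtw h
  have hcont : ContinuousAt (fun x : ℝ => (a - x) / (c - x)) e := by
    have hec : c - e ≠ 0 := sub_ne_zero.2 h.left_ne_right.symm
    fun_prop (disch := assumption)
  have hlim : Tendsto
      (fun x => ENNReal.ofReal ((a - x) / (c - x)) ^ Module.finrank ℝ E * μ (Prod.mk c ⁻¹' C))
      (𝓝 e)
      (𝓝 (ENNReal.ofReal ((a - e) / (c - e)) ^ Module.finrank ℝ E * μ (Prod.mk c ⁻¹' C))) :=
    ENNReal.Tendsto.mul_const (ENNReal.Tendsto.pow (ENNReal.tendsto_ofReal hcont))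
      (.inl (pow_ne_zero _ (ENNReal.ofReal_pos.2 hratio.1).ne'))
  have hnear : ∀ᶠ x in 𝓝 e, (a - x) / (c - x) ∈ Ioo (0 : ℝ) 1 ∧ x ≠ c :=
    (hcont.eventually_mem (isOpen_Ioo.mem_nhds hratio)).and (eventually_ne_nhds h.left_ne_right)
  refine le_of_tendsto_of_frequently hlim
    (((mem_closure_iff_frequently.1 he).and_eventually hnear).mono ?_)
  rintro x ⟨hx, ht, hxc⟩
  have ha : AffineMap.lineMap x c ((a - x) / (c - x)) = a := by
    simp [AffineMap.lineMap_apply, sub_ne_zero.2 hxc.symm]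
  simpa only [ha] using
    ofReal_pow_mul_measure_preimage_prodMk_le μ hC hx c (Ioo_subset_Icc_self ht)

theorem cross_section_volume_comparison_general {C : Set (ℝ × E)} (hC : Convex ℝ C)
    {e a c : ℝ} (he : e ∈ closure {x | (Prod.mk x ⁻¹' C).Nonempty}) (h : Sbtw ℝ e a c) :
    μ (Prod.mk c ⁻¹' C) ≤
      μ (Prod.mk a ⁻¹' C) * ENNReal.ofReal ((c - e) / (a - e)) ^ Module.finrank ℝ E := by
  have hpos : 0 < (a - e) / (c - e) := (sub_div_sub_mem_Ioo_of_sbtw h).1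
  rw [← inv_div, ENNReal.ofReal_inv_of_pos hpos, ← ENNReal.inv_pow, ← div_eq_mul_inv,
    ENNReal.le_div_iff_mul_le (by simp [hpos]) (by simp), mul_comm]
  exact ofReal_div_pow_mul_measure_preimage_prodMk_le μ hC he h

end ConvexFibers

theorem isLinearMap_mkPt (m : ℕ) :
    IsLinearMap ℝ fun z : ℝ × EuclideanSpace ℝ (Fin m) => mkPt m z.1 z.2 where
  map_add z w := by ext i; cases i using Fin.cases <;> simp [mkPt]
  map_smul r z := by ext i; cases i using Fin.cases <;> simp [mkPt]

theorem isometry_mkPt (m : ℕ) (s : ℝ) : Isometry (mkPt m s) :=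
  Isometry.of_dist_eq fun y z => by simp [EuclideanSpace.dist_eq, Fin.sum_univ_succ, mkPt]

theorem isBounded_cross {m : ℕ} {Ω : Set (EuclideanSpace ℝ (Fin (m + 1)))}
    (hΩ : Bornology.IsBounded Ω) (s : ℝ) : Bornology.IsBounded (cross Ω s) :=
  (isometry_mkPt m s).antilipschitz.isBounded_preimage hΩ

theorem ωvol_le_mul_div_pow {m : ℕ} {Ω : Set (EuclideanSpace ℝ (Fin (m + 1)))}
    (hΩ : Convex ℝ Ω) {e a c : ℝ} (hfin : volume (cross Ω a) ≠ ⊤)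
    (he : e ∈ closure {s | (cross Ω s).Nonempty}) (h : Sbtw ℝ e a c) :
    ωvol Ω c ≤ ωvol Ω a * ((c - e) / (a - e)) ^ m := by
  have hpos : 0 < (c - e) / (a - e) := by
    simpa only [inv_div] using inv_pos.2 (sub_div_sub_mem_Ioo_of_sbtw h).1
  have hle : volume (cross Ω c) ≤ volume (cross Ω a) *
      ENNReal.ofReal ((c - e) / (a - e)) ^ Module.finrank ℝ (EuclideanSpace ℝ (Fin m)) :=
    cross_section_volume_comparison_general volume
      (hΩ.is_linear_preimage (isLinearMap_mkPt m)) he h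
  simpa [ωvol, hpos.le] using ENNReal.toReal_mono (by finiteness) hle

/-- Comparison of cross-sectional volumes of a convex domain:
`ω(b) ≤ ω(a)(b/a)^{n-1}` and `ω(a) ≤ ω(b)((1-a)/(1-b))^{n-1}`. -/
theorem cross_section_volume_comparison
    (m : ℕ) (hm : 1 ≤ m) (Ω : Set (EuclideanSpace ℝ (Fin (m+1)))) :
      IsOpen Ω → Convex ℝ Ω → Bornology.IsBounded Ω →
      -- Ω ⊆ (0,1) × ℝ^{n-1}
      (∀ x y, mkPt m x y ∈ Ω → x ∈ Ioo (0:ℝ) 1) →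
      -- nonempty cross-sections
      (∀ s ∈ Ioo (0:ℝ) 1, (cross Ω s).Nonempty) →
      ∀ a b : ℝ, 0 < a → a < b → b < 1 →
        ωvol Ω b ≤ ωvol Ω a * (b / a) ^ m ∧
        ωvol Ω a ≤ ωvol Ω b * ((1 - a) / (1 - b)) ^ m := by
  intro _ hΩ hbdd _ hne a b ha hab hb
  have hfin (s : ℝ) : volume (cross Ω s) ≠ ⊤ := (isBounded_cross hbdd s).measure_lt_top.ne
  have hcl : Icc 0 1 ⊆ closure {s | (cross Ω s).Nonempty} := by
    rw [← closure_Ioo zero_ne_one]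
    exact closure_mono hne
  constructor
  · simpa only [sub_zero] using
      ωvol_le_mul_div_pow hΩ (hfin a) (hcl (left_mem_Icc.2 zero_le_one)) (.of_lt_of_lt ha hab)
  · rw [← neg_div_neg_eq, neg_sub, neg_sub]
    exact ωvol_le_mul_div_pow hΩ (hfin b) (hcl (right_mem_Icc.2 zero_le_one))
      (Sbtw.of_lt_of_lt hab hb).symm
end
end
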